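/- Let B be a brace containing a conformal bisubdivision of K_{3,3}, and let C be a cycle of length four in B. Then there exists a perfect matching M of B such that C is M-conformal and there is an M-conformal bisubdivision L of K_{3,3} in B with V(C) ⊆ V(L). -/

import Mathlib

namespace Paper

open SimpleGraph

variable {V : Type*} {W : Type*}

/-- `M` is a perfect matching of the vertex set `S` in the graph `G`:
a set of pairwise disjoint edges of `G`, all within `S`, covering every vertex of `S`. -/
def IsPMOn (G : SimpleGraph V) (S : Set V) (M : Set (Sym2 V)) : Prop :=
  (∀ e ∈ M, e ∈ G.edgeSet) ∧ (∀ e ∈ M, ∀ v ∈ e, v ∈ S) ∧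
    ∀ v ∈ S, ∃! e, e ∈ M ∧ v ∈ e

/-- `M` is a perfect matching of `G`. -/
def IsPM (G : SimpleGraph V) (M : Set (Sym2 V)) : Prop :=
  IsPMOn G Set.univ M

/-- The edges in `F` are pairwise vertex-disjoint. -/
def PairwiseDisjointEdges (F : Set (Sym2 V)) : Prop :=
  ∀ e ∈ F, ∀ f ∈ F, e ≠ f → ∀ x : V, x ∈ e → x ∉ f

/-- All edges of `G` have both endpoints in `S`. -/
def EdgesWithin (G : SimpleGraph V) (S : Set V) : Prop :=
  ∀ ⦃x y : V⦄, G.Adj x y → x ∈ S ∧ y ∈ S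

def ConnectedOn (G : SimpleGraph V) (S : Set V) : Prop :=
  S.Nonempty ∧ ∀ x ∈ S, ∀ y ∈ S, G.Reachable x y

/-- The graph `G` with vertex set `S` is a brace: it is connected and every matching of
size at most two extends to a perfect matching. -/
def IsBraceOn (G : SimpleGraph V) (S : Set V) : Prop :=
  EdgesWithin G S ∧ ConnectedOn G S ∧
    ∀ F : Set (Sym2 V), F ⊆ G.edgeSet → PairwiseDisjointEdges F → F.ncard ≤ 2 →
      ∃ M, IsPMOn G S M ∧ F ⊆ M

def IsBrace (G : SimpleGraph V) : Prop :=
  IsBraceOn G Set.univ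

def IsBipartitionOf (G : SimpleGraph V) (V1 V2 : Set V) : Prop :=
  Disjoint V1 V2 ∧ V1 ∪ V2 = Set.univ ∧ ∀ ⦃x y : V⦄, G.Adj x y → (x ∈ V1 ↔ y ∈ V2)

def IsBipartite (G : SimpleGraph V) : Prop :=
  ∃ V1 V2 : Set V, IsBipartitionOf G V1 V2

def MatchingCoveredOn (G : SimpleGraph V) (S : Set V) : Prop :=
  EdgesWithin G S ∧ ConnectedOn G S ∧ ∀ e ∈ G.edgeSet, ∃ M, IsPMOn G S M ∧ e ∈ M

def MatchingCovered (G : SimpleGraph V) : Prop :=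
  MatchingCoveredOn G Set.univ

/-- Every vertex of `A` is covered exactly once by an edge of `M ∩ Es`;
i.e. `M ∩ Es` is a perfect matching of the subgraph with vertex set `A` and edge set `Es`. -/
def MatchesExactly (M Es : Set (Sym2 V)) (A : Set V) : Prop :=
  ∀ v ∈ A, ∃! e, e ∈ M ∧ e ∈ Es ∧ v ∈ e

/-- `M` restricted to the edges of `P` with both endpoints in `A` is a
perfect matching of `A`; i.e. `M ∩ E(P ∩ A)` is a perfect matching of `P ∩ A`. -/
def WalkMConfOn (G : SimpleGraph V) (M : Set (Sym2 V)) {u v : V} (P : G.Walk u v)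
    (A : Set V) : Prop :=
  ∀ x ∈ A, ∃! e : Sym2 V, e ∈ M ∧ e ∈ P.edges ∧ (∀ y ∈ e, y ∈ A) ∧ x ∈ e

/-- The path `P` is `M`-conformal: `M ∩ E(P)` is a perfect matching of `P`. -/
def MConformalWalk (G : SimpleGraph V) (M : Set (Sym2 V)) {u v : V} (P : G.Walk u v) : Prop :=
  WalkMConfOn G M P {x | x ∈ P.support}

/-- The path `P` is internally `M`-conformal: removing both endpoints leaves
an `M`-conformal path. -/
def InternallyMConformal (G : SimpleGraph V) (M : Set (Sym2 V)) {u v : V}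
    (P : G.Walk u v) : Prop :=
  WalkMConfOn G M P {x | x ∈ P.support ∧ x ≠ u ∧ x ≠ v}

/-- The path `P` is `M`-alternating: there is a set `S` of endpoints of `P`
such that `P − S` is `M`-conformal. -/
def MAlternating (G : SimpleGraph V) (M : Set (Sym2 V)) {u v : V} (P : G.Walk u v) : Prop :=
  ∃ S ⊆ ({u, v} : Set V), WalkMConfOn G M P {x | x ∈ P.support ∧ x ∉ S}

/-- The cycle `C` is `M`-conformal: `M ∩ E(C)` is a perfect matching of `C`. -/
def MConformalCycle (G : SimpleGraph V) (M : Set (Sym2 V)) {c : V} (C : G.Walk c c) : Prop :=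
  ∀ x ∈ C.support, ∃! e, e ∈ M ∧ e ∈ C.edges ∧ x ∈ e

/-- The cycle `C` is conformal in the graph `G` with vertex set `S`:
`G − V(C)` has a perfect matching. -/
def ConformalCycleOn (G : SimpleGraph V) (S : Set V) {c : V} (C : G.Walk c c) : Prop :=
  ∃ M, IsPMOn G (S \ {x | x ∈ C.support}) M

def ConformalCycle (G : SimpleGraph V) {c : V} (C : G.Walk c c) : Prop :=
  ConformalCycleOn G Set.univ C

/-- The four vertices appear on the cycle `C` in the listed cyclic order. -/
def InCyclicOrder (G : SimpleGraph V) {c : V} (C : G.Walk c c) (s1 s2 t1 t2 : V) : Prop :=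
  ∃ n : ℕ, List.Sublist [s1, s2, t1, t2] (C.support.tail.rotate n) ∨
    List.Sublist [s1, s2, t1, t2] (C.support.tail.reverse.rotate n)

/-- The paths `P1` (from `s1` to `t1`) and `P2` (from `s2` to `t2`) form a matching
cross over the cycle `C` with respect to the perfect matching `M` of `(G, S)`. -/
def IsMatchingCrossOn (G : SimpleGraph V) (S : Set V) {c s1 t1 s2 t2 : V}
    (C : G.Walk c c) (M : Set (Sym2 V)) (P1 : G.Walk s1 t1) (P2 : G.Walk s2 t2) : Prop :=
  IsPMOn G S M ∧ [s1, s2, t1, t2].Nodup ∧ InCyclicOrder G C s1 s2 t1 t2 ∧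
    P1.IsPath ∧ P2.IsPath ∧ MAlternating G M P1 ∧ MAlternating G M P2 ∧
    (∀ x : V, x ∈ P1.support → x ∉ P2.support) ∧
    (∀ x ∈ P1.support, x ≠ s1 → x ≠ t1 → x ∉ C.support) ∧
    (∀ x ∈ P2.support, x ≠ s2 → x ≠ t2 → x ∉ C.support)

def HasMatchingCrossOn (G : SimpleGraph V) (S : Set V) {c : V} (C : G.Walk c c) : Prop :=
  ∃ (M : Set (Sym2 V)) (s1 t1 s2 t2 : V) (P1 : G.Walk s1 t1) (P2 : G.Walk s2 t2),
    IsMatchingCrossOn G S C M P1 P2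

def HasMatchingCross (G : SimpleGraph V) {c : V} (C : G.Walk c c) : Prop :=
  HasMatchingCrossOn G Set.univ C

/-- `C + P1 + P2` is a conformal subgraph of `(G, S)`. -/
def CrossConformalOn (G : SimpleGraph V) (S : Set V) {c s1 t1 s2 t2 : V}
    (C : G.Walk c c) (P1 : G.Walk s1 t1) (P2 : G.Walk s2 t2) : Prop :=
  ∃ N, IsPMOn G S N ∧
    MatchesExactly N
      ({f | f ∈ C.edges} ∪ {f | f ∈ P1.edges} ∪ {f | f ∈ P2.edges})
      ({x | x ∈ C.support} ∪ {x | x ∈ P1.support} ∪ {x | x ∈ P2.support})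

/-- There is a conformal cross over the cycle `C` in `G`. -/
def HasConformalCross (G : SimpleGraph V) {c : V} (C : G.Walk c c) : Prop :=
  ∃ (M : Set (Sym2 V)) (s1 t1 s2 t2 : V) (P1 : G.Walk s1 t1) (P2 : G.Walk s2 t2),
    IsMatchingCrossOn G Set.univ C M P1 P2 ∧ CrossConformalOn G Set.univ C P1 P2

/-- A bisubdivision of the graph `H` inside the graph `G`: every edge of `H` is replaced
by a path of odd length (i.e., subdivided an even number of times), and those paths
pairwise meet only in branch vertices. -/
structure Bisubdivision (H : SimpleGraph W) (G : SimpleGraph V) where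
  bv : W → V
  bv_inj : Function.Injective bv
  link : ∀ ⦃x y : W⦄, H.Adj x y → G.Walk (bv x) (bv y)
  link_isPath : ∀ ⦃x y : W⦄ (h : H.Adj x y), (link h).IsPath
  link_odd : ∀ ⦃x y : W⦄ (h : H.Adj x y), Odd (link h).length
  link_symm : ∀ ⦃x y : W⦄ (h : H.Adj x y), link h.symm = (link h).reverse
  link_branch : ∀ ⦃x y : W⦄ (h : H.Adj x y) (z : W), bv z ∈ (link h).support → z = x ∨ z = y
  link_meet : ∀ ⦃x y x' y' : W⦄ (h : H.Adj x y) (h' : H.Adj x' y'), s(x, y) ≠ s(x', y') →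
    ∀ v : V, v ∈ (link h).support → v ∈ (link h').support →
      (v = bv x ∨ v = bv y) ∧ (v = bv x' ∨ v = bv y')

def Bisubdivision.verts {H : SimpleGraph W} {G : SimpleGraph V}
    (L : Bisubdivision H G) : Set V :=
  {v | ∃ (x y : W) (h : H.Adj x y), v ∈ (L.link h).support}

def Bisubdivision.edgeSet {H : SimpleGraph W} {G : SimpleGraph V}
    (L : Bisubdivision H G) : Set (Sym2 V) :=
  {e | ∃ (x y : W) (h : H.Adj x y), e ∈ (L.link h).edges}

/-- The bisubdivision `L` is an `M`-conformal subgraph of `G`. -/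
def Bisubdivision.MConformal {H : SimpleGraph W} {G : SimpleGraph V}
    (L : Bisubdivision H G) (M : Set (Sym2 V)) : Prop :=
  MatchesExactly M L.edgeSet L.verts

/-- The bisubdivision `L` is a conformal subgraph of `(G, S)`. -/
def Bisubdivision.ConformalOn {H : SimpleGraph W} {G : SimpleGraph V}
    (L : Bisubdivision H G) (S : Set V) : Prop :=
  ∃ M, IsPMOn G S M ∧ L.MConformal M

abbrev K33 : SimpleGraph (Fin 3 ⊕ Fin 3) := completeBipartiteGraph (Fin 3) (Fin 3)

/-- `G` contains a conformal bisubdivision of `K_{3,3}`. -/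
def ContainsK33 (G : SimpleGraph V) : Prop :=
  ∃ L : Bisubdivision K33 G, L.ConformalOn Set.univ

def K33Free (G : SimpleGraph V) : Prop :=
  ¬ ContainsK33 G

def C4verts (a1 b1 a2 b2 : V) : Set V := {a1, b1, a2, b2}

def C4edges (a1 b1 a2 b2 : V) : Set (Sym2 V) := {s(a1, b1), s(b1, a2), s(a2, b2), s(b2, a1)}

/-- `a1 b1 a2 b2` is a cycle of length four in `G`. -/
def IsC4In (G : SimpleGraph V) (a1 b1 a2 b2 : V) : Prop :=
  [a1, b1, a2, b2].Nodup ∧ G.Adj a1 b1 ∧ G.Adj b1 a2 ∧ G.Adj a2 b2 ∧ G.Adj b2 a1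

/-- `B` is a 4-cycle sum of the graphs `Bi i` (with vertex sets `Si i`)
at the common conformal 4-cycle `a1 b1 a2 b2`. -/
def IsFourCycleSum {ℓ : ℕ} (B : SimpleGraph V) (Bi : Fin ℓ → SimpleGraph V)
    (Si : Fin ℓ → Set V) (a1 b1 a2 b2 : V) : Prop :=
  (∀ i, EdgesWithin (Bi i) (Si i)) ∧
  (∀ i, IsC4In (Bi i) a1 b1 a2 b2) ∧
  (∀ i, ∃ M, IsPMOn (Bi i) (Si i \ C4verts a1 b1 a2 b2) M) ∧
  (∀ i j, i ≠ j → Si i ∩ Si j = C4verts a1 b1 a2 b2) ∧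
  (⋃ i, Si i) = Set.univ ∧
  ∃ D ⊆ C4edges a1 b1 a2 b2, B.edgeSet = (⋃ i, (Bi i).edgeSet) \ D

/-- `B` is a maximal 4-cycle sum of the braces `Bi i` at the 4-cycle `a1 b1 a2 b2`. -/
def IsMaxFourCycleSumOfBraces {ℓ : ℕ} (B : SimpleGraph V) (Bi : Fin ℓ → SimpleGraph V)
    (Si : Fin ℓ → Set V) (a1 b1 a2 b2 : V) : Prop :=
  IsFourCycleSum B Bi Si a1 b1 a2 b2 ∧ (∀ i, IsBraceOn (Bi i) (Si i)) ∧
    ¬ ∃ ℓ' : ℕ, ℓ < ℓ' ∧ ∃ (Hi : Fin ℓ' → SimpleGraph V) (Ti : Fin ℓ' → Set V),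
      IsFourCycleSum B Hi Ti a1 b1 a2 b2 ∧ ∀ i, IsBraceOn (Hi i) (Ti i)

/-- `∂(X)`: the set of edges of `G` with exactly one endpoint in `X`. -/
def edgeCut (G : SimpleGraph V) (X : Set V) : Set (Sym2 V) :=
  {e | e ∈ G.edgeSet ∧ ∃ x y : V, e = s(x, y) ∧ x ∈ X ∧ y ∉ X}

/-- `∂(X)` is a tight cut of the graph `G` with vertex set `S`. -/
def IsTightCutOn (G : SimpleGraph V) (S X : Set V) : Prop :=
  ∀ M, IsPMOn G S M → (edgeCut G X ∩ M).ncard = 1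

def IsTightCut (G : SimpleGraph V) (X : Set V) : Prop :=
  IsTightCutOn G Set.univ X

/-- The minority of `X` with respect to the colour classes `V1`, `V2`. -/
noncomputable def minority (V1 V2 X : Set V) : Set V :=
  if (X ∩ V1).ncard < (X ∩ V2).ncard then X ∩ V1 else X ∩ V2

/-- `P1` and `P2` are `M`-alternating paths of the same type. -/
def SameType (G : SimpleGraph V) (M : Set (Sym2 V)) {s1 t1 s2 t2 : V}
    (P1 : G.Walk s1 t1) (P2 : G.Walk s2 t2) : Prop :=
  (InternallyMConformal G M P1 ∧ InternallyMConformal G M P2) ∨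
  (MConformalWalk G M P1 ∧ MConformalWalk G M P2) ∨
  ((¬ InternallyMConformal G M P1 ∧ ¬ MConformalWalk G M P1) ∧
    (¬ InternallyMConformal G M P2 ∧ ¬ MConformalWalk G M P2))

/-- There is a strong matching cross over `C` in `(G, S)` w.r.t. colour classes `V1, V2`. -/
def HasStrongMatchingCrossOn (G : SimpleGraph V) (S V1 V2 : Set V) {c : V}
    (C : G.Walk c c) : Prop :=
  ∃ (M : Set (Sym2 V)) (s1 t1 s2 t2 : V) (P1 : G.Walk s1 t1) (P2 : G.Walk s2 t2),
    IsMatchingCrossOn G S C M P1 P2 ∧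
    (V1 ∩ {s1, s2, t1, t2}).ncard = (V2 ∩ {s1, s2, t1, t2}).ncard ∧
    SameType G M P1 P2

/-- `s1 s2 t1 t2` appear in this cyclic order on the 4-cycle `a1 b1 a2 b2`. -/
def CyclicOrderC4 (a1 b1 a2 b2 s1 s2 t1 t2 : V) : Prop :=
  ∃ n : ℕ, [s1, s2, t1, t2] = [a1, b1, a2, b2].rotate n ∨
    [s1, s2, t1, t2] = [b2, a2, b1, a1].rotate n

/-- `P1, P2` form a matching cross over the 4-cycle `a1 b1 a2 b2` w.r.t. `M`. -/
def IsCrossOverC4 (G : SimpleGraph V) (M : Set (Sym2 V)) (a1 b1 a2 b2 : V)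
    {s1 t1 s2 t2 : V} (P1 : G.Walk s1 t1) (P2 : G.Walk s2 t2) : Prop :=
  [s1, s2, t1, t2].Nodup ∧ CyclicOrderC4 a1 b1 a2 b2 s1 s2 t1 t2 ∧
    P1.IsPath ∧ P2.IsPath ∧ MAlternating G M P1 ∧ MAlternating G M P2 ∧
    (∀ z : V, z ∈ P1.support → z ∉ P2.support) ∧
    (∀ z ∈ P1.support, z ≠ s1 → z ≠ t1 → z ∉ C4verts a1 b1 a2 b2) ∧
    (∀ z ∈ P2.support, z ≠ s2 → z ≠ t2 → z ∉ C4verts a1 b1 a2 b2)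

/-- The Heawood graph on `ZMod 14`. -/
def heawood : SimpleGraph (ZMod 14) :=
  SimpleGraph.fromRel fun i j => j = i + 1 ∨ (Even i.val ∧ j = i + 5)

/-- The Rotunda: three cubes glued along a common 4-cycle whose edges are then deleted. -/
def rotunda : SimpleGraph (Fin 4 ⊕ Fin 3 × Fin 4) :=
  SimpleGraph.fromRel fun x y =>
    match x, y with
    | Sum.inl j, Sum.inr p => j = p.2
    | Sum.inr p, Sum.inr q => p.1 = q.1 ∧ q.2 = p.2 + 1
    | _, _ => False

/-- `F` is an `S`-cover in `G`. -/
def IsSCover (G : SimpleGraph V) (S : Set V) (F : Set (Sym2 V)) : Prop :=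
  F ⊆ G.edgeSet ∧ (∀ e ∈ F, ∃ v ∈ S, v ∈ e) ∧ ∀ v ∈ S, ∃ e ∈ F, v ∈ e

/-- `F` is contained in some perfect matching of `G`. -/
def Extendible (G : SimpleGraph V) (F : Set (Sym2 V)) : Prop :=
  ∃ M, IsPM G M ∧ F ⊆ M

/-- `(G, S)` is an `F`-instance of 2-MLP for `(a1, a2)` and `(b1, b2)`. -/
def TwoMLPInstanceOn (G : SimpleGraph V) (S : Set V) (a1 a2 b1 b2 : V)
    (F : Set (Sym2 V)) : Prop :=
  ∃ M, IsPMOn G S M ∧ F ⊆ M ∧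
    ∃ (P1 : G.Walk a1 b1) (P2 : G.Walk a2 b2), P1.IsPath ∧ P2.IsPath ∧
      InternallyMConformal G M P1 ∧ InternallyMConformal G M P2 ∧
      ∀ x : V, x ∈ P1.support → x ∉ P2.support

/-- `B − u − v + pq`: delete the vertices `u, v` and add the edge `pq`. -/
def deleteAdd (B : SimpleGraph V) (u v p q : V) : SimpleGraph V :=
  SimpleGraph.fromRel fun x y =>
    (B.Adj x y ∨ (x = p ∧ y = q)) ∧ x ≠ u ∧ x ≠ v ∧ y ≠ u ∧ y ≠ v

/-- `B` plus two new vertices `x = Sum.inr 0` and `y = Sum.inr 1` together with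
the edges `xy, x b1, x b2, y a1, y a2`. -/
def plusXY (B : SimpleGraph V) (a1 a2 b1 b2 : V) : SimpleGraph (V ⊕ Fin 2) :=
  SimpleGraph.fromRel fun p q =>
    (∃ a b : V, p = Sum.inl a ∧ q = Sum.inl b ∧ B.Adj a b) ∨
    (p = Sum.inr 0 ∧ q = Sum.inr 1) ∨
    (p = Sum.inr 0 ∧ (q = Sum.inl b1 ∨ q = Sum.inl b2)) ∨
    (p = Sum.inr 1 ∧ (q = Sum.inl a1 ∨ q = Sum.inl a2))

/-- The endpoints `q1, q2` (on the 4-cycle) belong to the same colour class. -/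
def PrecrossDaring (V1 V2 : Set V) (q1 q2 : V) : Prop :=
  (q1 ∈ V1 ∧ q2 ∈ V1) ∨ (q1 ∈ V2 ∧ q2 ∈ V2)

/-- `(P1, P2, Q, M)` is a diffuse `C'`-`M`-precross through the 4-cycle `a1 b1 a2 b2`
in the graph `G` with vertex set `S` and colour classes `V1, V2`. -/
def DiffusePrecross (G : SimpleGraph V) (S V1 V2 : Set V) (a1 b1 a2 b2 : V)
    {c p1 q1 p2 q2 x1 x2 : V} (C' : G.Walk c c) (M : Set (Sym2 V))
    (P1 : G.Walk p1 q1) (P2 : G.Walk p2 q2) (Q : G.Walk x1 x2) : Prop :=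
  IsPMOn G S M ∧ P1.IsPath ∧ P2.IsPath ∧ Q.IsPath ∧
  MAlternating G M P1 ∧ MAlternating G M P2 ∧ MAlternating G M Q ∧
  (∀ z : V, z ∈ P1.support → z ∉ P2.support) ∧
  (∀ z : V, z ∈ P1.support → z ∉ Q.support) ∧
  (∀ z : V, z ∈ P2.support → z ∉ Q.support) ∧
  (∀ z ∈ P1.support, z ≠ p1 → z ≠ q1 → z ∉ C'.support) ∧
  (∀ z ∈ P2.support, z ≠ p2 → z ≠ q2 → z ∉ C'.support) ∧
  (∀ z ∈ Q.support, z ≠ x1 → z ≠ x2 → z ∉ C'.support) ∧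
  x1 ∈ C'.support ∧ x2 ∈ C'.support ∧
  p1 ∈ C'.support ∧ q1 ∈ C4verts a1 b1 a2 b2 ∧
  p2 ∈ C'.support ∧ q2 ∈ C4verts a1 b1 a2 b2 ∧
  (∀ Wk : G.Walk p1 p2, (∀ e ∈ Wk.edges, e ∈ C'.edges) → ∃ z ∈ Wk.support, z ∈ Q.support) ∧
  (∀ U ∈ ({V1, V2} : Set (Set V)), (q1 ∈ U ∨ q2 ∈ U) →
    ∃ q : V, (q = q1 ∨ q = q2) ∧ q ∈ U ∧ ∃ e ∈ M, e ∈ C4edges a1 b1 a2 b2 ∧ q ∈ e)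

/-- A daring diffuse precross is successful. -/
def PrecrossSuccessful (G : SimpleGraph V) (V1 V2 : Set V) (M : Set (Sym2 V))
    {p1 q1 p2 q2 : V} (P1 : G.Walk p1 q1) (P2 : G.Walk p2 q2) : Prop :=
  PrecrossDaring V1 V2 q1 q2 ∧
  ((InternallyMConformal G M P1 ∧ MConformalWalk G M P2) ∨
   (InternallyMConformal G M P2 ∧ MConformalWalk G M P1) ∨
   (Even P1.length ∧ Even P2.length ∧
     ((∃ e ∈ M, e ∈ P1.edges ∧ p1 ∈ e) ↔ ¬ ∃ e ∈ M, e ∈ P2.edges ∧ p2 ∈ e)))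

/-!
Fix a perfect matching `m`, viewed as a fixed-point-free involution. Among all pairs of a
bisubdivision `D` of `K33` and a perfect matching `n` of the graph without `D`, compare the edges
used by `D` and `n` with `m`, and take a pair using as few edges outside `m` as possible. An ear is
a path leaving and re-entering `D` that alternates between `m` and `n`. If it joins two of the nine
paths of `D` lying in a common row or column, absorbing it decreases the count; so in a minimal
pair every ear joins a path `(i, j)` to a path `(k, l)` with `i ≠ k` and `j ≠ l`, and it may then
take the place of the path `(i, l)` of `D`, giving another minimal pair. Rerouting along ears in
this way shows that any two edges of `m` lie in a common perfect matching for which some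
bisubdivision of `K33` is conformal.

In a brace, two opposite edges of the four-cycle lie in a perfect matching `m`. If only one of them
misses the bisubdivision obtained from `m`, the rest of the four-cycle is an ear with three edges,
and absorbing it covers the cycle. If both miss it, consider the vertices covered by some
bisubdivision whose complement has a perfect matching through one of the two edges: a set of
vertices closed under two different perfect matchings up to one vertex would have both parities, so
these vertices include an end of the other edge, and the previous case applies.
-/

/-! ### Paths as lists of vertices -/

section EvenPairs

variable {l l₁ l₂ : List V} {a b : V}

theorem evenLength_induction {motive : ∀ l : List V, Even l.length → Prop}
    (nil : motive [] (by simp))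
    (cons_cons : ∀ x y l (h : Even l.length), motive l h →
      motive (x :: y :: l) (by simpa [Nat.even_add_one] using h)) :
    ∀ l h, motive l h
  | [], _ => nil
  | [_], h => by simp at h
  | x :: y :: l, h => by
    have hl : Even l.length := by simpa [Nat.even_add_one] using h
    exact cons_cons x y l hl (evenLength_induction nil cons_cons l hl)

/-- `EvenPair l a b`: the vertices `a`, `b` are consecutive in `l`, with `a` at an even position
(counting from `0`). If `l` is a path of odd length, these pairs are its perfect matching. -/
def EvenPair : List V → V → V → Prop
  | x :: y :: l, a, b => (a = x ∧ b = y) ∨ EvenPair l a b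
  | _, _, _ => False

@[simp] theorem evenPair_nil : EvenPair [] a b ↔ False := Iff.rfl

@[simp] theorem evenPair_singleton (x : V) : EvenPair [x] a b ↔ False := Iff.rfl

@[simp] theorem evenPair_cons_cons (x y : V) (l : List V) :
    EvenPair (x :: y :: l) a b ↔ (a = x ∧ b = y) ∨ EvenPair l a b := Iff.rfl

theorem evenPair_append (h : Even l₁.length) (l₂ : List V) :
    EvenPair (l₁ ++ l₂) a b ↔ EvenPair l₁ a b ∨ EvenPair l₂ a b := by
  induction l₁, h using evenLength_induction with
  | nil => simp
  | cons_cons x y l _ ih => simp [ih, or_assoc]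

theorem evenPair_append_cons_cons (h : Even l₁.length) : EvenPair (l₁ ++ a :: b :: l₂) a b := by
  simp [evenPair_append h]

theorem EvenPair.exists_eq_append : ∀ {l : List V} {a b : V}, EvenPair l a b →
    ∃ l₁ l₂, Even l₁.length ∧ l = l₁ ++ a :: b :: l₂
  | [], _, _, h => h.elim
  | [_], _, _, h => h.elim
  | x :: y :: l, a, b, h => by
    rcases h with ⟨rfl, rfl⟩ | h
    · exact ⟨[], l, by simp, rfl⟩
    · obtain ⟨l₁, l₂, h₁, rfl⟩ := h.exists_eq_append
      exact ⟨x :: y :: l₁, l₂, by simpa [Nat.even_add_one] using h₁, rfl⟩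

theorem EvenPair.infix (h : EvenPair l a b) : [a, b] <:+: l := by
  obtain ⟨l₁, l₂, -, rfl⟩ := h.exists_eq_append
  exact ⟨l₁, l₂, by simp⟩

theorem EvenPair.mem (h : EvenPair l a b) : a ∈ l ∧ b ∈ l :=
  ⟨h.infix.subset (by simp), h.infix.subset (by simp)⟩

theorem EvenPair.reverse (hl : Even l.length) (h : EvenPair l a b) : EvenPair l.reverse b a := by
  obtain ⟨l₁, l₂, h₁, rfl⟩ := h.exists_eq_append
  have h₂ : Even l₂.reverse.length := by
    simp only [List.length_append, List.length_cons] at hl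
    grind
  simpa using evenPair_append_cons_cons (a := b) (b := a) (l₂ := l₁.reverse) h₂

theorem evenPair_reverse (hl : Even l.length) : EvenPair l.reverse a b ↔ EvenPair l b a :=
  ⟨fun h => by simpa using h.reverse (by simpa using hl), fun h => h.reverse hl⟩

/-- `Paired l a b`: the vertices `a` and `b` form an `EvenPair` of `l` in one of the two orders. -/
def Paired (l : List V) (a b : V) : Prop := EvenPair l a b ∨ EvenPair l b a

theorem Paired.symm (h : Paired l a b) : Paired l b a := Or.symm h

theorem paired_append (h : Even l₁.length) (l₂ : List V) :
    Paired (l₁ ++ l₂) a b ↔ Paired l₁ a b ∨ Paired l₂ a b := by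
  simp only [Paired, evenPair_append h]
  tauto

theorem paired_reverse (h : Even l.length) : Paired l.reverse a b ↔ Paired l a b := by
  simp only [Paired, evenPair_reverse h, or_comm]

theorem Paired.mem (h : Paired l a b) : a ∈ l ∧ b ∈ l :=
  h.elim EvenPair.mem fun h => h.mem.symm

theorem exists_paired (hl : Even l.length) (ha : a ∈ l) : ∃ b, Paired l a b := by
  induction l, hl using evenLength_induction with
  | nil => simp at ha
  | cons_cons x y l _ ih =>
    simp only [List.mem_cons] at ha
    rcases ha with rfl | rfl | ha
    · exact ⟨y, Or.inl (Or.inl ⟨rfl, rfl⟩)⟩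
    · exact ⟨x, Or.inr (Or.inl ⟨rfl, rfl⟩)⟩
    · obtain ⟨b, hb⟩ := ih ha
      exact ⟨b, hb.imp Or.inr Or.inr⟩

theorem Paired.adj {G : SimpleGraph V} (hl : l.IsChain G.Adj) (h : Paired l a b) : G.Adj a b := by
  rcases h with h | h
  · simpa using hl.infix h.infix
  · simpa using (show G.Adj b a by simpa using hl.infix h.infix).symm

theorem isChain_of_evenPair {R : V → V → Prop} : ∀ {l : List V},
    (∀ a b, EvenPair l a b → R a b) → (∀ a b, EvenPair l.tail a b → R a b) → l.IsChain R
  | [], _, _ => .nil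
  | [x], _, _ => .singleton x
  | x :: y :: _, h, h' => List.isChain_cons_cons.2
    ⟨h x y (Or.inl ⟨rfl, rfl⟩), isChain_of_evenPair h' fun a b hab => h a b (Or.inr hab)⟩

end EvenPairs

section Consecutive

variable {l l₁ l₂ : List V} {a b c : V}

theorem isChain_adj_reverse {G : SimpleGraph V} (h : l.IsChain G.Adj) :
    l.reverse.IsChain G.Adj := by
  rw [List.isChain_reverse]
  exact h.imp fun _ _ h => h.symm

theorem pair_infix_append_cons : ∀ {l₁ l₂ : List V}, [a, b] <:+: l₁ ++ c :: l₂ →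
    [a, b] <:+: l₁ ++ [c] ∨ [a, b] <:+: c :: l₂
  | [], _, h => Or.inr h
  | x :: l₁, l₂, h => by
    rw [List.cons_append, List.infix_cons_iff] at h
    rcases h with h | h
    · left
      cases l₁ with
      | nil =>
        simp only [List.nil_append, List.cons_prefix_cons, List.nil_prefix, and_true] at h
        obtain ⟨rfl, rfl⟩ := h
        exact List.infix_refl _
      | cons y l₁ =>
        simp only [List.cons_append, List.cons_prefix_cons, List.nil_prefix, and_true] at h
        obtain ⟨rfl, rfl⟩ := h
        exact ⟨[], l₁ ++ [c], by simp⟩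
    · exact (pair_infix_append_cons h).imp_left fun h => h.trans (List.suffix_cons x _).isInfix

theorem pair_infix_reverse : [a, b] <:+: l.reverse ↔ [b, a] <:+: l := by
  rw [← List.reverse_infix]
  simp

/-- `IsConsecutive l a b`: the path `l` traverses the edge `ab`, in one of the two directions. -/
def IsConsecutive (l : List V) (a b : V) : Prop := [a, b] <:+: l ∨ [b, a] <:+: l

theorem IsConsecutive.symm (h : IsConsecutive l a b) : IsConsecutive l b a := Or.symm h

theorem IsConsecutive.mono (h : IsConsecutive l₁ a b) (hl : l₁ <:+: l₂) : IsConsecutive l₂ a b :=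
  h.imp (fun h => h.trans hl) fun h => h.trans hl

theorem IsConsecutive.mem (h : IsConsecutive l a b) : a ∈ l ∧ b ∈ l := by
  rcases h with h | h <;> exact ⟨h.subset (by simp), h.subset (by simp)⟩

theorem isConsecutive_reverse : IsConsecutive l.reverse a b ↔ IsConsecutive l a b := by
  simp only [IsConsecutive, pair_infix_reverse, or_comm]

theorem IsConsecutive.append (h : IsConsecutive (l₁ ++ c :: l₂) a b) :
    IsConsecutive (l₁ ++ [c]) a b ∨ IsConsecutive (c :: l₂) a b := by
  rcases h with h | h
  · exact (pair_infix_append_cons h).imp Or.inl Or.inl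
  · exact (pair_infix_append_cons h).imp Or.inr Or.inr

theorem Paired.isConsecutive (h : Paired l a b) : IsConsecutive l a b :=
  h.imp EvenPair.infix EvenPair.infix

end Consecutive

section Partner

variable [DecidableEq V] {l : List V} {a b : V}

/-- The vertex matched with `v` by the even pairs of `l`; it is `v` itself if there is none. -/
def partner : List V → V → V
  | x :: y :: l, v => if v = x then y else if v = y then x else partner l v
  | _, v => v

theorem EvenPair.partner_eq : ∀ {l : List V} (_ : l.Nodup) {a b : V}, EvenPair l a b →
    partner l a = b ∧ partner l b = a
  | [], _, _, _, h => h.elim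
  | [_], _, _, _, h => h.elim
  | x :: y :: l, hl, a, b, h => by
    simp only [List.nodup_cons, List.mem_cons, not_or] at hl
    obtain ⟨⟨hxy, hxl⟩, hyl, hl⟩ := hl
    rcases h with ⟨rfl, rfl⟩ | h
    · simp [partner, Ne.symm hxy]
    · have hmem := h.mem
      have hne : ∀ v ∈ l, v ≠ x ∧ v ≠ y := fun v hv =>
        ⟨fun h => hxl (h ▸ hv), fun h => hyl (h ▸ hv)⟩
      simp [partner, hne a hmem.1, hne b hmem.2, h.partner_eq hl]

theorem Paired.partner_eq (hl : l.Nodup) (h : Paired l a b) : partner l a = b :=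
  h.elim (fun h => (h.partner_eq hl).1) fun h => (h.partner_eq hl).2

theorem paired_partner (hl : l.Nodup) (h : Even l.length) (ha : a ∈ l) :
    Paired l a (partner l a) := by
  obtain ⟨b, hb⟩ := exists_paired h ha
  rwa [hb.partner_eq hl]

end Partner

section OffCounts

variable [DecidableEq V] {m : V → V} {l l₁ : List V}

/-- The number of edges `xy` of the path `l` that are not in the matching `m`, i.e. `m x ≠ y`. -/
def offEdges (m : V → V) : List V → ℕ
  | x :: y :: l => (if m x = y then 0 else 1) + offEdges m (y :: l)
  | _ => 0

/-- The number of even pairs of the path `l` that are not in the matching `m`. -/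
def offPairs (m : V → V) : List V → ℕ
  | x :: y :: l => (if m x = y then 0 else 1) + offPairs m l
  | _ => 0

@[simp] theorem offEdges_singleton (m : V → V) (x : V) : offEdges m [x] = 0 := rfl

theorem offEdges_cons_cons (m : V → V) (x y : V) (l : List V) :
    offEdges m (x :: y :: l) = (if m x = y then 0 else 1) + offEdges m (y :: l) := rfl

@[simp] theorem offPairs_nil (m : V → V) : offPairs m [] = 0 := rfl

@[simp] theorem offPairs_singleton (m : V → V) (x : V) : offPairs m [x] = 0 := rfl

theorem offPairs_cons_cons (m : V → V) (x y : V) (l : List V) :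
    offPairs m (x :: y :: l) = (if m x = y then 0 else 1) + offPairs m l := rfl

theorem offEdges_append (m : V → V) : ∀ (l₁ : List V) (x : V) (l₂ : List V),
    offEdges m (l₁ ++ x :: l₂) = offEdges m (l₁ ++ [x]) + offEdges m (x :: l₂)
  | [], x, l₂ => by simp
  | [y], x, l₂ => by simp [offEdges_cons_cons]
  | y :: z :: l₁, x, l₂ => by
    have ih := offEdges_append m (z :: l₁) x l₂
    simp only [List.cons_append] at ih ⊢
    rw [offEdges_cons_cons, offEdges_cons_cons, ih, add_assoc]

theorem offEdges_reverse (hm : m.Involutive) : ∀ l : List V, offEdges m l.reverse = offEdges m l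
  | [] => rfl
  | [_] => rfl
  | x :: y :: l => by
    have ih := offEdges_reverse hm (y :: l)
    rw [List.reverse_cons] at ih
    rw [List.reverse_cons, List.reverse_cons, List.append_assoc, List.singleton_append,
      offEdges_append, ih, offEdges_cons_cons, offEdges_cons_cons]
    have hxy : m y = x ↔ m x = y := by rw [hm.eq_iff, eq_comm]
    simp [hxy, add_comm]

theorem offPairs_append (m : V → V) (h : Even l₁.length) (l₂ : List V) :
    offPairs m (l₁ ++ l₂) = offPairs m l₁ + offPairs m l₂ := by
  induction l₁, h using evenLength_induction with
  | nil => simp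
  | cons_cons x y l _ ih => simp [offPairs_cons_cons, ih, add_assoc]

theorem offPairs_reverse (hm : m.Involutive) (h : Even l.length) :
    offPairs m l.reverse = offPairs m l := by
  induction l, h using evenLength_induction with
  | nil => rfl
  | cons_cons x y l hl ih =>
    rw [List.reverse_cons, List.reverse_cons, List.append_assoc, List.singleton_append,
      offPairs_append m (by simpa using hl), ih, offPairs_cons_cons, offPairs_cons_cons]
    have hxy : m y = x ↔ m x = y := by rw [hm.eq_iff, eq_comm]
    simp [hxy, add_comm]

theorem offEdges_eq_offPairs_add (m : V → V) (h : Even l.length) (x y : V) :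
    offEdges m (x :: (l ++ [y])) = offPairs m (x :: (l ++ [y])) + offPairs m l := by
  induction l, h using evenLength_induction generalizing x y with
  | nil => simp [offEdges_cons_cons, offPairs_cons_cons]
  | cons_cons a b l _ ih =>
    have := ih b y
    simp only [List.cons_append, offEdges_cons_cons, offPairs_cons_cons] at this ⊢
    rw [this]
    ring

theorem offPairs_eq_zero_iff (m : V → V) : ∀ {l : List V},
    offPairs m l = 0 ↔ ∀ a b, EvenPair l a b → m a = b
  | [] => by simp
  | [_] => by simp
  | x :: y :: l => by
    rw [offPairs_cons_cons, Nat.add_eq_zero_iff, offPairs_eq_zero_iff m]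
    simp only [evenPair_cons_cons, or_imp, forall_and, ite_eq_left_iff, one_ne_zero, imp_false,
      not_not, and_imp, forall_eq_apply_imp_iff, forall_eq]

theorem sum_count_mul_eq_two_mul_offPairs [Fintype V] {f : V → V} (hm : m.Involutive)
    (h : Even l.length) (hf : ∀ a b, EvenPair l a b → f a = b ∧ f b = a) :
    ∑ v, l.count v * (if f v = m v then 0 else 1) = 2 * offPairs m l := by
  induction l, h using evenLength_induction with
  | nil => simp
  | cons_cons x y l _ ih =>
    obtain ⟨hx, hy⟩ := hf x y (Or.inl ⟨rfl, rfl⟩)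
    simp only [List.count_cons, add_mul, Finset.sum_add_distrib,
      ih fun a b hab => hf a b (Or.inr hab), offPairs_cons_cons, beq_iff_eq, ite_mul, one_mul,
      zero_mul, Finset.sum_ite_eq, Finset.mem_univ, if_true, hx, hy]
    have hyx : y = m x ↔ m x = y := eq_comm
    have hxy : x = m y ↔ m x = y := by rw [eq_comm, hm.eq_iff, eq_comm]
    simp only [hyx, hxy]
    split_ifs <;> omega

end OffCounts

/-! ### Bisubdivisions of `K33` with an outer matching -/

theorem count_cons_eq_add [DecidableEq V] (a : V) (l : List V) (x : V) :
    (a :: l).count x = [a].count x + l.count x := by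
  rw [← List.singleton_append, List.count_append]

/-- The data of a bisubdivision of `K33`: the branch vertices `u i` and `w j`, and the list
`inner i j` of inner vertices of the path from `u i` to `w j`. -/
structure K33Data (V : Type*) where
  u : Fin 3 → V
  w : Fin 3 → V
  inner : Fin 3 → Fin 3 → List V

namespace K33Data

/-- The path from `u i` to `w j`, as the list of its vertices. -/
def path (D : K33Data V) (i j : Fin 3) : List V := D.u i :: (D.inner i j ++ [D.w j])

/-- The bisubdivision with the two colour classes of branch vertices interchanged. -/
def swap (D : K33Data V) : K33Data V := ⟨D.w, D.u, fun i j => (D.inner j i).reverse⟩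

/-- The bisubdivision with relabelled branch vertices. -/
def perm (D : K33Data V) (σ τ : Equiv.Perm (Fin 3)) : K33Data V :=
  ⟨D.u ∘ σ, D.w ∘ τ, fun i j => D.inner (σ i) (τ j)⟩

/-- If `p` splits `path 0 1` and `q` splits `path 1 0`, the branch vertices `u 0` and `w 0` can be
moved to `p` and `q`: `path 0 0` is replaced by a path from `p` to `q` with inner vertices `R`,
while the segments from `u 0` to `p` and from `q` to `w 0` are joined to `path 0 2` and
`path 2 0`. -/
def slide (D : K33Data V) (Z₁ : List V) (p : V) (Z₂ Y₁ : List V) (q : V) (Y₂ R : List V) :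
    K33Data V :=
  ⟨![p, D.u 1, D.u 2], ![q, D.w 1, D.w 2],
    ![![R, Z₂, Z₁.reverse ++ D.inner 0 2],
      ![Y₁, D.inner 1 1, D.inner 1 2],
      ![D.inner 2 0 ++ Y₂.reverse, D.inner 2 1, D.inner 2 2]]⟩

@[simp] theorem path_swap (D : K33Data V) (i j : Fin 3) :
    D.swap.path i j = (D.path j i).reverse := by
  simp [path, swap]

@[simp] theorem path_perm (D : K33Data V) (σ τ : Equiv.Perm (Fin 3)) (i j : Fin 3) :
    (D.perm σ τ).path i j = D.path (σ i) (τ j) := rfl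

theorem inner_infix_path (D : K33Data V) (i j : Fin 3) : D.inner i j <:+: D.path i j :=
  ⟨[D.u i], [D.w j], by simp [path]⟩

section Mult

variable [DecidableEq V]

/-- The number of times that `x` occurs in a bisubdivision, branch vertices being counted once. -/
def mult (D : K33Data V) (x : V) : ℕ :=
  (∑ i, [D.u i].count x) + (∑ j, [D.w j].count x) + ∑ i, ∑ j, (D.inner i j).count x

@[simp] theorem mult_swap (D : K33Data V) (x : V) : D.swap.mult x = D.mult x := by
  simp only [mult, swap, List.count_reverse]
  rw [Finset.sum_comm (f := fun i j => List.count x (D.inner j i))]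
  omega

@[simp] theorem mult_perm (D : K33Data V) (σ τ : Equiv.Perm (Fin 3)) (x : V) :
    (D.perm σ τ).mult x = D.mult x := by
  simp only [mult, perm, Function.comp]
  rw [Equiv.sum_comp σ (fun i => [D.u i].count x), Equiv.sum_comp τ (fun i => [D.w i].count x),
    Equiv.sum_comp σ (fun i => ∑ j, (D.inner i (τ j)).count x)]
  simp_rw [fun i => Equiv.sum_comp τ (fun j => (D.inner i j).count x)]

theorem count_path (D : K33Data V) (i j : Fin 3) (x : V) :
    (D.path i j).count x = [D.u i].count x + (D.inner i j).count x + [D.w j].count x := by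
  rw [path, count_cons_eq_add, List.count_append, add_assoc]

theorem count_path_le_mult (D : K33Data V) (i j : Fin 3) (x : V) :
    (D.path i j).count x ≤ D.mult x := by
  rw [count_path, mult]
  have hu := Finset.single_le_sum_of_canonicallyOrdered (f := fun i => [D.u i].count x)
    (Finset.mem_univ i)
  have hw := Finset.single_le_sum_of_canonicallyOrdered (f := fun j => [D.w j].count x)
    (Finset.mem_univ j)
  have hi := Finset.single_le_sum_of_canonicallyOrdered (f := fun j => (D.inner i j).count x)
    (Finset.mem_univ j)
  have hj := Finset.single_le_sum_of_canonicallyOrdered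
    (f := fun i => ∑ j, (D.inner i j).count x) (Finset.mem_univ i)
  omega

theorem mult_ne_zero_of_mem_path {D : K33Data V} {i j : Fin 3} {x : V} (h : x ∈ D.path i j) :
    D.mult x ≠ 0 :=
  ((List.count_pos_iff.2 h).trans_le (count_path_le_mult D i j x)).ne'

theorem exists_mem_path_of_mult_ne_zero {D : K33Data V} {x : V} (h : D.mult x ≠ 0) :
    ∃ i j, x ∈ D.path i j := by
  contrapose! h
  have hzero (i j) := count_path D i j x ▸ List.count_eq_zero.2 (h i j)
  simp only [Nat.add_eq_zero_iff] at hzero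
  simp [mult, fun i => (hzero i 0).1.1, fun j => (hzero 0 j).2, fun i j => (hzero i j).1.2]

end Mult

/-- `IsModelEdge D a b`: the edge `ab` is traversed by one of the nine paths of `D`. -/
def IsModelEdge (D : K33Data V) (a b : V) : Prop := ∃ i j, IsConsecutive (D.path i j) a b

theorem IsModelEdge.symm {D : K33Data V} {a b : V} (h : D.IsModelEdge a b) : D.IsModelEdge b a :=
  h.imp fun _ => Exists.imp fun _ => IsConsecutive.symm

theorem IsModelEdge.mult_ne_zero [DecidableEq V] {D : K33Data V} {a b : V}
    (h : D.IsModelEdge a b) : D.mult a ≠ 0 ∧ D.mult b ≠ 0 := by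
  obtain ⟨i, j, h⟩ := h
  exact ⟨mult_ne_zero_of_mem_path h.mem.1, mult_ne_zero_of_mem_path h.mem.2⟩

@[simp] theorem isModelEdge_perm {D : K33Data V} {a b : V} (σ τ : Equiv.Perm (Fin 3)) :
    (D.perm σ τ).IsModelEdge a b ↔ D.IsModelEdge a b :=
  σ.surjective.exists.symm.trans <| exists_congr fun i => (τ.surjective.exists
    (p := fun j => IsConsecutive (D.path i j) a b)).symm

@[simp] theorem isModelEdge_swap {D : K33Data V} {a b : V} :
    D.swap.IsModelEdge a b ↔ D.IsModelEdge a b := by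
  simp only [IsModelEdge, path_swap, isConsecutive_reverse]
  exact exists_comm

end K33Data

section Model

variable [DecidableEq V] {G : SimpleGraph V} {D : K33Data V} {n m : V → V}

/-- `IsModel G D`: the data `D` describes a bisubdivision of `K33` that is a subgraph of `G`. -/
structure IsModel (G : SimpleGraph V) (D : K33Data V) : Prop where
  isChain : ∀ i j, (D.path i j).IsChain G.Adj
  even_inner : ∀ i j, Even (D.inner i j).length
  mult_le_one : ∀ x, D.mult x ≤ 1

/-- `IsOuterMatching G D n`: the function `n` is a perfect matching of the graph that is obtained
from `G` by deleting the vertices of `D`, sending each vertex to the one it is matched with. The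
values of `n` on the vertices of `D` are irrelevant. -/
def IsOuterMatching (G : SimpleGraph V) (D : K33Data V) (n : V → V) : Prop :=
  ∀ v, D.mult v = 0 → D.mult (n v) = 0 ∧ n (n v) = v ∧ G.Adj v (n v)

theorem IsModel.swap (h : IsModel G D) : IsModel G D.swap where
  isChain i j := by rw [K33Data.path_swap]; exact isChain_adj_reverse (h.isChain j i)
  even_inner i j := by simpa [K33Data.swap] using h.even_inner j i
  mult_le_one x := by rw [K33Data.mult_swap]; exact h.mult_le_one x

theorem IsModel.perm (h : IsModel G D) (σ τ : Equiv.Perm (Fin 3)) : IsModel G (D.perm σ τ) where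
  isChain _ _ := h.isChain _ _
  even_inner _ _ := h.even_inner _ _
  mult_le_one x := by rw [K33Data.mult_perm]; exact h.mult_le_one x

theorem IsModel.nodup_path (h : IsModel G D) (i j : Fin 3) : (D.path i j).Nodup :=
  List.nodup_iff_count_le_one.2 fun x => (D.count_path_le_mult i j x).trans (h.mult_le_one x)

theorem IsModel.even_path (h : IsModel G D) (i j : Fin 3) : Even (D.path i j).length := by
  simpa [K33Data.path, Nat.even_add_one] using h.even_inner i j

theorem IsOuterMatching.swap (h : IsOuterMatching G D n) : IsOuterMatching G D.swap n :=
  fun v => by simpa using h v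

theorem IsOuterMatching.perm (h : IsOuterMatching G D n) (σ τ : Equiv.Perm (Fin 3)) :
    IsOuterMatching G (D.perm σ τ) n :=
  fun v => by simpa using h v

/-- The number of edges of the nine paths of `D` that are not in `m`. -/
def innerOff (m : V → V) (D : K33Data V) : ℕ := ∑ i, ∑ j, offEdges m (D.path i j)

theorem innerOff_swap (hm : m.Involutive) (D : K33Data V) : innerOff m D.swap = innerOff m D := by
  simp only [innerOff, K33Data.path_swap, offEdges_reverse hm]
  rw [Finset.sum_comm]

theorem innerOff_perm (m : V → V) (D : K33Data V) (σ τ : Equiv.Perm (Fin 3)) :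
    innerOff m (D.perm σ τ) = innerOff m D := by
  simp only [innerOff, K33Data.path_perm]
  rw [Equiv.sum_comp σ (fun i => ∑ j, offEdges m (D.path i (τ j)))]
  simp_rw [fun i => Equiv.sum_comp τ (fun j => offEdges m (D.path i j))]

/-- The number of vertices outside `D` at which the outer matching `n` differs from `m`. -/
def outerOff [Fintype V] (m : V → V) (D : K33Data V) (n : V → V) : ℕ :=
  ∑ v, if D.mult v = 0 then (if n v = m v then 0 else 1) else 0

/-- Twice the number of edges of `D` and of its outer matching `n` that are not in `m`. -/
def potential [Fintype V] (m : V → V) (D : K33Data V) (n : V → V) : ℕ :=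
  2 * innerOff m D + outerOff m D n

theorem potential_swap [Fintype V] (hm : m.Involutive) (D : K33Data V) (n : V → V) :
    potential m D.swap n = potential m D n := by
  simp only [potential, innerOff_swap hm, outerOff, K33Data.mult_swap]

theorem potential_perm [Fintype V] (m : V → V) (D : K33Data V) (n : V → V)
    (σ τ : Equiv.Perm (Fin 3)) : potential m (D.perm σ τ) n = potential m D n := by
  simp only [potential, innerOff_perm, outerOff, K33Data.mult_perm]

end Model

section Split

variable {D : K33Data V} {i j : Fin 3} {Z₁ Z₂ : List V} {x : V}

/-- `IsUSplit D i j Z₁ x Z₂`: the vertex `x` splits the path from `u i` to `w j`, and it has the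
colour of `u i`. -/
def IsUSplit (D : K33Data V) (i j : Fin 3) (Z₁ : List V) (x : V) (Z₂ : List V) : Prop :=
  D.u i :: D.inner i j = Z₁ ++ x :: Z₂ ∧ Even Z₁.length

/-- `IsWSplit D i j Z₁ x Z₂`: the vertex `x` splits the path from `u i` to `w j`, and it has the
colour of `w j`. -/
def IsWSplit (D : K33Data V) (i j : Fin 3) (Z₁ : List V) (x : V) (Z₂ : List V) : Prop :=
  D.inner i j ++ [D.w j] = Z₁ ++ x :: Z₂ ∧ Even Z₁.length

theorem IsUSplit.path_eq (h : IsUSplit D i j Z₁ x Z₂) :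
    D.path i j = Z₁ ++ x :: (Z₂ ++ [D.w j]) := by
  rw [K33Data.path, ← List.cons_append, h.1, List.append_assoc, List.cons_append]

theorem IsWSplit.path_eq (h : IsWSplit D i j Z₁ x Z₂) :
    D.path i j = D.u i :: Z₁ ++ x :: Z₂ := by
  rw [K33Data.path, h.1, List.cons_append]

theorem IsUSplit.of_path_eq {z : V} (h : D.path i j = Z₁ ++ x :: (Z₂ ++ [z]))
    (hZ : Even Z₁.length) : IsUSplit D i j Z₁ x Z₂ :=
  ⟨(List.append_inj' (s₁ := D.u i :: D.inner i j) (t₁ := [D.w j]) (s₂ := Z₁ ++ x :: Z₂)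
    (t₂ := [z]) (by rw [List.append_assoc]; exact h) rfl).1, hZ⟩

theorem IsWSplit.of_path_eq {z : V} (h : D.path i j = z :: (Z₁ ++ x :: Z₂))
    (hZ : Even Z₁.length) : IsWSplit D i j Z₁ x Z₂ :=
  ⟨(List.cons_eq_cons.1 h).2, hZ⟩

theorem IsUSplit.mem_path (h : IsUSplit D i j Z₁ x Z₂) : x ∈ D.path i j := by
  simp [h.path_eq]

theorem IsWSplit.mem_path (h : IsWSplit D i j Z₁ x Z₂) : x ∈ D.path i j := by
  simp [h.path_eq]

theorem IsUSplit.exists_eq_cons (h : IsUSplit D i j Z₁ x Z₂) :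
    ∃ K, Z₁ ++ [x] = D.u i :: K ∧ D.inner i j = K ++ Z₂ := by
  have := h.1
  cases Z₁ with
  | nil => exact ⟨[], by simp_all⟩
  | cons z L => exact ⟨L ++ [x], by simp_all⟩

theorem IsWSplit.exists_eq_concat (h : IsWSplit D i j Z₁ x Z₂) :
    ∃ K, x :: Z₂ = K ++ [D.w j] ∧ D.inner i j = Z₁ ++ K := by
  have hlast : x :: Z₂ ≠ [] := by simp
  have hx := List.dropLast_append_getLast hlast
  have h1 := h.1
  rw [← hx, ← List.append_assoc] at h1
  obtain ⟨h1, h2⟩ := List.append_inj' h1 rfl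
  exact ⟨(x :: Z₂).dropLast, by rw [h2, hx], h1⟩

theorem IsUSplit.swap {G : SimpleGraph V} [DecidableEq V] (hD : IsModel G D)
    (h : IsUSplit D i j Z₁ x Z₂) : IsWSplit D.swap j i Z₂.reverse x Z₁.reverse := by
  refine ⟨by simpa [K33Data.swap] using congrArg List.reverse h.1, ?_⟩
  have hl := congrArg List.length h.1
  have := hD.even_inner i j
  have := h.2
  simp only [List.length_cons, List.length_append, List.length_reverse] at hl ⊢
  grind

theorem IsWSplit.swap {G : SimpleGraph V} [DecidableEq V] (hD : IsModel G D)
    (h : IsWSplit D i j Z₁ x Z₂) : IsUSplit D.swap j i Z₂.reverse x Z₁.reverse := by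
  refine ⟨by simpa [K33Data.swap] using congrArg List.reverse h.1, ?_⟩
  have hl := congrArg List.length h.1
  have := hD.even_inner i j
  have := h.2
  simp only [List.length_cons, List.length_append, List.length_reverse, List.length_nil] at hl ⊢
  grind

theorem IsUSplit.perm {σ τ : Equiv.Perm (Fin 3)} {a b : Fin 3} (ha : σ a = i) (hb : τ b = j)
    (h : IsUSplit D i j Z₁ x Z₂) : IsUSplit (D.perm σ τ) a b Z₁ x Z₂ := by
  subst ha hb; exact h

theorem IsWSplit.perm {σ τ : Equiv.Perm (Fin 3)} {a b : Fin 3} (ha : σ a = i) (hb : τ b = j)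
    (h : IsWSplit D i j Z₁ x Z₂) : IsWSplit (D.perm σ τ) a b Z₁ x Z₂ := by
  subst ha hb; exact h

theorem exists_isUSplit_or_isWSplit {G : SimpleGraph V} [DecidableEq V] (hD : IsModel G D)
    (hx : D.mult x ≠ 0) : (∃ i j Z₁ Z₂, IsUSplit D i j Z₁ x Z₂) ∨
      ∃ i j Z₁ Z₂, IsWSplit D i j Z₁ x Z₂ := by
  obtain ⟨i, j, h⟩ := K33Data.exists_mem_path_of_mult_ne_zero hx
  simp only [K33Data.path, List.mem_cons, List.mem_append, List.not_mem_nil, or_false] at h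
  rcases h with rfl | h | rfl
  · exact Or.inl ⟨i, j, [], D.inner i j, rfl, by simp⟩
  · obtain ⟨A, B, hAB⟩ := List.append_of_mem h
    rcases Nat.even_or_odd A.length with he | ho
    · exact Or.inr ⟨i, j, A, B ++ [D.w j], by simp [hAB], he⟩
    · exact Or.inl ⟨i, j, D.u i :: A, B, by simp [hAB], by simpa using ho.add_one⟩
  · exact Or.inr ⟨i, j, D.inner i j, [], rfl, hD.even_inner i j⟩

end Split

section Exchange

variable [DecidableEq V] {G : SimpleGraph V} {D D' : K33Data V} {n m : V → V} {E S : List V}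

/-- The outer matching `n`, changed on the vertices of `S` to match the even pairs of `S`. -/
def rematch (n : V → V) (S : List V) (v : V) : V := if v ∈ S then partner S v else n v

/-- `IsOuterMatched D n E`: the path `E` lies outside `D`, and `n` matches its even pairs. -/
structure IsOuterMatched (D : K33Data V) (n : V → V) (E : List V) : Prop where
  even_length : Even E.length
  mult_add_count_le_one : ∀ x, D.mult x + E.count x ≤ 1
  apply_eq : ∀ a b, EvenPair E a b → n a = b ∧ n b = a

namespace IsOuterMatched

theorem nodup (h : IsOuterMatched D n E) : E.Nodup :=
  List.nodup_iff_count_le_one.2 fun x => le_of_add_le_right (h.mult_add_count_le_one x)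

theorem mult_eq_zero_of_mem (h : IsOuterMatched D n E) {x : V} (hx : x ∈ E) : D.mult x = 0 := by
  have := h.mult_add_count_le_one x
  have := List.count_pos_iff.2 hx
  omega

theorem apply_mem (h : IsOuterMatched D n E) {x : V} (hx : x ∈ E) : n x ∈ E ∧ n (n x) = x := by
  obtain ⟨y, hy | hy⟩ := exists_paired h.even_length hx
  · obtain ⟨h1, h2⟩ := h.apply_eq _ _ hy
    rw [h1]
    exact ⟨hy.mem.2, h2⟩
  · obtain ⟨h1, h2⟩ := h.apply_eq _ _ hy
    rw [h2]
    exact ⟨hy.mem.1, h1⟩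

end IsOuterMatched

/-- `IsExchange G D D' n E S`: the vertices of `D'` are obtained from those of `D` by adding the
path `E`, which is matched within itself by `n`, and releasing the vertices of the path `S`, which
has a perfect matching of its own. -/
structure IsExchange (G : SimpleGraph V) (D D' : K33Data V) (n : V → V) (E S : List V) :
    Prop where
  isOuterMatched : IsOuterMatched D n E
  even_length : Even S.length
  isChain : S.IsChain G.Adj
  mult_add_count : ∀ x, D'.mult x + S.count x = D.mult x + E.count x

namespace IsExchange

theorem mult_le_one (h : IsExchange G D D' n E S) (x : V) : D'.mult x ≤ 1 := by
  have := h.mult_add_count x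
  have := h.isOuterMatched.mult_add_count_le_one x
  omega

theorem nodup (h : IsExchange G D D' n E S) : S.Nodup :=
  List.nodup_iff_count_le_one.2 fun x => by
    have := h.mult_add_count x
    have := h.isOuterMatched.mult_add_count_le_one x
    omega

theorem mult_eq_zero_of_mem (h : IsExchange G D D' n E S) {x : V} (hx : x ∈ S) :
    D'.mult x = 0 := by
  have := h.mult_add_count x
  have := h.isOuterMatched.mult_add_count_le_one x
  have := List.count_pos_iff.2 hx
  omega

theorem not_mem (h : IsExchange G D D' n E S) {x : V} (hx : D.mult x = 0) (hxE : x ∉ E) :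
    x ∉ S := by
  have := h.mult_add_count x
  have := List.count_eq_zero.2 hxE
  exact List.count_eq_zero.1 (by omega)

theorem rematch_apply (h : IsExchange G D D' n E S) {x : V} (hx : D.mult x = 0)
    (hxE : x ∉ E) : rematch n S x = n x := by
  simp [rematch, h.not_mem hx hxE]

theorem isOuterMatching (h : IsExchange G D D' n E S) (hn : IsOuterMatching G D n) :
    IsOuterMatching G D' (rematch n S) := by
  intro v hv
  by_cases hvS : v ∈ S
  · have hp := paired_partner h.nodup h.even_length hvS
    rw [show rematch n S v = partner S v by simp [rematch, hvS]]
    refine ⟨h.mult_eq_zero_of_mem hp.mem.2, ?_, hp.adj h.isChain⟩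
    simp only [rematch, hp.mem.2, if_true, hp.symm.partner_eq h.nodup]
  · have hcount := h.mult_add_count v
    have := List.count_eq_zero.2 hvS
    have hv0 : D.mult v = 0 := by omega
    have hvE : v ∉ E := List.count_eq_zero.1 (by omega)
    obtain ⟨h1, h2, h3⟩ := hn v hv0
    have hnE : n v ∉ E := fun hE => hvE (h2 ▸ (h.isOuterMatched.apply_mem hE).1)
    rw [h.rematch_apply hv0 hvE, h.rematch_apply h1 hnE]
    have hcount' := h.mult_add_count (n v)
    have := List.count_eq_zero.2 hnE
    exact ⟨by omega, h2, h3⟩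

theorem outerOff_apply (h : IsExchange G D D' n E S) (m : V → V) (v : V) :
    (if D'.mult v = 0 then (if rematch n S v = m v then 0 else 1) else 0) +
        E.count v * (if n v = m v then 0 else 1) =
      (if D.mult v = 0 then (if n v = m v then 0 else 1) else 0) +
        S.count v * (if partner S v = m v then 0 else 1) := by
  have hcount := h.mult_add_count v
  have hle := h.isOuterMatched.mult_add_count_le_one v
  by_cases hvS : v ∈ S
  · have hS1 : S.count v = 1 := List.count_eq_one_of_mem h.nodup hvS
    have hD' := h.mult_eq_zero_of_mem hvS
    rcases Nat.eq_zero_or_pos (E.count v) with hE | hE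
    · have : D.mult v ≠ 0 := by omega
      simp [rematch, *]
    · have hE1 : E.count v = 1 := by omega
      have : D.mult v = 0 := by omega
      simp [rematch, *, add_comm]
  · have hS0 := List.count_eq_zero.2 hvS
    rcases Nat.eq_zero_or_pos (E.count v) with hE | hE
    · have : D'.mult v = D.mult v := by omega
      simp [rematch, *]
    · have hE1 : E.count v = 1 := by omega
      have : D.mult v = 0 := by omega
      have : D'.mult v ≠ 0 := by omega
      simp [*]

theorem outerOff_rematch [Fintype V] (h : IsExchange G D D' n E S) (hm : m.Involutive) :
    outerOff m D' (rematch n S) + 2 * offPairs m E = outerOff m D n + 2 * offPairs m S := by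
  rw [← sum_count_mul_eq_two_mul_offPairs hm h.isOuterMatched.even_length h.isOuterMatched.apply_eq,
    ← sum_count_mul_eq_two_mul_offPairs hm h.even_length
      fun a b hab => hab.partner_eq h.nodup]
  simp only [outerOff, ← Finset.sum_add_distrib, h.outerOff_apply]

end IsExchange

end Exchange

section Slide

variable {D : K33Data V} {R Z₁ Z₂ Y₁ Y₂ : List V} {p q : V}

theorem slide_path_of_ne_zero {i j : Fin 3} (hi : i ≠ 0) (hj : j ≠ 0) :
    (D.slide Z₁ p Z₂ Y₁ q Y₂ R).path i j = D.path i j := by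
  fin_cases i <;> fin_cases j <;> first | rfl | contradiction

theorem slide_path_zero_two {K : List V} (h : Z₁ ++ [p] = D.u 0 :: K) :
    (D.slide Z₁ p Z₂ Y₁ q Y₂ R).path 0 2 =
      K.reverse ++ D.u 0 :: (D.inner 0 2 ++ [D.w 2]) := by
  have : (D.slide Z₁ p Z₂ Y₁ q Y₂ R).path 0 2 =
      (Z₁ ++ [p]).reverse ++ (D.inner 0 2 ++ [D.w 2]) := by
    simp [K33Data.path, K33Data.slide]
  rw [this, h]
  simp

theorem slide_path_two_zero {K : List V} (h : q :: Y₂ = K ++ [D.w 0]) :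
    (D.slide Z₁ p Z₂ Y₁ q Y₂ R).path 2 0 =
      (D.u 2 :: D.inner 2 0) ++ D.w 0 :: K.reverse := by
  have : (D.slide Z₁ p Z₂ Y₁ q Y₂ R).path 2 0 =
      (D.u 2 :: D.inner 2 0) ++ (q :: Y₂).reverse := by
    simp [K33Data.path, K33Data.slide]
  rw [this, h]
  simp

variable [DecidableEq V] {G : SimpleGraph V} {n m : V → V} {E S : List V}

theorem mult_slide (hp : IsUSplit D 0 1 Z₁ p Z₂) (hq : IsWSplit D 1 0 Y₁ q Y₂) (x : V) :
    (D.slide Z₁ p Z₂ Y₁ q Y₂ R).mult x + (D.inner 0 0).count x = D.mult x + R.count x := by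
  have h1 := congrArg (List.count x) hp.1
  have h2 := congrArg (List.count x) hq.1
  rw [count_cons_eq_add, List.count_append, count_cons_eq_add p] at h1
  rw [List.count_append, List.count_append, count_cons_eq_add q] at h2
  simp only [K33Data.mult, K33Data.slide, Fin.sum_univ_three, Matrix.cons_val_zero,
    Matrix.cons_val_one, Matrix.cons_val, List.count_append, List.count_reverse]
  omega

theorem isChain_slide (hD : IsModel G D) (hp : IsUSplit D 0 1 Z₁ p Z₂)
    (hq : IsWSplit D 1 0 Y₁ q Y₂) (hR : (p :: (R ++ [q])).IsChain G.Adj) (i j : Fin 3) :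
    ((D.slide Z₁ p Z₂ Y₁ q Y₂ R).path i j).IsChain G.Adj := by
  obtain ⟨K, hK, -⟩ := hp.exists_eq_cons
  obtain ⟨L, hL, -⟩ := hq.exists_eq_concat
  obtain ⟨h1, h2⟩ := List.isChain_split.1 (hp.path_eq ▸ hD.isChain 0 1)
  obtain ⟨h3, h4⟩ := List.isChain_split.1 (hq.path_eq ▸ hD.isChain 1 0)
  fin_cases i <;> fin_cases j
  · exact hR
  · exact h2
  · refine slide_path_zero_two hK ▸ List.isChain_split.2 ⟨?_, hD.isChain 0 2⟩
    simpa [hK] using isChain_adj_reverse h1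
  · exact h3
  · exact hD.isChain 1 1
  · exact hD.isChain 1 2
  · refine slide_path_two_zero hL ▸ List.isChain_split.2 ⟨hD.isChain 2 0, ?_⟩
    simpa [hL] using isChain_adj_reverse h4
  · exact hD.isChain 2 1
  · exact hD.isChain 2 2

theorem even_inner_slide (hD : IsModel G D) (hp : IsUSplit D 0 1 Z₁ p Z₂)
    (hq : IsWSplit D 1 0 Y₁ q Y₂) (hR : Even R.length) (i j : Fin 3) :
    Even ((D.slide Z₁ p Z₂ Y₁ q Y₂ R).inner i j).length := by
  have hZ := congrArg List.length hp.1
  have hY := congrArg List.length hq.1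
  simp only [List.length_cons, List.length_append, List.length_nil] at hZ hY
  have h01 := hD.even_inner 0 1
  have h10 := hD.even_inner 1 0
  have hZ₁ := hp.2
  have hY₁ := hq.2
  have hZ₂ : Even Z₂.length := by grind
  have hY₂ : Even Y₂.length := by grind
  fin_cases i <;> fin_cases j
  · exact hR
  · exact hZ₂
  · simpa [K33Data.slide] using hZ₁.add (hD.even_inner 0 2)
  · exact hY₁
  · exact hD.even_inner 1 1
  · exact hD.even_inner 1 2
  · simpa [K33Data.slide] using (hD.even_inner 2 0).add hY₂
  · exact hD.even_inner 2 1
  · exact hD.even_inner 2 2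

theorem IsModel.slide (hD : IsModel G D) (hp : IsUSplit D 0 1 Z₁ p Z₂)
    (hq : IsWSplit D 1 0 Y₁ q Y₂) (hR : (p :: (R ++ [q])).IsChain G.Adj) (hRe : Even R.length)
    (h : IsExchange G D (D.slide Z₁ p Z₂ Y₁ q Y₂ R) n E S) :
    IsModel G (D.slide Z₁ p Z₂ Y₁ q Y₂ R) where
  isChain := isChain_slide hD hp hq hR
  even_inner := even_inner_slide hD hp hq hRe
  mult_le_one := h.mult_le_one

theorem innerOff_slide (hm : m.Involutive) (hp : IsUSplit D 0 1 Z₁ p Z₂)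
    (hq : IsWSplit D 1 0 Y₁ q Y₂) :
    innerOff m (D.slide Z₁ p Z₂ Y₁ q Y₂ R) + offEdges m (D.path 0 0) =
      innerOff m D + offEdges m (p :: (R ++ [q])) := by
  obtain ⟨K, hK, -⟩ := hp.exists_eq_cons
  obtain ⟨L, hL, -⟩ := hq.exists_eq_concat
  have h02 : offEdges m ((D.slide Z₁ p Z₂ Y₁ q Y₂ R).path 0 2) =
      offEdges m (Z₁ ++ [p]) + offEdges m (D.path 0 2) := by
    rw [slide_path_zero_two hK, offEdges_append, ← offEdges_reverse hm (Z₁ ++ [p]), hK,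
      List.reverse_cons, K33Data.path]
  have h20 : offEdges m ((D.slide Z₁ p Z₂ Y₁ q Y₂ R).path 2 0) =
      offEdges m (D.path 2 0) + offEdges m (q :: Y₂) := by
    rw [slide_path_two_zero hL, offEdges_append, ← offEdges_reverse hm (q :: Y₂), hL,
      List.reverse_concat, K33Data.path, List.cons_append]
  have h01 := hp.path_eq ▸ offEdges_append m Z₁ p (Z₂ ++ [D.w 1])
  have h10 := hq.path_eq ▸ offEdges_append m (D.u 1 :: Y₁) q Y₂
  have h00' : (D.slide Z₁ p Z₂ Y₁ q Y₂ R).path 0 0 = p :: (R ++ [q]) := rfl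
  have h01' : (D.slide Z₁ p Z₂ Y₁ q Y₂ R).path 0 1 = p :: (Z₂ ++ [D.w 1]) := rfl
  have h10' : (D.slide Z₁ p Z₂ Y₁ q Y₂ R).path 1 0 = D.u 1 :: Y₁ ++ [q] := rfl
  have two_ne : (2 : Fin 3) ≠ 0 := by decide
  simp only [innerOff, Fin.sum_univ_three]
  rw [h00', h01', h10', h02, h20, slide_path_of_ne_zero one_ne_zero one_ne_zero,
    slide_path_of_ne_zero one_ne_zero two_ne, slide_path_of_ne_zero two_ne one_ne_zero,
    slide_path_of_ne_zero two_ne two_ne, h01, h10]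
  omega

end Slide

/-! ### Ears -/

section Ear

variable {G : SimpleGraph V} {D : K33Data V} {n m : V → V} {E F : List V} {p q x z : V}

theorem apply_not_mem_of_evenPair (hm : m.Involutive) (hmz : m z ≠ z) (hF : Even F.length)
    (hmF : ∀ a b, EvenPair F a b → m a = b) (hnodup : (F ++ [z]).Nodup) : m z ∉ F ++ [z] := by
  simp only [List.mem_append, List.mem_singleton, hmz, or_false]
  intro hmem
  obtain ⟨y, hy⟩ := exists_paired hF hmem
  have hyz : y = z := by
    rcases hy with hy | hy
    · rw [← hmF _ _ hy, hm]
    · exact hm.injective (hmF _ _ hy)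
  exact List.disjoint_of_nodup_append hnodup hy.mem.2 (by simp [hyz])

variable [DecidableEq V]

/-- `IsEar G D n m p E q`: the path `p, E, q` has its ends in `D` and its inner vertices `E` outside
`D`, and its edges alternate between the matchings `m` and `n`, starting and ending in `m`. -/
structure IsEar (G : SimpleGraph V) (D : K33Data V) (n m : V → V) (p : V) (E : List V) (q : V) :
    Prop extends IsOuterMatched D n E where
  left : D.mult p ≠ 0
  right : D.mult q ≠ 0
  apply_eq' : ∀ a b, EvenPair (p :: (E ++ [q])) a b → m a = b
  isChain : (p :: (E ++ [q])).IsChain G.Adj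

theorem IsOuterMatched.append_pair (h : IsOuterMatched D n E) (hn : IsOuterMatching G D n)
    (hx : D.mult x = 0) (hxE : x ∉ E) : IsOuterMatched D n (E ++ [x, n x]) := by
  obtain ⟨hnx, hnn, hadj⟩ := hn x hx
  have hnE : n x ∉ E := fun hE => hxE (hnn ▸ (h.apply_mem hE).1)
  have hnodup : (E ++ [x, n x]).Nodup := by
    rw [List.nodup_append]
    refine ⟨h.nodup, by simpa using hadj.ne, ?_⟩
    rintro a ha b hb rfl
    simp only [List.mem_cons, List.not_mem_nil, or_false] at hb
    rcases hb with rfl | rfl <;> contradiction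
  refine ⟨by simpa [Nat.even_add_one] using h.even_length, fun y => ?_, fun a b hab => ?_⟩
  · have hy : y ∈ E ++ [x, n x] → D.mult y = 0 := by
      simp only [List.mem_append, List.mem_cons, List.not_mem_nil, or_false]
      rintro (hy | rfl | rfl)
      exacts [h.mult_eq_zero_of_mem hy, hx, hnx]
    have hle := h.mult_add_count_le_one y
    have := List.nodup_iff_count_le_one.1 hnodup y
    by_cases hmem : y ∈ E ++ [x, n x]
    · simpa [hy hmem] using this
    · rw [List.count_eq_zero.2 hmem]
      omega
  · rw [evenPair_append h.even_length] at hab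
    rcases hab with hab | ⟨rfl, rfl⟩ | hab
    exacts [h.apply_eq _ _ hab, ⟨rfl, hnn⟩, hab.elim]

theorem IsOuterMatched.isChain (h : IsOuterMatched D n E) {R : V → V → Prop}
    (hE : ∀ a b, EvenPair (p :: (E ++ [q])) a b → m a = b) (hRm : ∀ v, R v (m v))
    (hRn : ∀ v, D.mult v = 0 → R v (n v)) : (p :: (E ++ [q])).IsChain R := by
  refine isChain_of_evenPair (fun a b hab => hE a b hab ▸ hRm a) fun a b hab => ?_
  rw [List.tail_cons, evenPair_append h.even_length, evenPair_singleton, or_false] at hab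
  exact (h.apply_eq a b hab).1 ▸ hRn a (h.mult_eq_zero_of_mem hab.mem.1)

/-- Follow the alternating path until it returns to `D`. -/
theorem IsOuterMatched.exists_isEar [Finite V] (E : List V) (hE : IsOuterMatched D n E)
    (hn : IsOuterMatching G D n) (hm : m.Involutive) (hma : ∀ v, G.Adj v (m v))
    (hp : D.mult p ≠ 0) (hmE : ∀ a b, EvenPair (p :: E) a b → m a = b) :
    ∃ E q, IsEar G D n m p E q := by
  obtain h | ⟨F, z, hF⟩ := List.eq_nil_or_concat' (p :: E)
  · simp at h
  have hFe : Even F.length := by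
    have hl := congrArg List.length hF
    simp only [List.length_cons, List.length_append, List.length_nil] at hl
    have := hE.even_length
    grind
  have hmF : ∀ a b, EvenPair F a b → m a = b := fun a b hab =>
    hmE a b (hF ▸ (evenPair_append hFe _).2 (Or.inl hab))
  have hmFz : ∀ a b, EvenPair (F ++ [z, m z]) a b → m a = b := by
    intro a b hab
    rw [evenPair_append hFe] at hab
    rcases hab with hab | ⟨rfl, rfl⟩ | hab
    exacts [hmF _ _ hab, rfl, hab.elim]
  by_cases hz : D.mult (m z) = 0
  · have hnodup : (F ++ [z]).Nodup := by
      rw [← hF, List.nodup_cons]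
      exact ⟨fun hpE => hp (hE.mult_eq_zero_of_mem hpE), hE.nodup⟩
    have hmem := hF ▸ apply_not_mem_of_evenPair hm (hma z).ne' hFe hmF hnodup
    have hE' := hE.append_pair hn hz fun h => hmem (List.mem_cons_of_mem _ h)
    have : E.length + 2 ≤ Nat.card V := by
      have := Fintype.ofFinite V
      simpa using hE'.nodup.length_le_card
    refine exists_isEar _ hE' hn hm hma hp fun a b hab => hmFz a b ?_
    have heq : p :: (E ++ [m z, n (m z)]) = F ++ [z, m z] ++ [n (m z)] := by
      rw [← List.cons_append, hF]
      simp
    rw [heq, evenPair_append (by simpa [Nat.even_add_one] using hFe)] at hab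
    simpa only [evenPair_singleton, or_false] using hab
  · have hmE' : ∀ a b, EvenPair (p :: (E ++ [m z])) a b → m a = b := by
      intro a b hab
      rw [← List.cons_append, hF, List.append_assoc] at hab
      exact hmFz a b hab
    exact ⟨E, m z, hE, hp, hz, hmE', hE.isChain hmE' hma fun v hv => (hn v hv).2.2⟩
termination_by Nat.card V - E.length
decreasing_by
  simp only [List.length_append, List.length_cons, List.length_nil]
  omega

theorem IsModel.exists_isEar [Finite V] (hD : IsModel G D) (hn : IsOuterMatching G D n)
    (hm : m.Involutive) (hma : ∀ v, G.Adj v (m v)) (hp : D.mult p ≠ 0) :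
    ∃ E q, IsEar G D n m p E q :=
  IsOuterMatched.exists_isEar [] ⟨by simp, by simpa using hD.mult_le_one, by simp⟩ hn hm hma hp
    (by simp)

namespace IsEar

theorem even_append_length (h : IsEar G D n m p E q) : Even (p :: (E ++ [q])).length := by
  simpa [Nat.even_add_one] using h.even_length

theorem reverse (hm : m.Involutive) (h : IsEar G D n m p E q) :
    IsEar G D n m q E.reverse p where
  left := h.right
  right := h.left
  even_length := by simpa using h.even_length
  mult_add_count_le_one x := by simpa using h.mult_add_count_le_one x
  apply_eq a b hab := (h.apply_eq _ _ ((evenPair_reverse h.even_length).1 hab)).symm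
  apply_eq' a b hab := by
    have heq : q :: (E.reverse ++ [p]) = (p :: (E ++ [q])).reverse := by simp
    rw [heq, evenPair_reverse h.even_append_length] at hab
    rw [← h.apply_eq' _ _ hab, hm]
  isChain := by simpa using isChain_adj_reverse h.isChain

theorem perm (h : IsEar G D n m p E q) (σ τ : Equiv.Perm (Fin 3)) :
    IsEar G (D.perm σ τ) n m p E q :=
  ⟨⟨h.even_length, by simpa using h.mult_add_count_le_one, h.apply_eq⟩, by simpa using h.left,
    by simpa using h.right, h.apply_eq', h.isChain⟩

theorem swap (h : IsEar G D n m p E q) : IsEar G D.swap n m p E q :=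
  ⟨⟨h.even_length, by simpa using h.mult_add_count_le_one, h.apply_eq⟩, by simpa using h.left,
    by simpa using h.right, h.apply_eq', h.isChain⟩

theorem mem_iff_of_closed (h : IsEar G D n m p E q) {T : V → Prop} (hTm : ∀ v, T v ↔ T (m v))
    (hTn : ∀ v, D.mult v = 0 → (T v ↔ T (n v))) (hx : x ∈ p :: (E ++ [q])) : T x ↔ T p := by
  have hchain := h.toIsOuterMatched.isChain (R := fun a b => T a ↔ T b) h.apply_eq' hTm hTn
  have : IsTrans V (fun a b => T a ↔ T b) := ⟨fun _ _ _ => Iff.trans⟩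
  rcases List.mem_cons.1 hx with rfl | hx
  · rfl
  · exact ((List.pairwise_cons.1 (List.isChain_iff_pairwise.1 hchain)).1 x hx).symm

theorem not_isModelEdge_left (h : IsEar G D n m p E q) (hE : E ≠ []) :
    ¬ D.IsModelEdge p (m p) := by
  obtain ⟨z, L, rfl⟩ := List.exists_cons_of_ne_nil hE
  rw [h.apply_eq' p z (by simp)]
  exact fun hpz => hpz.mult_ne_zero.2 (h.mult_eq_zero_of_mem (by simp))

theorem not_isModelEdge_right (hm : m.Involutive) (h : IsEar G D n m p E q)
    (hp : ¬ D.IsModelEdge p (m p)) : ¬ D.IsModelEdge q (m q) := by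
  rcases eq_or_ne E [] with rfl | hE
  · have hpq : m p = q := h.apply_eq' p q (by simp)
    rw [← hpq, hm]
    exact fun hq => hp hq.symm
  · exact (h.reverse hm).not_isModelEdge_left (by simpa using hE)

theorem offEdges_eq (h : IsEar G D n m p E q) :
    offEdges m (p :: (E ++ [q])) = offPairs m E := by
  rw [offEdges_eq_offPairs_add m h.even_length, (offPairs_eq_zero_iff m).2 h.apply_eq', zero_add]

end IsEar

end Ear

section Coloring

variable {G : SimpleGraph V}

theorem coloring_eq_not (col : G.Coloring Bool) {x y : V} (h : G.Adj x y) : col y = !col x :=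
  (Bool.not_eq.2 (col.valid h)).symm ▸ by simp

theorem coloring_last_eq_iff (col : G.Coloring Bool) : ∀ {l : List V} {x y : V},
    (x :: (l ++ [y])).IsChain G.Adj → (col y = col x ↔ Odd l.length)
  | [], x, y, h => by
    have hxy : G.Adj x y := by simpa using h
    simp [coloring_eq_not col hxy]
  | z :: l, x, y, h => by
    simp only [List.cons_append, List.isChain_cons_cons] at h
    rw [List.length_cons, Nat.odd_add_one, ← coloring_last_eq_iff col h.2,
      coloring_eq_not col h.1]
    cases col y <;> cases col x <;> simp

theorem coloring_last_eq_not (col : G.Coloring Bool) {l : List V} {x y : V}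
    (h : (x :: (l ++ [y])).IsChain G.Adj) (hl : Even l.length) : col y = !col x := by
  rw [Bool.eq_not, Ne, coloring_last_eq_iff col h, Nat.not_odd_iff_even]
  exact hl

variable [DecidableEq V] {D : K33Data V} {n m : V → V} {i j : Fin 3} {Z₁ Z₂ E : List V}
  {p q x : V}

theorem IsModel.coloring_w (col : G.Coloring Bool) (hD : IsModel G D) (i j : Fin 3) :
    col (D.w j) = !col (D.u i) :=
  coloring_last_eq_not col (hD.isChain i j) (hD.even_inner i j)

theorem IsUSplit.coloring_eq (col : G.Coloring Bool) (hD : IsModel G D)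
    (h : IsUSplit D i j Z₁ x Z₂) : col x = !col (D.w 0) := by
  have hw : col (D.w j) = !col x := by
    have hchain := (List.isChain_split.1 (h.path_eq ▸ hD.isChain i j)).2
    refine coloring_last_eq_not col hchain ?_
    have hl := congrArg List.length h.1
    have := hD.even_inner i j
    have := h.2
    simp only [List.length_cons, List.length_append] at hl
    grind
  rw [hD.coloring_w col i j] at hw
  rw [hD.coloring_w col i 0, hw, Bool.not_not]

theorem IsWSplit.coloring_eq (col : G.Coloring Bool) (hD : IsModel G D)
    (h : IsWSplit D i j Z₁ x Z₂) : col x = col (D.w 0) := by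
  rw [(h.swap hD).coloring_eq col hD.swap, hD.coloring_w col 0 0]
  rfl

theorem IsEar.coloring_eq (col : G.Coloring Bool) (h : IsEar G D n m p E q) : col q = !col p :=
  coloring_last_eq_not col h.isChain h.even_length

theorem IsEar.ne (col : G.Coloring Bool) (h : IsEar G D n m p E q) : p ≠ q := by
  rintro rfl
  exact (Bool.eq_not_self _).1 (h.coloring_eq col)

theorem IsEar.exists_isWSplit (col : G.Coloring Bool) (hD : IsModel G D)
    (h : IsEar G D n m p E q) (hp : IsUSplit D i j Z₁ p Z₂) :
    ∃ i j Y₁ Y₂, IsWSplit D i j Y₁ q Y₂ := by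
  rcases exists_isUSplit_or_isWSplit hD h.right with ⟨_, _, _, _, hq⟩ | hq
  · have := h.coloring_eq col
    rw [hp.coloring_eq col hD, hq.coloring_eq col hD] at this
    exact ((Bool.eq_not_self _).1 this).elim
  · exact hq

theorem IsEar.exists_isUSplit (col : G.Coloring Bool) (hD : IsModel G D)
    (h : IsEar G D n m p E q) (hp : IsWSplit D i j Z₁ p Z₂) :
    ∃ i j Y₁ Y₂, IsUSplit D i j Y₁ q Y₂ := by
  rcases exists_isUSplit_or_isWSplit hD h.right with hq | ⟨_, _, _, _, hq⟩
  · exact hq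
  · have := h.coloring_eq col
    rw [hp.coloring_eq col hD, hq.coloring_eq col hD] at this
    exact ((Bool.eq_not_self _).1 this).elim

end Coloring

/-! ### Absorbing an ear -/

section Detour

variable {l l' S E A B I R : List V} {x y p q a b u w : V} {m : V → V}

/-- `IsDetour l x S y l' p E q`: the segment `x, S, y` of the path `l` is replaced by `p, E, q` in
`l'`. The two segments have the same ends, except that the path may be given a new end there. -/
def IsDetour (l : List V) (x : V) (S : List V) (y : V) (l' : List V) (p : V) (E : List V) (q : V) :
    Prop :=
  ∃ A B, l = A ++ x :: (S ++ y :: B) ∧ l' = A ++ p :: (E ++ q :: B) ∧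
    (A = [] ∨ x = p) ∧ (B = [] ∨ y = q)

theorem exists_eq_append_of_append_eq_cons_concat (h : A ++ p :: (S ++ q :: B) = u :: (I ++ [w])) :
    ∃ L N, I = L ++ S ++ N ∧ A ++ [p] = u :: L ∧ q :: B = N ++ [w] := by
  obtain ⟨L, hL⟩ : ∃ L, A ++ [p] = u :: L := by cases A <;> simp_all
  obtain ⟨N, hN⟩ : ∃ N, q :: B = N ++ [w] := by
    obtain ⟨N, b, hN⟩ := (List.eq_nil_or_concat' (q :: B)).resolve_left (by simp)
    refine ⟨N, ?_⟩
    have heq : (A ++ p :: (S ++ N)) ++ [b] = (u :: I) ++ [w] := by simpa [hN] using h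
    rw [hN, (List.append_inj' heq rfl).2]
  have heq : (A ++ [p]) ++ S ++ (q :: B) = u :: (I ++ [w]) := by simpa using h
  rw [hL, hN, ← List.append_assoc, ← List.cons_append] at heq
  exact ⟨L, N, (List.cons_eq_cons.1 (List.append_inj' heq rfl).1).2.symm, hL, hN⟩

namespace IsDetour

theorem infix_left (h : IsDetour l x S y l' p E q) : x :: (S ++ [y]) <:+: l := by
  obtain ⟨A, B, rfl, -⟩ := h
  exact ⟨A, B, by simp⟩

theorem infix_right (h : IsDetour l x S y l' p E q) : p :: (E ++ [q]) <:+: l' := by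
  obtain ⟨A, B, -, rfl, -⟩ := h
  exact ⟨A, B, by simp⟩

theorem isChain {r : V → V → Prop} (h : IsDetour l x S y l' p E q) (hl : l.IsChain r)
    (hE : (p :: (E ++ [q])).IsChain r) : l'.IsChain r := by
  obtain ⟨A, B, rfl, rfl, hA, hB⟩ := h
  obtain ⟨hA', hB'⟩ := List.isChain_split.1 hl
  replace hB' := (List.isChain_split (l₁ := x :: S).1 hB').2
  refine List.isChain_split.2 ⟨?_, List.isChain_split (l₁ := p :: E).2 ⟨hE, ?_⟩⟩
  · rcases hA with rfl | rfl
    exacts [List.isChain_singleton p, hA']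
  · rcases hB with rfl | rfl
    exacts [List.isChain_singleton q, hB']

theorem offEdges_add [DecidableEq V] (h : IsDetour l x S y l' p E q) (m : V → V) :
    offEdges m l' + offEdges m (x :: (S ++ [y])) =
      offEdges m l + offEdges m (p :: (E ++ [q])) := by
  obtain ⟨A, B, rfl, rfl, hA, hB⟩ := h
  have hA' : offEdges m (A ++ [x]) = offEdges m (A ++ [p]) := by
    rcases hA with rfl | rfl <;> simp
  have hB' : offEdges m (y :: B) = offEdges m (q :: B) := by
    rcases hB with rfl | rfl <;> simp
  have hS := offEdges_append m (x :: S) y B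
  have hE := offEdges_append m (p :: E) q B
  simp only [List.cons_append] at hS hE
  have hl := offEdges_append m A x (S ++ y :: B)
  have hl' := offEdges_append m A p (E ++ q :: B)
  omega

theorem count_add [DecidableEq V] (h : IsDetour (u :: (I ++ [w])) x S y (a :: (R ++ [b])) p E q)
    (z : V) : R.count z + S.count z = I.count z + E.count z := by
  obtain ⟨A, B, hl, hl', hA, hB⟩ := h
  obtain ⟨L, N, rfl, hL, hN⟩ := exists_eq_append_of_append_eq_cons_concat hl.symm
  obtain ⟨L', N', rfl, hL', hN'⟩ := exists_eq_append_of_append_eq_cons_concat hl'.symm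
  have hLL' : L = L' := by
    rcases hA with rfl | rfl <;> simp_all
  have hNN' : N = N' := by
    rcases hB with rfl | rfl
    · cases N <;> cases N' <;> simp_all
    · exact (List.append_inj' (hN.symm.trans hN') rfl).1
  subst hLL' hNN'
  simp only [List.count_append]
  omega

theorem even_length (h : IsDetour l x S y l' p E q) (hl : Even l.length) (hS : Even S.length)
    (hE : Even E.length) : Even l'.length := by
  obtain ⟨A, B, rfl, rfl, -⟩ := h
  simp only [List.length_append, List.length_cons] at hl ⊢
  grind

end IsDetour

end Detour

section Absorption

variable [DecidableEq V] {G : SimpleGraph V} {D D' : K33Data V} {n n' m : V → V}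
  {E S R Z₁ Z₂ Y₁ Y₂ A B : List V} {p' q' p q x y : V}

/-- `IsAbsorption G D n p E q D' n'`: the bisubdivision `D'` with outer matching `n'` is obtained
from `D` and `n` by making the ear `p, E, q` a part of the bisubdivision. -/
structure IsAbsorption (G : SimpleGraph V) (D : K33Data V) (n : V → V) (p : V) (E : List V)
    (q : V) (D' : K33Data V) (n' : V → V) : Prop where
  isModel : IsModel G D'
  isOuterMatching : IsOuterMatching G D' n'
  mult_le : ∀ x, D'.mult x ≤ D.mult x + E.count x
  apply_eq : ∀ v, D.mult v = 0 → v ∉ E → n' v = n v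
  isInfix : ∃ i j, p :: (E ++ [q]) <:+: D'.path i j ∨ (p :: (E ++ [q])).reverse <:+: D'.path i j

namespace IsAbsorption

theorem of_perm {σ τ : Equiv.Perm (Fin 3)} (h : IsAbsorption G (D.perm σ τ) n p E q D' n') :
    IsAbsorption G D n p E q D' n' :=
  ⟨h.isModel, h.isOuterMatching, by simpa using h.mult_le, by simpa using h.apply_eq, h.isInfix⟩

theorem of_swap (h : IsAbsorption G D.swap n p E q D' n') : IsAbsorption G D n p E q D' n' :=
  ⟨h.isModel, h.isOuterMatching, by simpa using h.mult_le, by simpa using h.apply_eq, h.isInfix⟩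

theorem of_reverse (h : IsAbsorption G D n q E.reverse p D' n') :
    IsAbsorption G D n p E q D' n' := by
  refine ⟨h.isModel, h.isOuterMatching, by simpa using h.mult_le, by simpa using h.apply_eq, ?_⟩
  obtain ⟨i, j, h⟩ := h.isInfix
  exact ⟨i, j, by simpa [or_comm] using h⟩

theorem isModelEdge (h : IsAbsorption G D n p E q D' n') {a b : V}
    (hab : IsConsecutive (p :: (E ++ [q])) a b) : D'.IsModelEdge a b := by
  obtain ⟨i, j, hij | hij⟩ := h.isInfix
  · exact ⟨i, j, hab.mono hij⟩
  · exact ⟨i, j, (isConsecutive_reverse.2 hab).mono hij⟩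

end IsAbsorption

theorem offPairs_pos_of_not_isModelEdge_left {i j : Fin 3} (hl : p :: (S ++ [q]) <:+: D.path i j)
    (h : ¬ D.IsModelEdge p (m p)) : 0 < offPairs m (p :: (S ++ [q])) := by
  rw [Nat.pos_iff_ne_zero, Ne, offPairs_eq_zero_iff]
  obtain ⟨z, L, hz⟩ := List.exists_cons_of_ne_nil (l := S ++ [q]) (by simp)
  intro hm
  rw [hz] at hl hm
  rw [hm p z (Or.inl ⟨rfl, rfl⟩)] at h
  exact h ⟨i, j, Or.inl (List.IsInfix.trans ⟨[], L, rfl⟩ hl)⟩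

theorem offPairs_pos_of_not_isModelEdge_right (hm : m.Involutive) {i j : Fin 3}
    (hl : p :: (S ++ [q]) <:+: D.path i j) (hS : Even S.length) (h : ¬ D.IsModelEdge q (m q)) :
    0 < offPairs m (p :: (S ++ [q])) := by
  have heq : (p :: (S ++ [q])).reverse = q :: (S.reverse ++ [p]) := by simp
  rw [← offPairs_reverse hm (by simpa [Nat.even_add_one] using hS), heq]
  refine offPairs_pos_of_not_isModelEdge_left (D := D.swap) (i := j) (j := i) ?_ (by simpa using h)
  rwa [← heq, K33Data.path_swap, List.reverse_infix]

theorem IsEar.isAbsorption_slide [Fintype V] (hD : IsModel G D) (hn : IsOuterMatching G D n)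
    (hm : m.Involutive) (h : IsEar G D n m p E q) (hp : IsUSplit D 0 1 Z₁ p' Z₂)
    (hq : IsWSplit D 1 0 Y₁ q' Y₂) (hR : IsDetour (D.path 0 0) x S y (p' :: (R ++ [q'])) p E q)
    (hS : Even S.length) :
    IsAbsorption G D n p E q (D.slide Z₁ p' Z₂ Y₁ q' Y₂ R) (rematch n S) ∧
      potential m (D.slide Z₁ p' Z₂ Y₁ q' Y₂ R) (rematch n S) + 2 * offPairs m (x :: (S ++ [y])) =
        potential m D n := by
  have hSc : S.IsChain G.Adj :=
    (hD.isChain 0 0).infix (List.IsInfix.trans ⟨[x], [y], by simp⟩ hR.infix_left)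
  have hRe : Even R.length := by
    simpa [Nat.even_add_one] using hR.even_length (hD.even_path 0 0) hS h.even_length
  have hex : IsExchange G D (D.slide Z₁ p' Z₂ Y₁ q' Y₂ R) n E S := by
    refine ⟨h.toIsOuterMatched, hS, hSc, fun z => ?_⟩
    have := mult_slide (R := R) hp hq z
    have := hR.count_add z
    omega
  refine ⟨⟨hD.slide hp hq (hR.isChain (hD.isChain 0 0) h.isChain) hRe hex,
    hex.isOuterMatching hn, fun z => ?_, fun v => hex.rematch_apply, 0, 0,
    Or.inl hR.infix_right⟩, ?_⟩
  · have := hex.mult_add_count z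
    omega
  · have hinner := innerOff_slide (R := R) hm hp hq
    have houter := hex.outerOff_rematch hm
    have hdetour := hR.offEdges_add m
    rw [h.offEdges_eq] at hdetour
    rw [offEdges_eq_offPairs_add m hS] at hdetour
    simp only [potential]
    omega

theorem IsEar.exists_isAbsorption_of_path [Fintype V] (hD : IsModel G D)
    (hn : IsOuterMatching G D n) (hm : m.Involutive) (h : IsEar G D n m p E q)
    (hp : ¬ D.IsModelEdge p (m p)) (hpath : D.path 0 0 = A ++ p :: (S ++ q :: B))
    (hS : Even S.length) :
    ∃ D' n', IsAbsorption G D n p E q D' n' ∧ potential m D' n' < potential m D n := by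
  obtain ⟨L, N, -, hL, hN⟩ := exists_eq_append_of_append_eq_cons_concat (hpath.symm.trans rfl)
  have hdetour : IsDetour (D.path 0 0) p S q (D.u 0 :: (L ++ E ++ N ++ [D.w 0])) p E q := by
    refine ⟨A, B, hpath, ?_, Or.inr rfl, Or.inr rfl⟩
    rw [hN, List.append_assoc, List.append_assoc, ← List.cons_append, ← hL]
    simp
  obtain ⟨h1, h2⟩ := h.isAbsorption_slide hD hn hm (Z₁ := []) (Z₂ := D.inner 0 1)
    (Y₁ := D.inner 1 0) (Y₂ := []) ⟨rfl, by simp⟩ ⟨rfl, hD.even_inner 1 0⟩ hdetour hS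
  have := offPairs_pos_of_not_isModelEdge_left hdetour.infix_left hp
  exact ⟨_, _, h1, by omega⟩

theorem exists_path_eq_of_isUSplit_of_isWSplit (hD : IsModel G D) {i j : Fin 3} (hpq : p ≠ q)
    (hp : IsUSplit D i j Z₁ p Z₂) (hq : IsWSplit D i j Y₁ q Y₂) :
    ∃ A S B, (D.path i j = A ++ p :: (S ++ q :: B) ∨ D.path i j = A ++ q :: (S ++ p :: B)) ∧
      Even S.length := by
  have heq := hp.path_eq.symm.trans hq.path_eq
  have heven := hD.even_path i j
  rw [hp.path_eq] at heven
  have hZ := hp.2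
  have hY := hq.2
  rcases List.append_eq_append_iff.1 heq with ⟨S, h1, h2⟩ | ⟨S, h1, h2⟩
  · cases S with
    | nil => simp_all
    | cons a S =>
      obtain ⟨rfl, -⟩ := List.cons_eq_cons.1 h2
      refine ⟨Z₁, S, Y₂, Or.inl (by rw [hp.path_eq, h2, List.cons_append]), ?_⟩
      have := congrArg List.length h1
      simp only [List.length_append, List.length_cons] at this
      grind
  · cases S with
    | nil => simp_all
    | cons a S =>
      obtain ⟨rfl, -⟩ := List.cons_eq_cons.1 h2
      refine ⟨D.u i :: Y₁, S, Z₂ ++ [D.w j], Or.inr (by rw [hq.path_eq, h2]; simp), ?_⟩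
      have := congrArg List.length h1
      simp only [List.length_append, List.length_cons] at this
      grind

theorem IsEar.exists_isAbsorption_of_same_path [Fintype V] (hD : IsModel G D)
    (hn : IsOuterMatching G D n) (hm : m.Involutive) (h : IsEar G D n m p E q) (hpq : p ≠ q)
    (hpm : ¬ D.IsModelEdge p (m p)) (hp : IsUSplit D 0 0 Z₁ p Z₂) (hq : IsWSplit D 0 0 Y₁ q Y₂) :
    ∃ D' n', IsAbsorption G D n p E q D' n' ∧ potential m D' n' < potential m D n := by
  obtain ⟨A, S, B, hpath | hpath, hS⟩ := exists_path_eq_of_isUSplit_of_isWSplit hD hpq hp hq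
  · exact h.exists_isAbsorption_of_path hD hn hm hpm hpath hS
  · obtain ⟨D', n', h1, h2⟩ := (h.reverse hm).exists_isAbsorption_of_path hD hn hm
      (h.not_isModelEdge_right hm hpm) hpath hS
    exact ⟨D', n', h1.of_reverse, h2⟩

theorem IsEar.exists_isAbsorption_of_same_row [Fintype V] (hD : IsModel G D)
    (hn : IsOuterMatching G D n) (hm : m.Involutive) (h : IsEar G D n m p E q)
    (hpm : ¬ D.IsModelEdge p (m p)) (hp : IsUSplit D 0 1 Z₁ p Z₂) (hq : IsWSplit D 0 0 Y₁ q Y₂) :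
    ∃ D' n', IsAbsorption G D n p E q D' n' ∧ potential m D' n' < potential m D n := by
  obtain ⟨K, hK, -⟩ := hq.exists_eq_concat
  have hdetour : IsDetour (D.path 0 0) (D.u 0) Y₁ q (p :: ((E ++ K) ++ [D.w 0])) p E q :=
    ⟨[], Y₂, hq.path_eq, by rw [hK]; simp, Or.inl rfl, Or.inr rfl⟩
  obtain ⟨h1, h2⟩ := h.isAbsorption_slide hD hn hm (Y₁ := D.inner 1 0) (Y₂ := []) hp
    ⟨rfl, hD.even_inner 1 0⟩ hdetour hq.2
  have := offPairs_pos_of_not_isModelEdge_right hm hdetour.infix_left hq.2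
    (h.not_isModelEdge_right hm hpm)
  exact ⟨_, _, h1, by omega⟩

theorem IsEar.exists_isAbsorption_of_same_column [Fintype V] (hD : IsModel G D)
    (hn : IsOuterMatching G D n) (hm : m.Involutive) (h : IsEar G D n m p E q)
    (hpm : ¬ D.IsModelEdge p (m p)) (hp : IsUSplit D 0 0 Z₁ p Z₂) (hq : IsWSplit D 1 0 Y₁ q Y₂) :
    ∃ D' n', IsAbsorption G D n p E q D' n' ∧ potential m D' n' < potential m D n := by
  obtain ⟨D', n', h1, h2⟩ := (h.reverse hm).swap.exists_isAbsorption_of_same_row hD.swap hn.swap hm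
    (by simpa using h.not_isModelEdge_right hm hpm) (hq.swap hD) (hp.swap hD)
  exact ⟨D', n', h1.of_swap.of_reverse, by rwa [potential_swap hm] at h2⟩

theorem IsEar.isAbsorption_slide_inner [Fintype V] (hD : IsModel G D) (hn : IsOuterMatching G D n)
    (hm : m.Involutive) (h : IsEar G D n m p E q) (hp : IsUSplit D 0 1 Z₁ p Z₂)
    (hq : IsWSplit D 1 0 Y₁ q Y₂) :
    IsAbsorption G D n p E q (D.slide Z₁ p Z₂ Y₁ q Y₂ E) (rematch n (D.inner 0 0)) ∧
      potential m (D.slide Z₁ p Z₂ Y₁ q Y₂ E) (rematch n (D.inner 0 0)) +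
        2 * offPairs m (D.path 0 0) = potential m D n :=
  h.isAbsorption_slide hD hn hm hp hq ⟨[], [], rfl, rfl, Or.inl rfl, Or.inl rfl⟩
    (hD.even_inner 0 0)

theorem exists_perm_zero_eq (i : Fin 3) : ∃ σ : Equiv.Perm (Fin 3), σ 0 = i :=
  ⟨Equiv.swap 0 i, by simp⟩

theorem exists_perm_zero_one_eq {i j : Fin 3} (h : i ≠ j) :
    ∃ σ : Equiv.Perm (Fin 3), σ 0 = i ∧ σ 1 = j := by
  revert i j
  decide

theorem IsEar.exists_isAbsorption_lt [Fintype V] (hD : IsModel G D) (hn : IsOuterMatching G D n)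
    (hm : m.Involutive) (h : IsEar G D n m p E q) (hpq : p ≠ q) (hpm : ¬ D.IsModelEdge p (m p))
    {i j k l : Fin 3} (hp : IsUSplit D i j Z₁ p Z₂) (hq : IsWSplit D k l Y₁ q Y₂)
    (hijkl : i = k ∨ j = l) :
    ∃ D' n', IsAbsorption G D n p E q D' n' ∧ potential m D' n' < potential m D n := by
  have key (σ τ : Equiv.Perm (Fin 3)) : (∃ D' n', IsAbsorption G (D.perm σ τ) n p E q D' n' ∧
      potential m D' n' < potential m (D.perm σ τ) n) →
      ∃ D' n', IsAbsorption G D n p E q D' n' ∧ potential m D' n' < potential m D n := by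
    rintro ⟨D', n', h1, h2⟩
    exact ⟨D', n', h1.of_perm, by rwa [potential_perm] at h2⟩
  rcases eq_or_ne i k with rfl | hik
  · obtain ⟨σ, hσ⟩ := exists_perm_zero_eq i
    rcases eq_or_ne j l with rfl | hjl
    · obtain ⟨τ, hτ⟩ := exists_perm_zero_eq j
      exact key σ τ <| (h.perm σ τ).exists_isAbsorption_of_same_path (hD.perm σ τ) (hn.perm σ τ) hm
        hpq (by simpa) (hp.perm hσ hτ) (hq.perm hσ hτ)
    · obtain ⟨τ, hτ₀, hτ₁⟩ := exists_perm_zero_one_eq hjl.symm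
      exact key σ τ <| (h.perm σ τ).exists_isAbsorption_of_same_row (hD.perm σ τ) (hn.perm σ τ) hm
        (by simpa) (hp.perm hσ hτ₁) (hq.perm hσ hτ₀)
  · obtain rfl := hijkl.resolve_left hik
    obtain ⟨σ, hσ₀, hσ₁⟩ := exists_perm_zero_one_eq hik
    obtain ⟨τ, hτ⟩ := exists_perm_zero_eq j
    exact key σ τ <| (h.perm σ τ).exists_isAbsorption_of_same_column (hD.perm σ τ) (hn.perm σ τ) hm
      (by simpa) (hp.perm hσ₀ hτ) (hq.perm hσ₁ hτ)

theorem IsEar.exists_isAbsorption_of_isUSplit [Fintype V] (col : G.Coloring Bool)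
    (hD : IsModel G D) (hn : IsOuterMatching G D n) (hm : m.Involutive)
    (h : IsEar G D n m p E q) (hpm : ¬ D.IsModelEdge p (m p)) {i j : Fin 3}
    (hp : IsUSplit D i j Z₁ p Z₂) :
    ∃ D' n', IsAbsorption G D n p E q D' n' ∧ potential m D' n' ≤ potential m D n := by
  obtain ⟨k, l, Y₁, Y₂, hq⟩ := h.exists_isWSplit col hD hp
  by_cases hijkl : i = k ∨ j = l
  · obtain ⟨D', n', h1, h2⟩ := h.exists_isAbsorption_lt hD hn hm (h.ne col) hpm hp hq hijkl
    exact ⟨D', n', h1, h2.le⟩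
  · push Not at hijkl
    obtain ⟨σ, hσ₀, hσ₁⟩ := exists_perm_zero_one_eq hijkl.1
    obtain ⟨τ, hτ₀, hτ₁⟩ := exists_perm_zero_one_eq hijkl.2.symm
    obtain ⟨h1, h2⟩ := (h.perm σ τ).isAbsorption_slide_inner (hD.perm σ τ) (hn.perm σ τ) hm
      (hp.perm hσ₀ hτ₁) (hq.perm hσ₁ hτ₀)
    rw [potential_perm] at h2
    exact ⟨_, _, h1.of_perm, by omega⟩

theorem IsEar.exists_isAbsorption [Fintype V] (col : G.Coloring Bool) (hD : IsModel G D)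
    (hn : IsOuterMatching G D n) (hm : m.Involutive) (h : IsEar G D n m p E q)
    (hpm : ¬ D.IsModelEdge p (m p)) :
    ∃ D' n', IsAbsorption G D n p E q D' n' ∧ potential m D' n' ≤ potential m D n := by
  rcases exists_isUSplit_or_isWSplit hD h.left with ⟨i, j, Z₁, Z₂, hp⟩ | ⟨i, j, Z₁, Z₂, hp⟩
  · exact h.exists_isAbsorption_of_isUSplit col hD hn hm hpm hp
  · obtain ⟨k, l, Y₁, Y₂, hq⟩ := h.exists_isUSplit col hD hp
    obtain ⟨D', n', h1, h2⟩ := (h.reverse hm).exists_isAbsorption_of_isUSplit col hD hn hm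
      (h.not_isModelEdge_right hm hpm) hq
    exact ⟨D', n', h1.of_reverse, h2⟩

end Absorption

/-! ### Minimal models -/

section Walkout

variable {A B K X Y X' Y' : List V} {x y a b a' b' c z : V} {m : V → V}

theorem IsConsecutive.eq_or_eq_of_nodup (hn : (A ++ x :: c :: y :: B).Nodup)
    (h : IsConsecutive (A ++ x :: c :: y :: B) c z) : z = x ∨ z = y := by
  have hn' := (List.nodup_append.1 hn).2.1
  simp only [List.nodup_cons, List.mem_cons] at hn'
  rcases h.append with h | h
  · have := List.disjoint_of_nodup_append hn (a := c)
    have := h.mem.1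
    simp_all
  · rcases IsConsecutive.append (l₁ := [x, c]) (c := y) h with h | h
    · replace h : IsConsecutive [x, c, y] c z := h
      simp [IsConsecutive, List.infix_cons_iff] at h
      grind
    · have := h.mem.1
      simp_all

theorem exists_not_isConsecutive (hm : m.Involutive) : ∀ {K A B : List V} {x y : V},
    (A ++ x :: (K ++ y :: B)).Nodup → Odd K.length → K.head? ≠ some (m x) → m y ∉ K →
    ∃ K₁ c K₂, K = K₁ ++ c :: K₂ ∧ Even K₁.length ∧
      ¬ IsConsecutive (A ++ x :: (K ++ y :: B)) c (m c)
  | [], _, _, _, _, _, h, _, _ => by simp at h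
  | [c], A, B, x, y, hn, _, hx, hy => by
    refine ⟨[], c, [], rfl, by simp, fun h => ?_⟩
    rcases h.eq_or_eq_of_nodup hn with h | h <;> simp [← h, hm c] at hx hy
  | c :: d :: K, A, B, x, y, hn, hK, hx, hy => by
    by_cases hcd : m c = d
    · have hc : c ∉ K := by
        intro hc
        simp [List.nodup_append, hc] at hn
      have heq : (A ++ [x, c]) ++ d :: (K ++ y :: B) = A ++ x :: (c :: d :: K ++ y :: B) := by simp
      obtain ⟨K₁, z, K₂, rfl, hK₁, hz⟩ := exists_not_isConsecutive hm (K := K) (heq ▸ hn)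
        (by simpa [Nat.odd_add_one] using hK)
        (by rw [← hcd, hm]; exact fun h => hc (List.mem_of_head? h)) (by simp_all)
      exact ⟨c :: d :: K₁, z, K₂, rfl, by simpa [Nat.even_add_one] using hK₁, heq ▸ hz⟩
    · refine ⟨[], c, d :: K, rfl, by simp, fun h => ?_⟩
      rcases h.eq_or_eq_of_nodup hn with h | h
      · simp [← h, hm c] at hx
      · exact hcd h

theorem exists_eq_append_of_append_pair_eq_append_pair (hn : (X ++ a :: b :: Y).Nodup)
    (h : X ++ a :: b :: Y = X' ++ a' :: b' :: Y') (hX : Even X.length) (hX' : Odd X'.length)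
    (hab : b = a' → b' = a) (hab' : b' = a → b = a') :
    (∃ K, Odd K.length ∧ X' = X ++ a :: b :: K ∧ Y = K ++ a' :: b' :: Y') ∨
      ∃ K, Odd K.length ∧ X = X' ++ a' :: b' :: K ∧ Y' = K ++ a :: b :: Y := by
  have hn' := h ▸ hn
  rcases List.append_eq_append_iff.1 h with ⟨_ | ⟨_, _ | ⟨_, K⟩⟩, rfl, h2⟩ |
    ⟨_ | ⟨_, _ | ⟨_, K⟩⟩, rfl, h2⟩
  · simp_all [← Nat.not_even_iff_odd]
  · simp_all [List.nodup_append]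
  · refine Or.inl ⟨K, ?_⟩
    simp_all
    grind
  · simp_all [← Nat.not_even_iff_odd]
  · simp_all [List.nodup_append]
  · refine Or.inr ⟨K, ?_⟩
    simp_all
    grind

end Walkout

namespace K33Data

theorem count_inner_add_count_path_le [DecidableEq V] (D : K33Data V) {i j i' j' : Fin 3}
    (h : (i, j) ≠ (i', j')) (x : V) :
    (D.inner i j).count x + (D.path i' j').count x ≤ D.mult x := by
  rw [count_path]
  simp only [mult, Fin.sum_univ_three]
  fin_cases i <;> fin_cases j <;> fin_cases i' <;> fin_cases j' <;>
    first
    | exact absurd rfl h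
    | simp only [Fin.zero_eta, Fin.mk_one, Fin.reduceFinMk]; omega

theorem count_append_w_add_count_append_w_le [DecidableEq V] (D : K33Data V) (i : Fin 3)
    {j k : Fin 3} (h : j ≠ k) (x : V) :
    (D.inner i j ++ [D.w j]).count x + (D.inner i k ++ [D.w k]).count x ≤ D.mult x := by
  simp only [mult, Fin.sum_univ_three, List.count_append]
  fin_cases i <;> fin_cases j <;> fin_cases k <;>
    first
    | exact absurd rfl h
    | simp only [Fin.zero_eta, Fin.mk_one, Fin.reduceFinMk]; omega

end K33Data

section JointlyMatched

variable {G : SimpleGraph V} {D : K33Data V} {n m : V → V} {i j : Fin 3} {t : Bool}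
  {a' b' a b : V}

/-- `PathPaired D i j t a b`: the edge `ab` belongs to the perfect matching of the path from `u i`
to `w j` (if `t` is true), or to the perfect matching of the inner part of this path (otherwise). -/
def PathPaired (D : K33Data V) (i j : Fin 3) (t : Bool) (a b : V) : Prop :=
  Paired (cond t (D.path i j) (D.inner i j)) a b

theorem PathPaired.symm (h : PathPaired D i j t a b) : PathPaired D i j t b a := Paired.symm h

theorem PathPaired.of_perm {σ τ : Equiv.Perm (Fin 3)} (h : PathPaired D (σ i) (τ j) t a b) :
    PathPaired (D.perm σ τ) i j t a b := h

theorem PathPaired.slide {Z₁ Z₂ Y₁ Y₂ R : List V} {p q : V} (h : PathPaired D i 1 t a b)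
    (hi : i ≠ 0) : PathPaired (D.slide Z₁ p Z₂ Y₁ q Y₂ R) i 1 t a b := by
  fin_cases i
  · exact absurd rfl hi
  all_goals exact h

theorem PathPaired.isModelEdge (h : PathPaired D i j t a b) : D.IsModelEdge a b := by
  refine ⟨i, j, ?_⟩
  cases t
  · exact (Paired.isConsecutive h).mono (D.inner_infix_path i j)
  · exact Paired.isConsecutive h

variable [DecidableEq V]

/-- `Matched D n π a b`: the edge `ab` belongs to the perfect matching that consists of the outer
matching `n` and of the perfect matching of `D` in which `u i` and `w (π i)` are matched inside the
path joining them. -/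
def Matched (D : K33Data V) (n : V → V) (π : Equiv.Perm (Fin 3)) (a b : V) : Prop :=
  (D.mult a = 0 ∧ n a = b) ∨ ∃ i j, PathPaired D i j (decide (π i = j)) a b

/-- `JointlyMatched G a b a' b'`: some bisubdivision of `K33` in `G` and some perfect matching of
`G` that restricts to a perfect matching of it contain both edges `ab` and `a'b'`. -/
def JointlyMatched (G : SimpleGraph V) (a b a' b' : V) : Prop :=
  ∃ D n π, IsModel G D ∧ IsOuterMatching G D n ∧ Matched D n π a b ∧ Matched D n π a' b'

theorem PathPaired.swap (hD : IsModel G D) (h : PathPaired D i j t a b) :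
    PathPaired D.swap j i t a b := by
  cases t
  · exact (paired_reverse (hD.even_inner i j)).2 h
  · simpa only [PathPaired, cond_true, K33Data.path_swap, paired_reverse (hD.even_path i j)]

theorem IsModel.exists_pathPaired_of_infix {L : List V} (hD : IsModel G D)
    (h : L <:+: D.path i j) (hL : Even L.length) :
    ∃ t, ∀ a b, Paired L a b → PathPaired D i j t a b := by
  obtain ⟨X, Y, h⟩ := h
  have paired {X Y : List V} {a b : V} (hX : Even X.length) (hab : Paired L a b) :
      Paired (X ++ L ++ Y) a b := by
    rw [List.append_assoc, paired_append hX, paired_append hL]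
    exact Or.inr (Or.inl hab)
  rcases Nat.even_or_odd X.length with hX | hX
  · exact ⟨true, fun a b hab => by simpa only [PathPaired, cond_true, ← h] using paired hX hab⟩
  · have hl := h ▸ hD.even_path i j
    obtain ⟨_, X, rfl⟩ := List.exists_cons_of_ne_nil (l := X) (by rintro rfl; simp at hX)
    have hY : Y ≠ [] := by
      rintro rfl
      simp only [List.length_append, List.length_cons, List.length_nil] at hX hl
      grind
    obtain ⟨Y, w, rfl⟩ := (List.eq_nil_or_concat' Y).resolve_left hY
    have hI : D.inner i j = X ++ L ++ Y := by
      have h' : X ++ L ++ Y ++ [w] = D.inner i j ++ [D.w j] := by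
        simpa using (List.cons.inj h).2
      exact (List.append_inj' h'.symm rfl).1
    have hX' : Even X.length := by simpa [Nat.odd_add_one] using hX
    exact ⟨false, fun a b hab => by simpa only [PathPaired, cond_false, hI] using paired hX' hab⟩

theorem IsModel.isModelEdge_iff (hD : IsModel G D) :
    D.IsModelEdge a b ↔ ∃ i j t, PathPaired D i j t a b := by
  refine ⟨fun ⟨i, j, h⟩ => ⟨i, j, ?_⟩, fun ⟨_, _, _, h⟩ => h.isModelEdge⟩
  rcases h with h | h
  · exact (hD.exists_pathPaired_of_infix h (by simp)).imp fun _ ht =>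
      ht a b (Or.inl (Or.inl ⟨rfl, rfl⟩))
  · exact (hD.exists_pathPaired_of_infix h (by simp)).imp fun _ ht =>
      ht a b (Or.inr (Or.inl ⟨rfl, rfl⟩))

theorem Matched.symm {π : Equiv.Perm (Fin 3)} (hn : IsOuterMatching G D n)
    (h : Matched D n π a b) : Matched D n π b a := by
  rcases h with ⟨ha, rfl⟩ | ⟨i, j, h⟩
  · exact Or.inl ⟨(hn a ha).1, (hn a ha).2.1⟩
  · exact Or.inr ⟨i, j, h.symm⟩

theorem JointlyMatched.symm_left (h : JointlyMatched G a b a' b') : JointlyMatched G b a a' b' := by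
  obtain ⟨D, n, π, hD, hn, h, h'⟩ := h
  exact ⟨D, n, π, hD, hn, h.symm hn, h'⟩

theorem JointlyMatched.comm (h : JointlyMatched G a b a' b') : JointlyMatched G a' b' a b := by
  obtain ⟨D, n, π, hD, hn, h, h'⟩ := h
  exact ⟨D, n, π, hD, hn, h', h⟩

theorem JointlyMatched.symm_right (h : JointlyMatched G a b a' b') : JointlyMatched G a b b' a' :=
  h.comm.symm_left.comm

theorem IsModel.not_mem_path {i' j' : Fin 3} {x : V} (hD : IsModel G D)
    (h : (i, j) ≠ (i', j')) (hx : x ∈ D.inner i j) : x ∉ D.path i' j' := by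
  intro hx'
  have := D.count_inner_add_count_path_le h x
  have := hD.mult_le_one x
  have := List.count_pos_iff.2 hx
  have := List.count_pos_iff.2 hx'
  omega

theorem IsModel.exists_not_isModelEdge (hD : IsModel G D) (hm : m.Involutive) {A K B : List V}
    {x y : V} (h : D.path i j = A ++ x :: (K ++ y :: B)) (hK : Odd K.length)
    (hx : K.head? ≠ some (m x)) (hy : m y ∉ K) :
    ∃ K₁ c K₂, K = K₁ ++ c :: K₂ ∧ Even K₁.length ∧ Even K₂.length ∧ ¬ D.IsModelEdge c (m c) := by
  obtain ⟨K₁, c, K₂, rfl, hK₁, hc⟩ := exists_not_isConsecutive hm (h ▸ hD.nodup_path i j) hK hx hy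
  refine ⟨K₁, c, K₂, rfl, hK₁, ?_, ?_⟩
  · simp only [List.length_append, List.length_cons] at hK
    grind
  · rintro ⟨i', j', h'⟩
    rw [← h] at hc
    have hij : (i, j) ≠ (i', j') := by rintro ⟨⟩; exact hc h'
    obtain ⟨L, N, hI, -⟩ := exists_eq_append_of_append_eq_cons_concat h.symm
    exact hD.not_mem_path hij (by simp [hI]) h'.mem.1

end JointlyMatched

section IsMinimal

variable [Fintype V] [DecidableEq V] {G : SimpleGraph V} {D : K33Data V} {n m : V → V}
  {i j k l : Fin 3} {Z₁ Z₂ Y₁ Y₂ E : List V} {a' b' p q a b : V}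

/-- `IsMinimal G m D n`: among all bisubdivisions of `K33` in `G` with an outer matching, `D` and
`n` have the fewest edges outside `m`. -/
structure IsMinimal (G : SimpleGraph V) (m : V → V) (D : K33Data V) (n : V → V) : Prop where
  isModel : IsModel G D
  isOuterMatching : IsOuterMatching G D n
  le : ∀ D' n', IsModel G D' → IsOuterMatching G D' n' → potential m D n ≤ potential m D' n'

theorem IsMinimal.swap (hm : m.Involutive) (h : IsMinimal G m D n) : IsMinimal G m D.swap n :=
  ⟨h.isModel.swap, h.isOuterMatching.swap, by simpa only [potential_swap hm] using h.le⟩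

theorem IsMinimal.perm (h : IsMinimal G m D n) (σ τ : Equiv.Perm (Fin 3)) :
    IsMinimal G m (D.perm σ τ) n :=
  ⟨h.isModel.perm σ τ, h.isOuterMatching.perm σ τ, by simpa only [potential_perm] using h.le⟩

/-- `MinimalAbsorption G m D n Z₁ p Z₂ E Y₁ q Y₂`: the ear with inner vertices `E` joins the vertex
`p` of `path 0 1` to the vertex `q` of `path 1 0`, and sliding `D` along this ear leads from one
minimal bisubdivision to another one. -/
structure MinimalAbsorption (G : SimpleGraph V) (m : V → V) (D : K33Data V) (n : V → V)
    (Z₁ : List V) (p : V) (Z₂ E Y₁ : List V) (q : V) (Y₂ : List V) : Prop where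
  isEar : IsEar G D n m p E q
  not_isModelEdge : ¬ D.IsModelEdge p (m p)
  isUSplit : IsUSplit D 0 1 Z₁ p Z₂
  isWSplit : IsWSplit D 1 0 Y₁ q Y₂
  isMinimal : IsMinimal G m D n
  isMinimal_slide : IsMinimal G m (D.slide Z₁ p Z₂ Y₁ q Y₂ E) (rematch n (D.inner 0 0))
  offPairs_eq_zero : offPairs m (D.path 0 0) = 0

theorem IsMinimal.exists_minimalAbsorption (col : G.Coloring Bool) (hm : m.Involutive)
    (hD : IsMinimal G m D n) (h : IsEar G D n m p E q) (hpm : ¬ D.IsModelEdge p (m p))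
    (hp : IsUSplit D i j Z₁ p Z₂) :
    ∃ (σ τ : Equiv.Perm (Fin 3)) (Y₁ Y₂ : List V), σ 0 = i ∧ τ 1 = j ∧
      MinimalAbsorption G m (D.perm σ τ) n Z₁ p Z₂ E Y₁ q Y₂ := by
  obtain ⟨k, l, Y₁, Y₂, hq⟩ := h.exists_isWSplit col hD.isModel hp
  have hijkl : ¬ (i = k ∨ j = l) := fun hijkl => by
    obtain ⟨D', n', h', hlt⟩ := h.exists_isAbsorption_lt hD.isModel hD.isOuterMatching hm
      (h.ne col) hpm hp hq hijkl
    exact (hD.le D' n' h'.isModel h'.isOuterMatching).not_gt hlt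
  obtain ⟨σ, hσ₀, hσ₁⟩ := exists_perm_zero_one_eq fun hik => hijkl (Or.inl hik)
  obtain ⟨τ, hτ₀, hτ₁⟩ := exists_perm_zero_one_eq fun hlj => hijkl (Or.inr hlj.symm)
  have hM := hD.perm σ τ
  have hp' := hp.perm hσ₀ hτ₁
  have hq' := hq.perm hσ₁ hτ₀
  obtain ⟨h', heq⟩ := (h.perm σ τ).isAbsorption_slide_inner hM.isModel hM.isOuterMatching hm hp' hq'
  have hle := hM.le _ _ h'.isModel h'.isOuterMatching
  exact ⟨σ, τ, Y₁, Y₂, hσ₀, hτ₁, h.perm σ τ,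
    by simpa using hpm, hp', hq', hM,
    ⟨h'.isModel, h'.isOuterMatching, fun D' n' hD' hn' => by
      have := hM.le D' n' hD' hn'
      omega⟩, by omega⟩

theorem IsMinimal.exists_minimalAbsorption_of_isUSplit (col : G.Coloring Bool) (hm : m.Involutive)
    (hma : ∀ v, G.Adj v (m v)) (hD : IsMinimal G m D n) (hpm : ¬ D.IsModelEdge p (m p))
    (hp : IsUSplit D i j Z₁ p Z₂) :
    ∃ (σ τ : Equiv.Perm (Fin 3)) (E : List V) (q : V) (Y₁ Y₂ : List V), σ 0 = i ∧ τ 1 = j ∧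
      MinimalAbsorption G m (D.perm σ τ) n Z₁ p Z₂ E Y₁ q Y₂ := by
  obtain ⟨E, q, h⟩ := hD.isModel.exists_isEar hD.isOuterMatching hm hma
    (K33Data.mult_ne_zero_of_mem_path hp.mem_path)
  obtain ⟨σ, τ, Y₁, Y₂, hσ, hτ, hA⟩ := hD.exists_minimalAbsorption col hm h hpm hp
  exact ⟨σ, τ, E, q, Y₁, Y₂, hσ, hτ, hA⟩

theorem IsMinimal.jointlyMatched_of_path_eq (col : G.Coloring Bool) (hm : m.Involutive)
    (hma : ∀ v, G.Adj v (m v)) (hD : IsMinimal G m D n) {X K Y : List V}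
    (h : D.path i j = X ++ a :: b :: (K ++ a' :: b' :: Y)) (hX : Even X.length)
    (hK : Odd K.length) (hab : m a = b) (hab' : m a' = b') : JointlyMatched G a b a' b' := by
  have hnodup := hD.isModel.nodup_path i j
  have hl := hD.isModel.even_path i j
  rw [h] at hnodup hl
  have ha : a ∉ K ∧ b' ∉ K := by
    simp only [List.nodup_append, List.nodup_cons, List.mem_append, List.mem_cons] at hnodup
    grind
  obtain ⟨K₁, c, K₂, rfl, hK₁, hK₂, hc⟩ := hD.isModel.exists_not_isModelEdge hm
    (A := X ++ [a]) (x := b) (y := a') (by simpa using h) hK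
    (by rw [← hab, hm]; exact fun h => ha.1 (List.mem_of_head? h)) (hab'.symm ▸ ha.2)
  have hY : Y ≠ [] := by
    rintro rfl
    simp only [List.length_append, List.length_cons, List.length_nil] at hl hK
    grind
  obtain ⟨Y, z, rfl⟩ := (List.eq_nil_or_concat' Y).resolve_left hY
  have hXK : Even (X ++ a :: b :: K₁).length := by
    simp only [List.length_append, List.length_cons]
    grind
  have hU : IsUSplit D i j (X ++ a :: b :: K₁) c (K₂ ++ a' :: b' :: Y) :=
    .of_path_eq (z := z) (by simp [h]) hXK
  obtain ⟨σ, τ, E, q, Y₁, Y₂, -, -, hA⟩ :=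
    hD.exists_minimalAbsorption_of_isUSplit col hm hma hc hU
  refine ⟨_, _, 1, hA.isMinimal_slide.isModel, hA.isMinimal_slide.isOuterMatching,
    Or.inr ⟨0, 2, ?_⟩, Or.inr ⟨0, 1, Or.inl (evenPair_append_cons_cons hK₂)⟩⟩
  change Paired ((X ++ a :: b :: K₁).reverse ++ _) a b
  rw [paired_append (by rwa [List.length_reverse]), paired_reverse hXK]
  exact Or.inl (Or.inl (evenPair_append_cons_cons hX))

theorem IsMinimal.jointlyMatched_of_same_path (col : G.Coloring Bool) (hm : m.Involutive)
    (hma : ∀ v, G.Adj v (m v)) (hD : IsMinimal G m D n) (hab : m a = b) (hab' : m a' = b')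
    (h : PathPaired D i j true a b) (h' : PathPaired D i j false a' b') :
    JointlyMatched G a b a' b' := by
  have key {a b a' b' : V} (hab : m a = b) (hab' : m a' = b') (h : EvenPair (D.path i j) a b)
      (h' : EvenPair (D.inner i j) a' b') : JointlyMatched G a b a' b' := by
    have hba : m b = a := by rw [← hab, hm]
    have hba' : m b' = a' := by rw [← hab', hm]
    obtain ⟨X, Y, hX, hp⟩ := h.exists_eq_append
    obtain ⟨X', Y', hX', hp'⟩ := h'.exists_eq_append
    replace hp' : D.path i j = (D.u i :: X') ++ a' :: b' :: (Y' ++ [D.w j]) := by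
      simp [K33Data.path, hp']
    have hl := hD.isModel.even_path i j
    rcases exists_eq_append_of_append_pair_eq_append_pair (hp ▸ hD.isModel.nodup_path i j)
      (hp.symm.trans hp') hX (by simpa [Nat.odd_add_one] using hX')
      (fun h => by rw [← hab', ← h, hba]) (fun h => by rw [← hab, ← h, hba']) with
      ⟨K, hK, -, rfl⟩ | ⟨K, hK, rfl, -⟩
    · exact hD.jointlyMatched_of_path_eq col hm hma hp hX hK hab hab'
    · have hY : Even Y.reverse.length := by
        simp only [hp, List.length_append, List.length_cons, List.length_reverse] at hl hX ⊢
        grind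
      have hp_swap : D.swap.path j i =
          Y.reverse ++ b :: a :: (K.reverse ++ b' :: a' :: (D.u i :: X').reverse) := by
        simp [hp]
      exact ((hD.swap hm).jointlyMatched_of_path_eq col hm hma hp_swap hY (by simpa using hK)
        hba hba').symm_left.symm_right
  have hba : m b = a := by rw [← hab, hm]
  have hba' : m b' = a' := by rw [← hab', hm]
  rcases h with h | h <;> rcases h' with h' | h'
  · exact key hab hab' h h'
  · exact (key hab hba' h h').symm_right
  · exact (key hba hab' h h').symm_left
  · exact (key hba hba' h h').symm_left.symm_right

theorem exists_perm_eq_one_and_ne_two {r : Fin 3} (hr : r ≠ 0) :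
    ∃ π : Equiv.Perm (Fin 3), π r = 1 ∧ π 0 ≠ 2 := by
  revert r
  decide

theorem IsMinimal.jointlyMatched_of_path_eq_cons (col : G.Coloring Bool) (hm : m.Involutive)
    (hma : ∀ v, G.Adj v (m v)) (hD : IsMinimal G m D n) (hjk : j ≠ k) {K Y : List V}
    (h : D.path i k = D.u i :: (K ++ a' :: b' :: Y)) (hK : Odd K.length)
    (hu : ¬ IsConsecutive (D.path i k) (D.u i) (m (D.u i))) (hab' : m a' = b')
    (hab : PathPaired D i j true a b) : JointlyMatched G a b a' b' := by
  have hnodup := hD.isModel.nodup_path i k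
  rw [h] at hnodup hu
  obtain ⟨K₁, c, K₂, rfl, hK₁, hK₂, hc⟩ := hD.isModel.exists_not_isModelEdge hm (A := []) h hK
    (fun h' => hu (Or.inl ⟨[], (K ++ a' :: b' :: Y).tail, by cases K <;> simp_all⟩))
    (by simp only [List.nodup_cons, List.nodup_append, List.mem_cons] at hnodup; grind)
  have hU : IsUSplit D.swap k i (K₂ ++ a' :: b' :: Y).reverse c K₁.reverse :=
    IsWSplit.swap hD.isModel (.of_path_eq (z := D.u i) (by simp [h]) hK₁)
  obtain ⟨σ, τ, E, q, Y₁, Y₂, hσ, hτ, hA⟩ := (hD.swap hm).exists_minimalAbsorption_of_isUSplit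
    col hm hma (K33Data.isModelEdge_swap.not.2 hc) hU
  have hσj : σ.symm j ≠ 0 := by
    rw [ne_eq, Equiv.symm_apply_eq, hσ]
    exact hjk
  have hab'' : PathPaired (D.swap.perm σ τ) (σ.symm j) 1 true a b :=
    .of_perm (by simpa [hτ] using hab.swap hD.isModel)
  obtain ⟨π, hπ₁, hπ₂⟩ := exists_perm_eq_one_and_ne_two hσj
  refine ⟨_, _, π, hA.isMinimal_slide.isModel, hA.isMinimal_slide.isOuterMatching,
    Or.inr ⟨σ.symm j, 1, ?_⟩, Or.inr ⟨0, 2, ?_⟩⟩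
  · simpa [hπ₁] using hab''.slide hσj
  · rw [decide_eq_false hπ₂]
    change Paired ((K₂ ++ a' :: b' :: Y).reverse.reverse ++ _) a' b'
    rw [List.reverse_reverse, paired_append (List.length_reverse ▸ hU.2)]
    exact Or.inl (Or.inl (evenPair_append_cons_cons hK₂))

theorem IsMinimal.jointlyMatched_of_not_isConsecutive (col : G.Coloring Bool)
    (hm : m.Involutive) (hma : ∀ v, G.Adj v (m v)) (hD : IsMinimal G m D n) (hjk : j ≠ k)
    (hab' : m a' = b') (h : PathPaired D i j true a b) (h' : PathPaired D i k true a' b')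
    (hu : ¬ IsConsecutive (D.path i k) (D.u i) (m (D.u i))) : JointlyMatched G a b a' b' := by
  have key {a' b' : V} (hab' : m a' = b') (h' : EvenPair (D.path i k) a' b') :
      JointlyMatched G a b a' b' := by
    obtain ⟨X, Y, hX, hp⟩ := h'.exists_eq_append
    match X, hX, hp with
    | [], _, hp =>
      have hu' : D.u i = a' := (List.cons.inj hp).1
      rw [hp, hu', hab'] at hu
      exact (hu (Or.inl ⟨[], Y, rfl⟩)).elim
    | x :: K, hX, hp =>
      have hx : D.u i = x := (List.cons.inj hp).1
      exact hD.jointlyMatched_of_path_eq_cons col hm hma hjk (hx ▸ hp)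
        (by simpa [Nat.even_add_one] using hX) hu hab' h
  rcases h' with h' | h'
  · exact key hab' h'
  · exact (key (by rw [← hab', hm]) h').symm_right

theorem IsMinimal.jointlyMatched_of_same_row (col : G.Coloring Bool) (hm : m.Involutive)
    (hma : ∀ v, G.Adj v (m v)) (hD : IsMinimal G m D n) (hjk : j ≠ k) (hab : m a = b)
    (hab' : m a' = b') (h : PathPaired D i j true a b) (h' : PathPaired D i k true a' b') :
    JointlyMatched G a b a' b' := by
  by_cases hk : IsConsecutive (D.path i k) (D.u i) (m (D.u i))
  · refine (hD.jointlyMatched_of_not_isConsecutive col hm hma hjk.symm hab h' h fun hj => ?_).comm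
    have mem_tail {j : Fin 3} (hj : IsConsecutive (D.path i j) (D.u i) (m (D.u i))) :
        m (D.u i) ∈ D.inner i j ++ [D.w j] :=
      (List.mem_cons.1 hj.mem.2).resolve_left (hma _).ne'
    have := D.count_append_w_add_count_append_w_le i hjk (m (D.u i))
    have := List.count_pos_iff.2 (mem_tail hj)
    have := List.count_pos_iff.2 (mem_tail hk)
    have := hD.isModel.mult_le_one (m (D.u i))
    omega
  · exact hD.jointlyMatched_of_not_isConsecutive col hm hma hjk hab' h h' hk

theorem exists_perm_decide_eq (i j : Fin 3) (t : Bool) :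
    ∃ π : Equiv.Perm (Fin 3), decide (π i = j) = t := by
  revert i j t
  decide

theorem exists_perm_decide_eq_or (i j i' j' : Fin 3) (t t' : Bool) :
    (∃ π : Equiv.Perm (Fin 3), decide (π i = j) = t ∧ decide (π i' = j') = t') ∨
    (i = i' ∧ j = j' ∧ t ≠ t') ∨
    (t = true ∧ t' = true ∧ ((i = i' ∧ j ≠ j') ∨ (i ≠ i' ∧ j = j'))) := by
  revert i j i' j' t t'
  decide

theorem IsMinimal.jointlyMatched_of_isModelEdge (col : G.Coloring Bool) (hm : m.Involutive)
    (hma : ∀ v, G.Adj v (m v)) (hD : IsMinimal G m D n) (hab : m a = b) (hab' : m a' = b')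
    (h : D.IsModelEdge a b) (h' : D.IsModelEdge a' b') : JointlyMatched G a b a' b' := by
  obtain ⟨i, j, t, h⟩ := hD.isModel.isModelEdge_iff.1 h
  obtain ⟨i', j', t', h'⟩ := hD.isModel.isModelEdge_iff.1 h'
  rcases exists_perm_decide_eq_or i j i' j' t t' with
    ⟨π, rfl, rfl⟩ | ⟨rfl, rfl, ht⟩ | ⟨rfl, rfl, ⟨rfl, hj⟩ | ⟨hi, rfl⟩⟩
  · exact ⟨D, n, π, hD.isModel, hD.isOuterMatching, Or.inr ⟨i, j, h⟩, Or.inr ⟨i', j', h'⟩⟩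
  · cases t <;> cases t'
    · exact absurd rfl ht
    · exact (hD.jointlyMatched_of_same_path col hm hma hab' hab h' h).comm
    · exact hD.jointlyMatched_of_same_path col hm hma hab hab' h h'
    · exact absurd rfl ht
  · exact hD.jointlyMatched_of_same_row col hm hma hj hab hab' h h'
  · exact (hD.swap hm).jointlyMatched_of_same_row col hm hma hi hab hab' (h.swap hD.isModel)
      (h'.swap hD.isModel)

end IsMinimal

/-! ### Edges of minimal models and of their ears -/

section Slide

variable {D : K33Data V} {Z₁ Z₂ Y₁ Y₂ R : List V} {p q a b : V}

theorem isConsecutive_append_cons_iff {l₁ l₂ : List V} {c : V} :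
    IsConsecutive (l₁ ++ c :: l₂) a b ↔
      IsConsecutive (l₁ ++ [c]) a b ∨ IsConsecutive (c :: l₂) a b := by
  refine ⟨IsConsecutive.append, ?_⟩
  rintro (h | h)
  · exact h.mono ⟨[], l₂, by simp⟩
  · exact h.mono ⟨l₁, [], by simp⟩

theorem exists_fin_three {P : Fin 3 → Prop} : (∃ i, P i) ↔ P 0 ∨ P 1 ∨ P 2 := by
  simp only [Fin.exists_fin_succ, IsEmpty.exists_iff, or_false]
  rfl

theorem isModelEdge_slide_iff (hp : IsUSplit D 0 1 Z₁ p Z₂) (hq : IsWSplit D 1 0 Y₁ q Y₂) :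
    (D.slide Z₁ p Z₂ Y₁ q Y₂ R).IsModelEdge a b ↔
      IsConsecutive (p :: (R ++ [q])) a b ∨
        ∃ i j, (i, j) ≠ (0, 0) ∧ IsConsecutive (D.path i j) a b := by
  obtain ⟨K, hK, -⟩ := hp.exists_eq_cons
  obtain ⟨L, hL, -⟩ := hq.exists_eq_concat
  have h01 : IsConsecutive (D.path 0 1) a b ↔
      IsConsecutive (Z₁ ++ [p]) a b ∨ IsConsecutive (p :: (Z₂ ++ [D.w 1])) a b := by
    rw [hp.path_eq, isConsecutive_append_cons_iff]
  have h10 : IsConsecutive (D.path 1 0) a b ↔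
      IsConsecutive (D.u 1 :: Y₁ ++ [q]) a b ∨ IsConsecutive (q :: Y₂) a b := by
    rw [hq.path_eq, isConsecutive_append_cons_iff]
  have h02 : IsConsecutive ((D.slide Z₁ p Z₂ Y₁ q Y₂ R).path 0 2) a b ↔
      IsConsecutive (Z₁ ++ [p]) a b ∨ IsConsecutive (D.path 0 2) a b := by
    rw [slide_path_zero_two hK, isConsecutive_append_cons_iff, ← List.reverse_cons, ← hK,
      isConsecutive_reverse]
    rfl
  have h20 : IsConsecutive ((D.slide Z₁ p Z₂ Y₁ q Y₂ R).path 2 0) a b ↔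
      IsConsecutive (D.path 2 0) a b ∨ IsConsecutive (q :: Y₂) a b := by
    rw [slide_path_two_zero hL, isConsecutive_append_cons_iff, ← List.reverse_concat, ← hL,
      isConsecutive_reverse]
    rfl
  have h00 : (D.slide Z₁ p Z₂ Y₁ q Y₂ R).path 0 0 = p :: (R ++ [q]) := rfl
  have h01' : (D.slide Z₁ p Z₂ Y₁ q Y₂ R).path 0 1 = p :: (Z₂ ++ [D.w 1]) := rfl
  have h10' : (D.slide Z₁ p Z₂ Y₁ q Y₂ R).path 1 0 = D.u 1 :: Y₁ ++ [q] := rfl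
  have two_ne : (2 : Fin 3) ≠ 0 := by decide
  simp only [K33Data.IsModelEdge, exists_fin_three, h00, h01', h10', h02, h20, h01, h10, ne_eq,
    Prod.mk.injEq, not_true_eq_false, false_and, false_or, one_ne_zero, two_ne,
    not_false_eq_true, true_and, and_false, and_true]
  rw [slide_path_of_ne_zero one_ne_zero one_ne_zero, slide_path_of_ne_zero one_ne_zero two_ne,
    slide_path_of_ne_zero two_ne one_ne_zero, slide_path_of_ne_zero two_ne two_ne]
  exact iff_of_eq (by ac_rfl)

end Slide

section Ear

variable [DecidableEq V] {G : SimpleGraph V} {D : K33Data V} {n m : V → V} {i j : Fin 3}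
  {Z₁ Z₂ Y₁ Y₂ E E' : List V} {p q p' q' x : V}

theorem IsModel.isModelEdge_of_offPairs_eq_zero (hm : m.Involutive) (hD : IsModel G D)
    (h : offPairs m (D.path i j) = 0) (hx : x ∈ D.path i j) : D.IsModelEdge x (m x) := by
  obtain ⟨y, hy⟩ := exists_paired (hD.even_path i j) hx
  rw [offPairs_eq_zero_iff] at h
  have hxy : m x = y := by
    rcases hy with hy | hy
    · exact h _ _ hy
    · rw [← h _ _ hy, hm]
  exact ⟨i, j, hxy ▸ hy.isConsecutive⟩

namespace IsEar

theorem paired_apply (hm : m.Involutive) (h : IsEar G D n m p E q) (hx : x ∈ p :: (E ++ [q])) :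
    Paired (p :: (E ++ [q])) x (m x) := by
  obtain ⟨y, hy⟩ := exists_paired h.even_append_length hx
  have hxy : m x = y := by
    rcases hy with hy | hy
    · exact h.apply_eq' _ _ hy
    · rw [← h.apply_eq' _ _ hy, hm]
  rwa [hxy]

theorem mem_apply_iff (hm : m.Involutive) (h : IsEar G D n m p E q) :
    x ∈ p :: (E ++ [q]) ↔ m x ∈ p :: (E ++ [q]) := by
  refine ⟨fun hx => (h.paired_apply hm hx).mem.2, fun hx => ?_⟩
  simpa only [hm x] using (h.paired_apply hm hx).mem.2

theorem mem_of_mult_eq_zero (h : IsEar G D n m p E q) (hx : x ∈ p :: (E ++ [q]))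
    (hx₀ : D.mult x = 0) : x ∈ E := by
  simp only [List.mem_cons, List.mem_append, List.not_mem_nil, or_false] at hx
  rcases hx with rfl | hx | rfl
  · exact absurd hx₀ h.left
  · exact hx
  · exact absurd hx₀ h.right

theorem mem_outer_apply_iff (hn : IsOuterMatching G D n) (h : IsEar G D n m p E q)
    (hx : D.mult x = 0) : x ∈ p :: (E ++ [q]) ↔ n x ∈ p :: (E ++ [q]) := by
  have mem {x : V} (hx : D.mult x = 0) (hxE : x ∈ p :: (E ++ [q])) : n x ∈ p :: (E ++ [q]) :=
    List.mem_cons_of_mem _ (List.mem_append_left _ (h.apply_mem (h.mem_of_mult_eq_zero hxE hx)).1)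
  obtain ⟨hx', hxx, -⟩ := hn x hx
  exact ⟨mem hx, fun hxE => hxx ▸ mem hx' hxE⟩

theorem disjoint (hm : m.Involutive) (hn : IsOuterMatching G D n) (h : IsEar G D n m p E q)
    (h' : IsEar G D n m p' E' q') (hp : p' ≠ p) (hq : p' ≠ q) :
    (p' :: (E' ++ [q'])).Disjoint (p :: (E ++ [q])) := by
  intro x hx' hx
  have hp' := (h'.mem_iff_of_closed (T := (· ∈ p :: (E ++ [q]))) (fun _ => h.mem_apply_iff hm)
    (fun _ => h.mem_outer_apply_iff hn) hx').1 hx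
  simp only [List.mem_cons, List.mem_append, List.not_mem_nil, or_false, hp, hq, false_or] at hp'
  exact h'.left (h.mult_eq_zero_of_mem hp')

theorem slide (h : IsEar G D n m p E q) (hp' : IsUSplit D 0 1 Z₁ p' Z₂)
    (hq' : IsWSplit D 1 0 Y₁ q' Y₂) (hD' : IsModel G (D.slide Z₁ p' Z₂ Y₁ q' Y₂ E'))
    (hp : p ∉ D.inner 0 0) (hq : q ∉ D.inner 0 0) (hE : E'.Disjoint E) :
    IsEar G (D.slide Z₁ p' Z₂ Y₁ q' Y₂ E') (rematch n (D.inner 0 0)) m p E q := by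
  have hmult := mult_slide (R := E') hp' hq'
  have ne_zero {x : V} (hx : x ∉ D.inner 0 0) (hx' : D.mult x ≠ 0) :
      (D.slide Z₁ p' Z₂ Y₁ q' Y₂ E').mult x ≠ 0 := by
    have := hmult x
    have := List.count_eq_zero.2 hx
    omega
  refine ⟨⟨h.even_length, fun x => ?_, fun a b hab => ?_⟩, ne_zero hp h.left, ne_zero hq h.right,
    h.apply_eq', h.isChain⟩
  · by_cases hx : x ∈ E
    · have := hmult x
      have := h.mult_add_count_le_one x
      have := List.count_eq_zero.2 fun hx' => hE hx' hx
      omega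
    · rw [List.count_eq_zero.2 hx]
      exact hD'.mult_le_one x
  · have rematch_eq {x : V} (hx : x ∈ E) : rematch n (D.inner 0 0) x = n x := by
      have hx' : x ∉ D.inner 0 0 := fun hx' => K33Data.mult_ne_zero_of_mem_path
        ((D.inner_infix_path 0 0).subset hx') (h.mult_eq_zero_of_mem hx)
      simp [rematch, hx']
    rw [rematch_eq hab.mem.1, rematch_eq hab.mem.2]
    exact h.apply_eq a b hab

end IsEar

end Ear

section IsMinimal

variable [Fintype V] [DecidableEq V] {G : SimpleGraph V} {D : K33Data V} {n m : V → V}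
  {i j k l : Fin 3} {Z₁ Z₂ Y₁ Y₂ E : List V} {a' b' p q a b : V}

theorem MinimalAbsorption.jointlyMatched_of_ne (col : G.Coloring Bool) (hm : m.Involutive)
    (hma : ∀ v, G.Adj v (m v)) (hA : MinimalAbsorption G m D n Z₁ p Z₂ E Y₁ q Y₂)
    (hab : m a = b) (hab' : m a' = b') (hij : (i, j) ≠ (0, 0))
    (h : IsConsecutive (D.path i j) a b) (h' : IsConsecutive (p :: (E ++ [q])) a' b') :
    JointlyMatched G a b a' b' :=
  hA.isMinimal_slide.jointlyMatched_of_isModelEdge col hm hma hab hab'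
    ((isModelEdge_slide_iff hA.isUSplit hA.isWSplit).2 (Or.inr ⟨i, j, hij, h⟩))
    ((isModelEdge_slide_iff hA.isUSplit hA.isWSplit).2 (Or.inl h'))

theorem IsMinimal.jointlyMatched_of_isWSplit (col : G.Coloring Bool) (hm : m.Involutive)
    (hma : ∀ v, G.Adj v (m v)) (hD : IsMinimal G m D n) (hE : IsEar G D n m p E q)
    (hpm : ¬ D.IsModelEdge p (m p)) (hp : IsWSplit D i j Z₁ p Z₂) (hlj : l ≠ j)
    (hab : m a = b) (hab' : m a' = b') (h : IsConsecutive (D.path k l) a b)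
    (h' : IsConsecutive (p :: (E ++ [q])) a' b') : JointlyMatched G a b a' b' := by
  obtain ⟨σ, τ, Y₁, Y₂, hσ, -, hA⟩ := (hD.swap hm).exists_minimalAbsorption col hm hE.swap
    (K33Data.isModelEdge_swap.not.2 hpm) (hp.swap hD.isModel)
  refine hA.jointlyMatched_of_ne (i := σ.symm l) (j := τ.symm k) col hm hma hab hab'
    (fun h₀ => hlj ?_) ?_ h'
  · rw [← hσ, ← (Prod.mk.inj h₀).1, Equiv.apply_symm_apply]
  · rwa [K33Data.path_perm, Equiv.apply_symm_apply, Equiv.apply_symm_apply, K33Data.path_swap,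
      isConsecutive_reverse]

namespace MinimalAbsorption

theorem not_mem_path (hm : m.Involutive) (hA : MinimalAbsorption G m D n Z₁ p Z₂ E Y₁ q Y₂)
    {x : V} (hx : ¬ D.IsModelEdge x (m x)) : x ∉ D.path 0 0 :=
  fun h => hx (hA.isMinimal.isModel.isModelEdge_of_offPairs_eq_zero hm hA.offPairs_eq_zero h)

theorem apply_left_not_mem (hA : MinimalAbsorption G m D n Z₁ p Z₂ E Y₁ q Y₂) :
    m p ∉ D.inner 0 1 := by
  intro hmp
  rcases E with _ | ⟨z, E⟩
  · have hpq : m p = q := hA.isEar.apply_eq' p q (by simp)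
    exact hA.isMinimal.isModel.not_mem_path (by decide) (hpq ▸ hmp) hA.isWSplit.mem_path
  · have hpz : m p = z := hA.isEar.apply_eq' p z (by simp)
    exact K33Data.mult_ne_zero_of_mem_path ((D.inner_infix_path 0 1).subset hmp)
      (hA.isEar.mult_eq_zero_of_mem (by simp [hpz]))

theorem apply_u_not_mem (hA : MinimalAbsorption G m D n Z₁ p Z₂ E Y₁ q Y₂) :
    m (D.u 0) ∉ D.inner 0 1 := by
  intro h
  have h00 : m (D.u 0) ∈ D.inner 0 0 ++ [D.w 0] := by
    have hu : D.path 0 0 = D.u 0 :: (D.inner 0 0 ++ [D.w 0]) := rfl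
    obtain ⟨y, L, hL⟩ := List.exists_cons_of_ne_nil (l := D.inner 0 0 ++ [D.w 0]) (by simp)
    rw [hL, (offPairs_eq_zero_iff m).1 hA.offPairs_eq_zero (D.u 0) y (by simp [hu, hL])]
    simp
  have := D.count_append_w_add_count_append_w_le 0 (j := 0) (k := 1) (by decide) (m (D.u 0))
  have := List.count_pos_iff.2 h00
  have := List.count_pos_iff.2 (List.mem_append_left [D.w 1] h)
  have := hA.isMinimal.isModel.mult_le_one (m (D.u 0))
  omega

theorem exists_not_isModelEdge (hm : m.Involutive)
    (hA : MinimalAbsorption G m D n Z₁ p Z₂ E Y₁ q Y₂) :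
    ∃ K₁ z K₂, D.inner 0 1 = K₁ ++ z :: (K₂ ++ p :: Z₂) ∧ Even K₁.length ∧ Even K₂.length ∧
      ¬ D.IsModelEdge z (m z) := by
  obtain ⟨hI, hZ⟩ := hA.isUSplit
  obtain _ | ⟨u, K⟩ := Z₁
  · have hu : D.u 0 = p := by simpa using congrArg List.head? hI
    exact absurd (by simp [K33Data.path, hu]) (hA.not_mem_path hm hA.not_isModelEdge)
  obtain ⟨rfl, hK'⟩ : D.u 0 = u ∧ D.inner 0 1 = K ++ p :: Z₂ := by
    simpa using hI
  have hK : Odd K.length := by simpa [Nat.even_add_one] using hZ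
  have hu := hA.apply_u_not_mem
  have hp := hA.apply_left_not_mem
  obtain ⟨K₁, z, K₂, rfl, hK₁, hK₂, hz⟩ := hA.isMinimal.isModel.exists_not_isModelEdge hm
    (i := 0) (j := 1) (A := []) (x := D.u 0) (y := p) (B := Z₂ ++ [D.w 1]) (K := K)
    (by simp [K33Data.path, hK']) hK (fun h => hu (by simp [hK', List.mem_of_head? h]))
    (fun h => hp (by simp [hK', h]))
  exact ⟨K₁, z, K₂, by simpa using hK', hK₁, hK₂, hz⟩

theorem exists_isEar_disjoint (col : G.Coloring Bool) (hm : m.Involutive)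
    (hma : ∀ v, G.Adj v (m v)) (hA : MinimalAbsorption G m D n Z₁ p Z₂ E Y₁ q Y₂) :
    ∃ K₁ z K₂ E' q', IsWSplit D 0 1 K₁ z (K₂ ++ p :: (Z₂ ++ [D.w 1])) ∧ Even K₂.length ∧
      ¬ D.IsModelEdge z (m z) ∧ IsEar G D n m z E' q' ∧
      (z :: (E' ++ [q'])).Disjoint (p :: (E ++ [q])) := by
  have hD := hA.isMinimal
  obtain ⟨K₁, z, K₂, hI, hK₁, hK₂, hz⟩ := hA.exists_not_isModelEdge hm
  have hzW : IsWSplit D 0 1 K₁ z (K₂ ++ p :: (Z₂ ++ [D.w 1])) := ⟨by simp [hI], hK₁⟩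
  have hzp : z ≠ p := by
    rintro rfl
    exact (Bool.eq_not_self _).1
      ((hzW.coloring_eq col hD.isModel).symm.trans (hA.isUSplit.coloring_eq col hD.isModel))
  have hzq : z ≠ q := by
    rintro rfl
    exact hD.isModel.not_mem_path (i := 0) (j := 1) (by decide) (by simp [hI])
      hA.isWSplit.mem_path
  obtain ⟨E', q', hE'⟩ := hD.isModel.exists_isEar hD.isOuterMatching hm hma
    (K33Data.mult_ne_zero_of_mem_path hzW.mem_path)
  exact ⟨K₁, z, K₂, E', q', hzW, hK₂, hz, hE',
    hA.isEar.disjoint hm hD.isOuterMatching hE' hzp hzq⟩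

theorem jointlyMatched (col : G.Coloring Bool) (hm : m.Involutive) (hma : ∀ v, G.Adj v (m v))
    (hA : MinimalAbsorption G m D n Z₁ p Z₂ E Y₁ q Y₂) (hab : m a = b) (hab' : m a' = b')
    (h : IsConsecutive (D.path 0 0) a b) (h' : IsConsecutive (p :: (E ++ [q])) a' b') :
    JointlyMatched G a b a' b' := by
  have hD := hA.isMinimal
  obtain ⟨K₁, z, K₂, E', q', hzW, hK₂, hz, hE', hdisj⟩ := hA.exists_isEar_disjoint col hm hma
  obtain ⟨σ, τ, Y₃, Y₄, hσ, hτ, hB⟩ := (hD.swap hm).exists_minimalAbsorption col hm hE'.swap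
    (K33Data.isModelEdge_swap.not.2 hz) (hzW.swap hD.isModel)
  have hσ₀ : σ.symm 0 ≠ 0 := by
    rw [ne_eq, Equiv.symm_apply_eq, hσ]
    exact zero_ne_one
  have not_isModelEdge {x : V} (hx : ¬ D.IsModelEdge x (m x)) :
      ¬ (D.swap.perm σ τ).IsModelEdge x (m x) := by simpa using hx
  have not_mem {x : V} (hx : ¬ D.IsModelEdge x (m x)) : x ∉ (D.swap.perm σ τ).inner 0 0 :=
    fun h => hB.not_mem_path hm (by simpa using hx) ((K33Data.inner_infix_path _ 0 0).subset h)
  have hE := (hA.isEar.swap.perm σ τ).slide hB.isUSplit hB.isWSplit hB.isMinimal_slide.isModel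
    (not_mem hA.not_isModelEdge) (not_mem (hA.isEar.not_isModelEdge_right hm hA.not_isModelEdge))
    fun _ hx' hx => hdisj (List.mem_cons_of_mem _ (List.mem_append_left _ hx'))
      (List.mem_cons_of_mem _ (List.mem_append_left _ hx))
  refine hB.isMinimal_slide.jointlyMatched_of_isWSplit (i := 0) (j := 2) (k := σ.symm 0) (l := 1)
    (Z₁ := K₂) (Z₂ := Z₂ ++ D.w 1 :: ((D.swap.perm σ τ).inner 0 2 ++ [(D.swap.perm σ τ).w 2]))
    col hm hma hE ?_ ⟨by simp [K33Data.slide], hK₂⟩ (by decide) hab hab' ?_ h'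
  · rw [isModelEdge_slide_iff hB.isUSplit hB.isWSplit]
    rintro (hp | ⟨i, j, -, hp⟩)
    · exact hdisj hp.mem.1 List.mem_cons_self
    · exact not_isModelEdge hA.not_isModelEdge ⟨i, j, hp⟩
  · rw [slide_path_of_ne_zero hσ₀ one_ne_zero, K33Data.path_perm, hτ, Equiv.apply_symm_apply,
      K33Data.path_swap, isConsecutive_reverse]
    exact h

end MinimalAbsorption

namespace IsMinimal

theorem jointlyMatched_of_isEar_of_isUSplit (col : G.Coloring Bool) (hm : m.Involutive)
    (hma : ∀ v, G.Adj v (m v)) (hD : IsMinimal G m D n) (hE : IsEar G D n m p E q)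
    (hpm : ¬ D.IsModelEdge p (m p)) (hp : IsUSplit D i j Z₁ p Z₂) (hab : m a = b)
    (hab' : m a' = b') (h : D.IsModelEdge a b) (h' : IsConsecutive (p :: (E ++ [q])) a' b') :
    JointlyMatched G a b a' b' := by
  obtain ⟨σ, τ, Y₁, Y₂, -, -, hA⟩ := hD.exists_minimalAbsorption col hm hE hpm hp
  obtain ⟨k, l, h⟩ := (K33Data.isModelEdge_perm σ τ).2 h
  by_cases hkl : (k, l) = (0, 0)
  · obtain ⟨rfl, rfl⟩ := Prod.mk.inj hkl
    exact hA.jointlyMatched col hm hma hab hab' h h'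
  · exact hA.jointlyMatched_of_ne col hm hma hab hab' hkl h h'

theorem jointlyMatched_of_isEar (col : G.Coloring Bool) (hm : m.Involutive)
    (hma : ∀ v, G.Adj v (m v)) (hD : IsMinimal G m D n) (hE : IsEar G D n m p E q)
    (hpm : ¬ D.IsModelEdge p (m p)) (hab : m a = b) (hab' : m a' = b') (h : D.IsModelEdge a b)
    (h' : IsConsecutive (p :: (E ++ [q])) a' b') : JointlyMatched G a b a' b' := by
  rcases exists_isUSplit_or_isWSplit hD.isModel hE.left with ⟨i, j, Z₁, Z₂, hp⟩ | ⟨i, j, Z₁, Z₂, hp⟩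
  · exact hD.jointlyMatched_of_isEar_of_isUSplit col hm hma hE hpm hp hab hab' h h'
  · exact (hD.swap hm).jointlyMatched_of_isEar_of_isUSplit col hm hma hE.swap
      (K33Data.isModelEdge_swap.not.2 hpm) (hp.swap hD.isModel) hab hab'
      (K33Data.isModelEdge_swap.2 h) h'

theorem outerOff_le (hD : IsMinimal G m D n) {n' : V → V} (hn' : IsOuterMatching G D n') :
    outerOff m D n ≤ outerOff m D n' :=
  Nat.le_of_add_le_add_left (hD.le D n' hD.isModel hn')

theorem outer_apply_eq (hm : m.Involutive) (hma : ∀ v, G.Adj v (m v)) (hD : IsMinimal G m D n)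
    (ha : D.mult a = 0) (h : ∀ p E q, IsEar G D n m p E q → a ∉ p :: (E ++ [q])) :
    n a = m a := by
  classical
  -- Replacing `n` by `m` away from the ears cannot decrease the potential.
  let OnEar (v : V) : Prop := ∃ p E q, IsEar G D n m p E q ∧ v ∈ p :: (E ++ [q])
  let n' (v : V) : V := if OnEar v then n v else m v
  have onEar_apply (v : V) : OnEar (m v) ↔ OnEar v :=
    exists_congr fun _ => exists_congr fun _ => exists_congr fun _ =>
      and_congr_right fun hE => (hE.mem_apply_iff hm).symm
  have onEar_outer_apply {v : V} (hv : D.mult v = 0) : OnEar (n v) ↔ OnEar v :=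
    exists_congr fun _ => exists_congr fun _ => exists_congr fun _ =>
      and_congr_right fun hE => (hE.mem_outer_apply_iff hD.isOuterMatching hv).symm
  have mult_eq_zero {v : V} (hv : ¬ OnEar v) : D.mult v = 0 := by
    by_contra hv'
    obtain ⟨E, q, hE⟩ := hD.isModel.exists_isEar hD.isOuterMatching hm hma hv'
    exact hv ⟨v, E, q, hE, List.mem_cons_self⟩
  have hn' : IsOuterMatching G D n' := by
    intro v hv
    by_cases hvE : OnEar v
    · simpa only [n', onEar_outer_apply hv, hvE, if_true] using hD.isOuterMatching v hv
    · simp only [n', onEar_apply, hvE, if_false]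
      exact ⟨mult_eq_zero (by rwa [onEar_apply]), hm v, hma v⟩
  have haE : ¬ OnEar a := fun ⟨p, E, q, hE, haE⟩ => h p E q hE haE
  by_contra hne
  refine (hD.outerOff_le hn').not_gt
    (Finset.sum_lt_sum (fun v _ => ?_) ⟨a, Finset.mem_univ a, ?_⟩)
  · by_cases hvE : OnEar v <;> simp [n', hvE]
  · simp [n', haE, ha, hne]

theorem isModelEdge_or_exists_isEar_or_outer_apply_eq (hm : m.Involutive)
    (hma : ∀ v, G.Adj v (m v)) (hD : IsMinimal G m D n) (a : V) :
    D.IsModelEdge a (m a) ∨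
      (∃ p E q, IsEar G D n m p E q ∧ ¬ D.IsModelEdge p (m p) ∧
        IsConsecutive (p :: (E ++ [q])) a (m a)) ∨
      (D.mult a = 0 ∧ n a = m a) := by
  by_cases haD : D.IsModelEdge a (m a)
  · exact Or.inl haD
  right
  by_cases haE : ∃ p E q, IsEar G D n m p E q ∧ a ∈ p :: (E ++ [q])
  · left
    by_cases ha : D.mult a = 0
    · obtain ⟨p, E, q, hE, haE⟩ := haE
      exact ⟨p, E, q, hE, hE.not_isModelEdge_left
        (List.ne_nil_of_mem (hE.mem_of_mult_eq_zero haE ha)),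
        (hE.paired_apply hm haE).isConsecutive⟩
    · obtain ⟨E, q, hE⟩ := hD.isModel.exists_isEar hD.isOuterMatching hm hma ha
      exact ⟨a, E, q, hE, haD, (hE.paired_apply hm List.mem_cons_self).isConsecutive⟩
  · right
    have ha : D.mult a = 0 := by
      by_contra ha
      obtain ⟨E, q, hE⟩ := hD.isModel.exists_isEar hD.isOuterMatching hm hma ha
      exact haE ⟨a, E, q, hE, List.mem_cons_self⟩
    exact ⟨ha, hD.outer_apply_eq hm hma ha fun p E q hE haE' => haE ⟨p, E, q, hE, haE'⟩⟩

theorem jointlyMatched_of_isModelEdge_apply (col : G.Coloring Bool) (hm : m.Involutive)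
    (hma : ∀ v, G.Adj v (m v)) (hD : IsMinimal G m D n) (h : D.IsModelEdge a (m a)) :
    JointlyMatched G a (m a) a' (m a') := by
  rcases hD.isModelEdge_or_exists_isEar_or_outer_apply_eq hm hma a' with
    h' | ⟨p, E, q, hE, hpm, h'⟩ | h'
  · exact hD.jointlyMatched_of_isModelEdge col hm hma rfl rfl h h'
  · exact hD.jointlyMatched_of_isEar col hm hma hE hpm rfl rfl h h'
  · obtain ⟨i, j, t, ht⟩ := hD.isModel.isModelEdge_iff.1 h
    obtain ⟨π, rfl⟩ := exists_perm_decide_eq i j t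
    exact ⟨D, n, π, hD.isModel, hD.isOuterMatching, Or.inr ⟨i, j, ht⟩, Or.inl h'⟩

theorem jointlyMatched_of_isEar_apply (col : G.Coloring Bool) (hm : m.Involutive)
    (hma : ∀ v, G.Adj v (m v)) (hD : IsMinimal G m D n) (hE : IsEar G D n m p E q)
    (hpm : ¬ D.IsModelEdge p (m p)) (h : IsConsecutive (p :: (E ++ [q])) a (m a)) :
    JointlyMatched G a (m a) a' (m a') := by
  obtain ⟨D', n', hA, hle⟩ := hE.exists_isAbsorption col hD.isModel hD.isOuterMatching hm hpm
  have hD' : IsMinimal G m D' n' := ⟨hA.isModel, hA.isOuterMatching,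
    fun D'' n'' hD'' hn'' => hle.trans (hD.le D'' n'' hD'' hn'')⟩
  exact hD'.jointlyMatched_of_isModelEdge_apply col hm hma (hA.isModelEdge h)

theorem jointlyMatched (col : G.Coloring Bool) (hm : m.Involutive) (hma : ∀ v, G.Adj v (m v))
    (hD : IsMinimal G m D n) (a a' : V) : JointlyMatched G a (m a) a' (m a') := by
  rcases hD.isModelEdge_or_exists_isEar_or_outer_apply_eq hm hma a with
    h | ⟨p, E, q, hE, hpm, h⟩ | h
  · exact hD.jointlyMatched_of_isModelEdge_apply col hm hma h
  · exact hD.jointlyMatched_of_isEar_apply col hm hma hE hpm h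
  · rcases hD.isModelEdge_or_exists_isEar_or_outer_apply_eq hm hma a' with
      h' | ⟨p, E, q, hE, hpm, h'⟩ | h'
    · exact (hD.jointlyMatched_of_isModelEdge_apply col hm hma h').comm
    · exact (hD.jointlyMatched_of_isEar_apply col hm hma hE hpm h').comm
    · exact ⟨D, n, 1, hD.isModel, hD.isOuterMatching, Or.inl h, Or.inl h'⟩

end IsMinimal

theorem IsModel.exists_isMinimal (m : V → V) (hD : IsModel G D) (hn : IsOuterMatching G D n) :
    ∃ D' n', IsMinimal G m D' n' := by
  classical
  have hex : ∃ k D n, IsModel G D ∧ IsOuterMatching G D n ∧ potential m D n = k :=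
    ⟨_, D, n, hD, hn, rfl⟩
  obtain ⟨D', n', hD', hn', hk⟩ := Nat.find_spec hex
  exact ⟨D', n', hD', hn', fun D'' n'' hD'' hn'' =>
    hk.trans_le (Nat.find_min' hex ⟨D'', n'', hD'', hn'', rfl⟩)⟩

end IsMinimal

theorem IsModel.jointlyMatched [Finite V] [DecidableEq V] {G : SimpleGraph V} {D : K33Data V}
    {n m : V → V} (col : G.Coloring Bool) (hm : m.Involutive) (hma : ∀ v, G.Adj v (m v))
    (hD : IsModel G D) (hn : IsOuterMatching G D n) (a b : V) :
    JointlyMatched G a (m a) b (m b) := by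
  have := Fintype.ofFinite V
  obtain ⟨D', n', hD'⟩ := hD.exists_isMinimal m hn
  exact hD'.jointlyMatched col hm hma a b

/-! ### Covering a four-cycle -/

/-- `IsTwoExtendable G`: any two disjoint edges of `G` lie in a common perfect matching, given as a
fixed-point-free involution. -/
def IsTwoExtendable (G : SimpleGraph V) : Prop :=
  ∀ a b c d : V, G.Adj a b → G.Adj c d → a ≠ c → a ≠ d → b ≠ c → b ≠ d →
    ∃ m : V → V, m.Involutive ∧ (∀ v, G.Adj v (m v)) ∧ m a = b ∧ m c = d

theorem even_card_of_involutive {G : SimpleGraph V} {m : V → V} (hm : m.Involutive)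
    (hma : ∀ v, G.Adj v (m v)) {S : Finset V} (hS : ∀ v ∈ S, m v ∈ S) : Even S.card := by
  have hsum : ∑ _x ∈ S, (1 : ZMod 2) = 0 :=
    Finset.sum_involution (fun v _ => m v) (fun _ _ => by decide) (fun v _ _ => (hma v).ne')
      hS (fun v _ => hm v)
  rwa [Finset.sum_const, nsmul_one, ZMod.natCast_eq_zero_iff_even] at hsum

section IsC4In

variable {G : SimpleGraph V} {a' b' a b : V}

theorem isC4In_iff : IsC4In G a b a' b' ↔
    a ≠ a' ∧ b ≠ b' ∧ G.Adj a b ∧ G.Adj b a' ∧ G.Adj a' b' ∧ G.Adj b' a := by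
  refine ⟨fun ⟨h, h₁, h₂, h₃, h₄⟩ => ⟨?_, ?_, h₁, h₂, h₃, h₄⟩,
    fun ⟨ha, hb, h₁, h₂, h₃, h₄⟩ => ⟨?_, h₁, h₂, h₃, h₄⟩⟩
  · rintro rfl
    simp at h
  · rintro rfl
    simp at h
  · simp [ha, hb, h₁.ne, h₂.ne, h₃.ne, h₄.ne']

theorem IsC4In.rotate (h : IsC4In G a b a' b') : IsC4In G b a' b' a := by
  obtain ⟨ha, hb, h₁, h₂, h₃, h₄⟩ := isC4In_iff.1 h
  exact isC4In_iff.2 ⟨hb, ha.symm, h₂, h₃, h₄, h₁⟩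

theorem IsTwoExtendable.exists_involution (hG : IsTwoExtendable G) (h : IsC4In G a b a' b') :
    ∃ m : V → V, m.Involutive ∧ (∀ v, G.Adj v (m v)) ∧ m a = b ∧ m a' = b' := by
  obtain ⟨ha, hb, h₁, h₂, h₃, h₄⟩ := isC4In_iff.1 h
  exact hG a b a' b' h₁ h₃ ha h₄.ne' h₂.ne hb

end IsC4In

section Covers

variable [DecidableEq V] {G : SimpleGraph V} {D : K33Data V} {n m : V → V}
  {π : Equiv.Perm (Fin 3)} {a b a' b' v w : V}

theorem Matched.mult_right_ne_zero (h : Matched D n π a b) (ha : D.mult a ≠ 0) :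
    D.mult b ≠ 0 := by
  obtain h | ⟨i, j, h⟩ := h
  · exact absurd h.1 ha
  · exact h.isModelEdge.mult_ne_zero.2

theorem Matched.outer_apply_eq (h : Matched D n π a b) (ha : D.mult a = 0) : n a = b := by
  obtain h | ⟨i, j, h⟩ := h
  · exact h.2
  · exact absurd ha h.isModelEdge.mult_ne_zero.1

/-- `CoversFourCycle G a b a' b'`: some bisubdivision of `K33` in `G` contains the vertices of the
four-cycle `a b a' b'`, and some perfect matching of `G` restricts to perfect matchings of both. -/
def CoversFourCycle (G : SimpleGraph V) (a b a' b' : V) : Prop :=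
  ∃ D n π, IsModel G D ∧ IsOuterMatching G D n ∧ (∀ x ∈ C4verts a b a' b', D.mult x ≠ 0) ∧
    ((Matched D n π a b ∧ Matched D n π a' b') ∨ (Matched D n π a b' ∧ Matched D n π a' b))

theorem CoversFourCycle.comm (h : CoversFourCycle G a b a' b') :
    CoversFourCycle G a' b' a b := by
  obtain ⟨D, n, π, hD, hn, hmult, h⟩ := h
  refine ⟨D, n, π, hD, hn, fun x hx => hmult x ?_, h.imp And.symm And.symm⟩
  simp only [C4verts, Set.mem_insert_iff, Set.mem_singleton_iff] at hx ⊢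
  tauto

/-- `CoveredOff G a b v`: some bisubdivision of `K33` in `G` contains `v`, and its complement has a
perfect matching containing the edge `ab`. -/
def CoveredOff (G : SimpleGraph V) (a b v : V) : Prop :=
  ∃ D n, IsModel G D ∧ IsOuterMatching G D n ∧ D.mult v ≠ 0 ∧ D.mult a = 0 ∧ n a = b

namespace CoveredOff

theorem symm (h : CoveredOff G a b v) : CoveredOff G b a v := by
  obtain ⟨D, n, hD, hn, hv, ha, rfl⟩ := h
  obtain ⟨hna, hnn, -⟩ := hn a ha
  exact ⟨D, n, hD, hn, hv, hna, hnn⟩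

theorem ne_left (h : CoveredOff G a b v) : v ≠ a := by
  rintro rfl
  obtain ⟨D, n, -, -, hv, hv', -⟩ := h
  exact hv hv'

theorem ne_right (h : CoveredOff G a b v) : v ≠ b := h.symm.ne_left

theorem exists_isModelEdge [Finite V] (col : G.Coloring Bool) (hm : m.Involutive)
    (hma : ∀ v, G.Adj v (m v)) (hab : m a = b) (h : CoveredOff G a b v) :
    ∃ D n, IsModel G D ∧ IsOuterMatching G D n ∧ D.IsModelEdge v (m v) ∧ D.mult a = 0 ∧
      n a = b := by
  have := Fintype.ofFinite V
  obtain ⟨D, n, hD, hn, hv, ha, hna⟩ := h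
  by_cases hvm : D.IsModelEdge v (m v)
  · exact ⟨D, n, hD, hn, hvm, ha, hna⟩
  obtain ⟨hb, hnb, -⟩ := hn a ha
  rw [hna] at hb hnb
  obtain ⟨E, q, hE⟩ := hD.exists_isEar hn hm hma hv
  obtain ⟨D', n', hA, -⟩ := hE.exists_isAbsorption col hD hn hm hvm
  have haE : a ∉ E := by
    intro haE
    -- The edge `ab` lies in both `m` and `n`, so no ear enters it from outside.
    have hclosed := hE.mem_iff_of_closed (T := fun x => x = a ∨ x = b) (fun x => by
      rw [← hab, ← hm.eq_iff, hm.injective.eq_iff, or_comm]) (fun x hx => by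
      grind [hn x hx]) (x := a) (by simp [haE])
    rcases hclosed.1 (Or.inl rfl) with rfl | rfl
    · exact hv ha
    · exact hv hb
  refine ⟨D', n', hA.isModel, hA.isOuterMatching,
    hA.isModelEdge (hE.paired_apply hm List.mem_cons_self).isConsecutive, ?_, ?_⟩
  · have := hA.mult_le a
    have := List.count_eq_zero.2 haE
    omega
  · rw [hA.apply_eq a ha haE, hna]

variable [Finite V]

theorem of_adj (col : G.Coloring Bool) (hG : IsTwoExtendable G) (h : CoveredOff G a b v)
    (hab : G.Adj a b) (hvw : G.Adj v w) (hwa : w ≠ a) (hwb : w ≠ b) : CoveredOff G a b w := by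
  obtain ⟨m, hm, hma, rfl, hab⟩ := hG v w a b hvw hab h.ne_left h.ne_right hwa hwb
  obtain ⟨D, n, hD, hn, hvm, ha, hna⟩ := h.exists_isModelEdge col hm hma hab
  exact ⟨D, n, hD, hn, hvm.mult_ne_zero.2, ha, hna⟩

theorem of_adj_adj (col : G.Coloring Bool) (hG : IsTwoExtendable G) (hm : m.Involutive)
    (hma : ∀ v, G.Adj v (m v)) (hab : m a = b) (h : CoveredOff G a b v) (hva : G.Adj v a)
    (hbw : G.Adj b w) (hwa : w ≠ a) : CoveredOff G a b w := by
  classical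
  have := Fintype.ofFinite V
  by_contra hw
  -- Otherwise the set of covered vertices has even size because of `m`, and removing `v` from it
  -- leaves a set of even size because of a perfect matching containing `va` and `bw`.
  let S : Finset V := {x | CoveredOff G a b x}
  have mem_S {x : V} : x ∈ S ↔ CoveredOff G a b x := by simp [S]
  have hadj : G.Adj a b := hab ▸ hma a
  have hS : Even S.card := by
    refine even_card_of_involutive hm hma fun x hx => ?_
    rw [mem_S] at hx ⊢
    exact hx.of_adj col hG hadj (hma x) (fun hxa => hx.ne_right (by rw [← hab, ← hxa, hm]))
      fun hxb => hx.ne_left (hm.injective (hxb.trans hab.symm))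
  obtain ⟨m', hm', hma', hva', hbw'⟩ := hG v a b w hva hbw h.ne_right
    (fun hvw => hw (hvw ▸ h)) hadj.ne hwa.symm
  have hSv : Even (S.erase v).card := by
    refine even_card_of_involutive hm' hma' fun x hx => ?_
    rw [Finset.mem_erase, mem_S] at hx ⊢
    refine ⟨fun hxv => hx.2.ne_left (by rw [← hva', ← hxv, hm']),
      hx.2.of_adj col hG hadj (hma' x) (fun hxa => hx.1 (hm'.injective (hxa.trans hva'.symm))) ?_⟩
    rintro rfl
    rw [hm'] at hbw'
    exact hw (hbw' ▸ hx.2)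
  have := Finset.card_erase_add_one (mem_S.2 h)
  grind

theorem of_isC4In (col : G.Coloring Bool) (hG : IsTwoExtendable G) (hconn : G.Preconnected)
    (hC : IsC4In G a b a' b') (h : CoveredOff G a' b' v) : CoveredOff G a' b' a := by
  obtain ⟨m, hm, hma, -, hab'⟩ := hG.exists_involution hC
  obtain ⟨ha, hb, h₁, h₂, h₃, h₄⟩ := isC4In_iff.1 hC
  by_contra hcov
  obtain ⟨p⟩ := hconn v a
  obtain ⟨d, -, hfst, hsnd⟩ := p.exists_boundary_dart {x | CoveredOff G a' b' x} h hcov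
  rw [Set.mem_ofPred_eq] at hfst hsnd
  have hd : d.snd = a' ∨ d.snd = b' := by
    by_contra! hd
    exact hsnd (hfst.of_adj col hG h₃ d.adj hd.1 hd.2)
  rcases hd with hd | hd
  · exact hcov (hfst.of_adj_adj col hG hm hma hab' (hd ▸ d.adj) h₄ ha)
  · have hba : m b' = a' := by rw [← hab', hm]
    have hb := hfst.symm.of_adj_adj col hG hm hma hba (hd ▸ d.adj) h₂.symm hb
    exact hcov (hb.symm.of_adj col hG h₃ h₁.symm ha h₄.ne')

end CoveredOff

theorem IsModel.isEar_pair (hD : IsModel G D) (hn : IsOuterMatching G D n)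
    (hma : ∀ v, G.Adj v (m v)) (ha : D.mult a ≠ 0) (hb : D.mult b ≠ 0) (ha' : D.mult a' = 0)
    (hab' : m a = n a') (ha'b : m a' = b) : IsEar G D n m a [n a', a'] b := by
  obtain ⟨hna', hnn, hadj⟩ := hn a' ha'
  have hE : IsOuterMatched D n [n a', n (n a')] := IsOuterMatched.append_pair (E := [])
    ⟨by simp, by simpa using hD.mult_le_one, by simp⟩ hn hna' (by simp)
  rw [hnn] at hE
  have hadj₁ : G.Adj a (n a') := hab' ▸ hma a
  have hadj₂ : G.Adj a' b := ha'b ▸ hma a'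
  refine ⟨hE, ha, hb, fun x y hxy => ?_, by simp [hadj₁, hadj.symm, hadj₂]⟩
  have hxy : (x = a ∧ y = n a') ∨ (x = a' ∧ y = b) := by simpa using hxy
  obtain ⟨rfl, rfl⟩ | ⟨rfl, rfl⟩ := hxy
  · exact hab'
  · exact ha'b

theorem IsModel.coversFourCycle_of_outer [Finite V] (col : G.Coloring Bool)
    (hG : IsTwoExtendable G) (hC : IsC4In G a b a' b') (hD : IsModel G D)
    (hn : IsOuterMatching G D n) (ha : D.mult a ≠ 0) (hb : D.mult b ≠ 0) (ha' : D.mult a' = 0)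
    (hn' : n a' = b') : CoversFourCycle G a b a' b' := by
  have := Fintype.ofFinite V
  subst hn'
  obtain ⟨m, hm, hma, hba', hb'a⟩ := hG.exists_involution hC.rotate
  have hE := hD.isEar_pair hn hma ha hb ha' (hm.eq_iff.1 hb'a).symm (hm.eq_iff.1 hba').symm
  obtain ⟨D', n', hA, -⟩ := hE.exists_isAbsorption col hD hn hm
    (hE.not_isModelEdge_left (List.cons_ne_nil _ _))
  obtain ⟨i, j, hij⟩ := hA.isInfix
  obtain ⟨t, ht⟩ : ∃ t, ∀ x y, Paired [a, n a', a', b] x y → PathPaired D' i j t x y := by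
    rcases hij with hij | hij
    · exact hA.isModel.exists_pathPaired_of_infix hij hE.even_append_length
    · obtain ⟨t, ht⟩ := hA.isModel.exists_pathPaired_of_infix hij
        (by simpa using hE.even_append_length)
      exact ⟨t, fun x y hxy => ht x y ((paired_reverse hE.even_append_length).2 hxy)⟩
  have hab := ht a (n a') (by simp [Paired])
  have hab' := ht a' b (by simp [Paired])
  obtain ⟨π, rfl⟩ := exists_perm_decide_eq i j t
  refine ⟨D', n', π, hA.isModel, hA.isOuterMatching, ?_, Or.inr ⟨Or.inr ⟨i, j, hab⟩,
    Or.inr ⟨i, j, hab'⟩⟩⟩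
  simp [C4verts, hab.isModelEdge.mult_ne_zero, hab'.isModelEdge.mult_ne_zero]

theorem IsModel.coversFourCycle [Finite V] (col : G.Coloring Bool) (hG : IsTwoExtendable G)
    (hconn : G.Preconnected) (hC : IsC4In G a b a' b') (hD : IsModel G D)
    (hn : IsOuterMatching G D n) : CoversFourCycle G a b a' b' := by
  obtain ⟨m, hm, hma, rfl, rfl⟩ := hG.exists_involution hC
  obtain ⟨D, n, π, hD, hn, hab, hab'⟩ := hD.jointlyMatched col hm hma hn a a'
  by_cases ha : D.mult a = 0 <;> by_cases ha' : D.mult a' = 0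
  · have hcov : CoveredOff G a' (m a') (D.u 0) := ⟨D, n, hD, hn,
      K33Data.mult_ne_zero_of_mem_path (i := 0) (j := 0) List.mem_cons_self, ha',
      hab'.outer_apply_eq ha'⟩
    obtain ⟨D, n, hD, hn, hedge, ha', hna'⟩ :=
      (hcov.of_isC4In col hG hconn hC).exists_isModelEdge col hm hma rfl
    exact hD.coversFourCycle_of_outer col hG hC hn hedge.mult_ne_zero.1 hedge.mult_ne_zero.2 ha'
      hna'
  · exact (hD.coversFourCycle_of_outer col hG hC.rotate.rotate hn ha'
      (hab'.mult_right_ne_zero ha') ha (hab.outer_apply_eq ha)).comm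
  · exact hD.coversFourCycle_of_outer col hG hC hn ha (hab.mult_right_ne_zero ha) ha'
      (hab'.outer_apply_eq ha')
  · refine ⟨D, n, π, hD, hn, ?_, Or.inl ⟨hab, hab'⟩⟩
    simp [C4verts, ha, ha', hab.mult_right_ne_zero ha, hab'.mult_right_ne_zero ha']

end Covers

/-! ### Perfect matchings as involutions -/

section MatchedList

variable [DecidableEq V] {G : SimpleGraph V} {D : K33Data V} {n : V → V}
  {π : Equiv.Perm (Fin 3)} {a b c : V}

theorem sum_count_le_one {ι : Type*} [Fintype ι] {l : ι → List V} (hnd : ∀ i, (l i).Nodup)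
    (hdisj : ∀ i j, i ≠ j → (l i).Disjoint (l j)) (x : V) : ∑ i, (l i).count x ≤ 1 := by
  by_cases hx : ∃ i, x ∈ l i
  · obtain ⟨i, hi⟩ := hx
    rw [Finset.sum_eq_single i (fun j _ hj => List.count_eq_zero.2 (hdisj i j hj.symm hi))
      (fun h => absurd (Finset.mem_univ i) h)]
    exact List.nodup_iff_count_le_one.1 (hnd i) x
  · simp [fun i => List.count_eq_zero.2 (not_exists.1 hx i)]

theorem eq_of_sum_count_le_one {ι : Type*} [Fintype ι] {l : ι → List V} {x : V}
    (h : ∑ i, (l i).count x ≤ 1) {i j : ι} (hi : x ∈ l i) (hj : x ∈ l j) : i = j := by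
  by_contra hij
  have := Finset.add_le_sum (s := Finset.univ) (f := fun i => (l i).count x)
    (fun _ _ => Nat.zero_le _) (Finset.mem_univ i) (Finset.mem_univ j) hij
  have := List.count_pos_iff.2 hi
  have := List.count_pos_iff.2 hj
  omega

/-- The nine lists of even length whose consecutive pairs form the perfect matching of `D` in which
`u i` and `w (π i)` are matched inside the path joining them. -/
def matchedList (D : K33Data V) (π : Equiv.Perm (Fin 3)) (i j : Fin 3) : List V :=
  cond (decide (π i = j)) (D.path i j) (D.inner i j)

theorem sum_count_matchedList (D : K33Data V) (π : Equiv.Perm (Fin 3)) (x : V) :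
    ∑ p : Fin 3 × Fin 3, (matchedList D π p.1 p.2).count x = D.mult x := by
  have hcount (i j) : (matchedList D π i j).count x =
      (D.inner i j).count x + if π i = j then [D.u i].count x + [D.w j].count x else 0 := by
    by_cases h : π i = j
    · simp only [matchedList, h, decide_true, cond_true, if_true, K33Data.count_path]
      omega
    · simp [matchedList, h]
  simp only [Fintype.sum_prod_type, hcount, Finset.sum_add_distrib, Finset.sum_ite_eq,
    Finset.mem_univ, if_true]
  rw [Equiv.sum_comp π fun j => [D.w j].count x, K33Data.mult]
  omega

theorem IsModel.even_length_matchedList (hD : IsModel G D) (π : Equiv.Perm (Fin 3))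
    (i j : Fin 3) : Even (matchedList D π i j).length := by
  unfold matchedList
  cases decide (π i = j)
  · exact hD.even_inner i j
  · exact hD.even_path i j

theorem IsModel.nodup_matchedList (hD : IsModel G D) (π : Equiv.Perm (Fin 3)) (i j : Fin 3) :
    (matchedList D π i j).Nodup := by
  unfold matchedList
  cases decide (π i = j)
  · exact (D.inner_infix_path i j).sublist.nodup (hD.nodup_path i j)
  · exact hD.nodup_path i j

theorem IsModel.exists_matched (hD : IsModel G D) (n : V → V) (π : Equiv.Perm (Fin 3)) (a : V) :
    ∃ b, Matched D n π a b := by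
  by_cases h : D.mult a = 0
  · exact ⟨n a, Or.inl ⟨h, rfl⟩⟩
  · rw [← sum_count_matchedList D π] at h
    obtain ⟨⟨i, j⟩, -, h⟩ := Finset.exists_ne_zero_of_sum_ne_zero h
    obtain ⟨b, hb⟩ := exists_paired (hD.even_length_matchedList π i j)
      (List.count_pos_iff.1 (Nat.pos_of_ne_zero h))
    exact ⟨b, Or.inr ⟨i, j, hb⟩⟩

theorem Matched.unique (hD : IsModel G D) (h : Matched D n π a b) (h' : Matched D n π a c) :
    b = c := by
  rcases h with ⟨h₀, rfl⟩ | ⟨i, j, h⟩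
  · exact h'.outer_apply_eq h₀
  rcases h' with ⟨h₀, -⟩ | ⟨i', j', h'⟩
  · exact absurd h₀ h.isModelEdge.mult_ne_zero.1
  change Paired (matchedList D π i j) a b at h
  change Paired (matchedList D π i' j') a c at h'
  have hsum := (sum_count_matchedList D π a).trans_le (hD.mult_le_one a)
  obtain ⟨rfl, rfl⟩ := Prod.mk.inj
    (eq_of_sum_count_le_one hsum (i := (i, j)) (j := (i', j')) h.mem.1 h'.mem.1)
  rw [← h.partner_eq (hD.nodup_matchedList π i j), h'.partner_eq (hD.nodup_matchedList π i j)]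

theorem IsModel.adj_of_isModelEdge (hD : IsModel G D) (h : D.IsModelEdge a b) : G.Adj a b := by
  obtain ⟨i, j, h | h⟩ := h
  · simpa using (hD.isChain i j).infix h
  · simpa using ((hD.isChain i j).infix h).rel.symm

theorem Matched.adj (hD : IsModel G D) (hn : IsOuterMatching G D n) (h : Matched D n π a b) :
    G.Adj a b := by
  rcases h with ⟨h₀, rfl⟩ | ⟨i, j, h⟩
  · exact (hn a h₀).2.2
  · exact hD.adj_of_isModelEdge h.isModelEdge

theorem IsModel.exists_involution_matched (hD : IsModel G D) (hn : IsOuterMatching G D n)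
    (π : Equiv.Perm (Fin 3)) : ∃ f : V → V, f.Involutive ∧ (∀ v, G.Adj v (f v)) ∧
      ∀ a b, Matched D n π a b ↔ f a = b := by
  choose f hf using hD.exists_matched n π
  have hfM (a b) : Matched D n π a b ↔ f a = b :=
    ⟨fun h => (hf a).unique hD h, fun h => h ▸ hf a⟩
  exact ⟨f, fun v => (hfM _ _).1 ((hf v).symm hn), fun v => (hf v).adj hD hn, hfM⟩

end MatchedList

section MatchingOf

variable {G : SimpleGraph V} {f : V → V}

/-- The perfect matching, as a set of edges, that is given by the involution `f`. -/
def matchingOf (f : V → V) : Set (Sym2 V) := Set.range fun v => s(v, f v)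

theorem eq_of_mem_matchingOf (hf : f.Involutive) {e : Sym2 V} {v : V} (he : e ∈ matchingOf f)
    (hv : v ∈ e) : e = s(v, f v) := by
  obtain ⟨w, rfl⟩ := he
  rcases Sym2.mem_iff.1 hv with rfl | rfl
  · rfl
  · rw [hf, Sym2.eq_swap]

theorem isPM_matchingOf (hf : f.Involutive) (hadj : ∀ v, G.Adj v (f v)) :
    IsPM G (matchingOf f) := by
  refine ⟨?_, fun _ _ _ _ => trivial, fun v _ => ⟨s(v, f v), ⟨⟨v, rfl⟩, Sym2.mem_mk_left _ _⟩,
    fun e he => eq_of_mem_matchingOf hf he.1 he.2⟩⟩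
  rintro e ⟨v, rfl⟩
  exact hadj v

theorem matchesExactly_matchingOf (hf : f.Involutive) {S : Set (Sym2 V)} {A : Set V}
    (h : ∀ v ∈ A, s(v, f v) ∈ S) : MatchesExactly (matchingOf f) S A :=
  fun v hv => ⟨s(v, f v), ⟨⟨v, rfl⟩, h v hv, Sym2.mem_mk_left _ _⟩,
    fun _ he => eq_of_mem_matchingOf hf he.1 he.2.2⟩

theorem IsPM.exists_involution {M : Set (Sym2 V)} (hM : IsPM G M) :
    ∃ f : V → V, f.Involutive ∧ (∀ v, G.Adj v (f v)) ∧ ∀ v w, s(v, w) ∈ M ↔ f v = w := by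
  have hex (v) : ∃ w, s(v, w) ∈ M := by
    obtain ⟨e, ⟨he, hv⟩, -⟩ := hM.2.2 v trivial
    obtain ⟨w, rfl⟩ := Sym2.mem_iff_exists.1 hv
    exact ⟨w, he⟩
  choose f hf using hex
  have huniq (v w) (h : s(v, w) ∈ M) : f v = w :=
    Sym2.congr_right.1 ((hM.2.2 v trivial).unique ⟨hf v, Sym2.mem_mk_left _ _⟩
      ⟨h, Sym2.mem_mk_left _ _⟩)
  exact ⟨f, fun v => huniq _ _ (Sym2.eq_swap ▸ hf v), fun v => hM.1 _ (hf v),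
    fun v w => ⟨huniq v w, fun h => h ▸ hf v⟩⟩

theorem IsBrace.isTwoExtendable (hG : IsBrace G) : IsTwoExtendable G := by
  intro a b c d hab hcd hac had hbc hbd
  obtain ⟨M, hM, hF⟩ := hG.2.2 {s(a, b), s(c, d)} (by
      rintro e (rfl | rfl)
      · exact hab
      · exact hcd) (by
      rintro e (rfl | rfl) e' (rfl | rfl) hne x hx hx' <;>
        simp only [Sym2.mem_iff] at hx hx' <;> grind)
      ((Set.ncard_insert_le _ _).trans (by rw [Set.ncard_singleton]))
  obtain ⟨f, hf, hadj, hfM⟩ := IsPM.exists_involution hM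
  exact ⟨f, hf, hadj, (hfM _ _).1 (hF (Set.mem_insert _ _)),
    (hfM _ _).1 (hF (Set.mem_insert_of_mem _ rfl))⟩

theorem IsBrace.preconnected (hG : IsBrace G) : G.Preconnected :=
  fun x y => hG.2.1.2 x trivial y trivial

theorem IsBipartite.nonempty_coloring (hG : IsBipartite G) : Nonempty (G.Coloring Bool) := by
  classical
  obtain ⟨V₁, V₂, hdisj, hunion, h⟩ := hG
  refine ⟨Coloring.mk (fun v => decide (v ∈ V₁)) fun {x y} hxy heq => ?_⟩
  have hV : x ∈ V₁ ↔ y ∈ V₁ := by simpa using heq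
  rcases hunion.symm ▸ Set.mem_univ x with hx | hx
  · exact Set.disjoint_left.1 hdisj (hV.1 hx) ((h hxy).1 hx)
  · exact Set.disjoint_left.1 hdisj (hV.2 ((h hxy.symm).2 hx)) hx

end MatchingOf

/-! ### Bisubdivisions of `K33` and their data -/

section Branch

/-- The branch vertices of `D`, indexed by the vertices of `K33`. -/
def K33Data.branch (D : K33Data V) : Fin 3 ⊕ Fin 3 → V := Sum.elim D.u D.w

theorem K33_adj_cases {motive : ∀ x y, K33.Adj x y → Prop}
    (inl_inr : ∀ i j (h : K33.Adj (Sum.inl i) (Sum.inr j)), motive _ _ h)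
    (inr_inl : ∀ i j (h : K33.Adj (Sum.inr j) (Sum.inl i)), motive _ _ h) :
    ∀ x y (h : K33.Adj x y), motive x y h
  | .inl i, .inr j, h => inl_inr i j h
  | .inr j, .inl i, h => inr_inl i j h
  | .inl _, .inl _, h => by simp at h
  | .inr _, .inr _, h => by simp at h

theorem K33Data.path_ne_nil (D : K33Data V) (i j : Fin 3) : D.path i j ≠ [] :=
  List.cons_ne_nil _ _

theorem K33Data.head_path (D : K33Data V) (i j : Fin 3) :
    (D.path i j).head (D.path_ne_nil i j) = D.branch (.inl i) := rfl

theorem K33Data.getLast_path (D : K33Data V) (i j : Fin 3) :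
    (D.path i j).getLast (D.path_ne_nil i j) = D.branch (.inr j) := by
  simp [path, branch]

theorem K33Data.mem_path_iff {D : K33Data V} {i j : Fin 3} {x : V} :
    x ∈ D.path i j ↔ x = D.branch (.inl i) ∨ x ∈ D.inner i j ∨ x = D.branch (.inr j) := by
  simp [path, branch]

variable [DecidableEq V] {G : SimpleGraph V} {D : K33Data V}

theorem K33Data.sum_count_parts (D : K33Data V) (x : V) :
    ∑ s, (Sum.elim (fun z => [D.branch z]) (fun p : Fin 3 × Fin 3 => D.inner p.1 p.2) s).count x =
      D.mult x := by
  simp [Fintype.sum_sum_type, Fintype.sum_prod_type, mult, branch]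

theorem K33Data.mult_le_one (hb : D.branch.Injective) (hbi : ∀ i j z, D.branch z ∉ D.inner i j)
    (hnd : ∀ i j, (D.inner i j).Nodup)
    (hdisj : ∀ i j i' j', (i, j) ≠ (i', j') → (D.inner i j).Disjoint (D.inner i' j')) (x : V) :
    D.mult x ≤ 1 := by
  rw [← D.sum_count_parts]
  refine sum_count_le_one ?_ ?_ x
  · rintro (z | ⟨i, j⟩)
    · exact List.nodup_singleton _
    · exact hnd i j
  · rintro (z | ⟨i, j⟩) (z' | ⟨i', j'⟩) hne
    · simpa using fun h => hne (congrArg _ (hb h.symm))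
    · simpa using hbi i' j' z
    · simpa using hbi i j z'
    · exact hdisj i j i' j' fun h => hne (congrArg _ h)

theorem IsModel.branch_injective (hD : IsModel G D) : D.branch.Injective := by
  intro z z' h
  have hsum := (D.sum_count_parts (D.branch z)).trans_le (hD.mult_le_one _)
  exact Sum.inl_injective (eq_of_sum_count_le_one hsum (i := .inl z) (j := .inl z')
    (List.mem_singleton_self _) (by simp [h]))

theorem IsModel.branch_notMem_inner (hD : IsModel G D) (i j : Fin 3) (z : Fin 3 ⊕ Fin 3) :
    D.branch z ∉ D.inner i j := by
  intro h
  have hsum := (D.sum_count_parts (D.branch z)).trans_le (hD.mult_le_one _)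
  exact absurd (eq_of_sum_count_le_one hsum (i := .inl z) (j := .inr (i, j))
    (List.mem_singleton_self _) h) Sum.inl_ne_inr

theorem IsModel.branch_mem_path_iff (hD : IsModel G D) {i j : Fin 3} {z : Fin 3 ⊕ Fin 3} :
    D.branch z ∈ D.path i j ↔ z = .inl i ∨ z = .inr j := by
  rw [K33Data.mem_path_iff, or_iff_right (hD.branch_notMem_inner i j z)]
  exact or_congr hD.branch_injective.eq_iff hD.branch_injective.eq_iff

theorem IsModel.eq_branch_of_mem_path_of_mem_path (hD : IsModel G D) {i j i' j' : Fin 3}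
    (h : (i, j) ≠ (i', j')) {x : V} (hx : x ∈ D.path i j) (hx' : x ∈ D.path i' j') :
    x = D.branch (.inl i) ∨ x = D.branch (.inr j) := by
  rw [K33Data.mem_path_iff] at hx
  exact hx.imp_right (Or.resolve_left · fun hi => hD.not_mem_path h hi hx')

end Branch

section ToBisubdivision

variable [DecidableEq V] {G : SimpleGraph V} {D : K33Data V}

/-- The path from `u i` to `w j`, as a walk. -/
def IsModel.pathWalk (hD : IsModel G D) (i j : Fin 3) :
    G.Walk (D.branch (.inl i)) (D.branch (.inr j)) :=
  (Walk.ofSupport (D.path i j) (D.path_ne_nil i j) (hD.isChain i j)).copy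
    (D.head_path i j) (D.getLast_path i j)

theorem IsModel.support_pathWalk (hD : IsModel G D) (i j : Fin 3) :
    (hD.pathWalk i j).support = D.path i j := by
  rw [pathWalk, Walk.support_copy, Walk.support_ofSupport]

theorem IsModel.odd_length_pathWalk (hD : IsModel G D) (i j : Fin 3) :
    Odd (hD.pathWalk i j).length := by
  have h := hD.even_path i j
  rwa [← hD.support_pathWalk, Walk.length_support, Nat.even_add_one, Nat.not_even_iff_odd] at h

theorem IsModel.isPath_pathWalk (hD : IsModel G D) (i j : Fin 3) : (hD.pathWalk i j).IsPath := by
  rw [Walk.isPath_def, hD.support_pathWalk]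
  exact hD.nodup_path i j

/-- The nine paths of `D`, in both directions. -/
def IsModel.link (hD : IsModel G D) :
    ∀ ⦃x y⦄, K33.Adj x y → G.Walk (D.branch x) (D.branch y)
  | .inl i, .inr j, _ => hD.pathWalk i j
  | .inr j, .inl i, _ => (hD.pathWalk i j).reverse
  | .inl _, .inl _, h => absurd h (by simp)
  | .inr _, .inr _, h => absurd h (by simp)

theorem IsModel.exists_mem_support_link_iff (hD : IsModel G D) : ∀ x y (h : K33.Adj x y),
    ∃ i j, s(x, y) = s(.inl i, .inr j) ∧ ∀ v, v ∈ (hD.link h).support ↔ v ∈ D.path i j := by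
  refine K33_adj_cases (fun i j _ => ⟨i, j, rfl, fun v => ?_⟩)
    (fun i j _ => ⟨i, j, Sym2.eq_swap, fun v => ?_⟩)
  · rw [link, hD.support_pathWalk]
  · rw [link, Walk.support_reverse, List.mem_reverse, hD.support_pathWalk]

theorem IsModel.link_meet (hD : IsModel G D) {x y x' y' : Fin 3 ⊕ Fin 3} (h : K33.Adj x y)
    (h' : K33.Adj x' y') (hne : s(x, y) ≠ s(x', y')) {v : V} (hv : v ∈ (hD.link h).support)
    (hv' : v ∈ (hD.link h').support) : v = D.branch x ∨ v = D.branch y := by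
  obtain ⟨i, j, he, hsupp⟩ := hD.exists_mem_support_link_iff x y h
  obtain ⟨i', j', he', hsupp'⟩ := hD.exists_mem_support_link_iff x' y' h'
  have hij : (i, j) ≠ (i', j') := fun hij => by
    obtain ⟨rfl, rfl⟩ := Prod.mk.inj hij
    exact hne (he.trans he'.symm)
  have := hD.eq_branch_of_mem_path_of_mem_path hij ((hsupp v).1 hv) ((hsupp' v).1 hv')
  rcases Sym2.eq_iff.1 he with ⟨rfl, rfl⟩ | ⟨rfl, rfl⟩
  · exact this
  · exact this.symm

/-- The bisubdivision of `K33` that is described by `D`. -/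
def IsModel.toBisubdivision (hD : IsModel G D) : Bisubdivision K33 G where
  bv := D.branch
  bv_inj := hD.branch_injective
  link := hD.link
  link_isPath := K33_adj_cases (fun i j _ => hD.isPath_pathWalk i j)
    (fun i j _ => (hD.isPath_pathWalk i j).reverse)
  link_odd := K33_adj_cases (fun i j _ => hD.odd_length_pathWalk i j)
    (fun i j _ => (Walk.length_reverse _).symm ▸ hD.odd_length_pathWalk i j)
  link_symm := K33_adj_cases (fun _ _ _ => rfl) (fun _ _ _ => (Walk.reverse_reverse _).symm)
  link_branch x y h z hz := by
    obtain ⟨i, j, he, hsupp⟩ := hD.exists_mem_support_link_iff x y h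
    rw [hsupp, hD.branch_mem_path_iff] at hz
    rwa [← Sym2.mem_iff, he, Sym2.mem_iff]
  link_meet _ _ _ _ h h' hne _ hv hv' :=
    ⟨hD.link_meet h h' hne hv hv', hD.link_meet h' h hne.symm hv' hv⟩

theorem IsModel.mem_verts_toBisubdivision (hD : IsModel G D) {v : V} :
    v ∈ hD.toBisubdivision.verts ↔ D.mult v ≠ 0 := by
  refine ⟨fun ⟨x, y, h, hv⟩ => ?_, fun h => ?_⟩
  · obtain ⟨i, j, -, hsupp⟩ := hD.exists_mem_support_link_iff x y h
    exact K33Data.mult_ne_zero_of_mem_path ((hsupp v).1 hv)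
  · obtain ⟨i, j, h⟩ := K33Data.exists_mem_path_of_mult_ne_zero h
    exact ⟨.inl i, .inr j, by simp, (hD.support_pathWalk i j).symm ▸ h⟩

theorem IsModel.mem_edgeSet_toBisubdivision (hD : IsModel G D) {a b : V}
    (h : D.IsModelEdge a b) : s(a, b) ∈ hD.toBisubdivision.edgeSet := by
  obtain ⟨i, j, h⟩ := h
  refine ⟨.inl i, .inr j, by simp, Walk.infix_support_iff_mem_edges.1 ?_⟩
  exact (hD.support_pathWalk i j).symm ▸ h

theorem IsModel.mConformal_toBisubdivision {n f : V → V} {π : Equiv.Perm (Fin 3)}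
    (hD : IsModel G D) (hf : f.Involutive) (hfM : ∀ v, Matched D n π v (f v)) :
    hD.toBisubdivision.MConformal (matchingOf f) := by
  refine matchesExactly_matchingOf hf fun v hv => ?_
  rcases hfM v with ⟨h₀, -⟩ | ⟨i, j, h⟩
  · exact absurd h₀ (hD.mem_verts_toBisubdivision.1 hv)
  · exact hD.mem_edgeSet_toBisubdivision h.isModelEdge

end ToBisubdivision

section OfBisubdivision

variable {G : SimpleGraph V}

theorem cons_dropLast_tail_support_concat {u v : V} (hne : u ≠ v) :
    ∀ p : G.Walk u v, u :: (p.support.tail.dropLast ++ [v]) = p.support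
  | .nil => absurd rfl hne
  | .cons _ q => by
    rw [Walk.support_cons, List.tail_cons]
    conv_rhs => rw [← List.dropLast_append_getLast q.support_ne_nil, Walk.getLast_support]

namespace Bisubdivision

theorem K33_adj_inl_inr (i j : Fin 3) : K33.Adj (.inl i) (.inr j) := by simp

/-- The data of a bisubdivision of `K33`. -/
def toK33Data (L : Bisubdivision K33 G) : K33Data V where
  u i := L.bv (.inl i)
  w j := L.bv (.inr j)
  inner i j := (L.link (K33_adj_inl_inr i j)).support.tail.dropLast

variable (L : Bisubdivision K33 G)

theorem branch_toK33Data : L.toK33Data.branch = L.bv := by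
  ext (i | j) <;> rfl

theorem path_toK33Data (i j : Fin 3) :
    L.toK33Data.path i j = (L.link (K33_adj_inl_inr i j)).support :=
  cons_dropLast_tail_support_concat (L.bv_inj.ne Sum.inl_ne_inr) _

theorem nodup_path_toK33Data (i j : Fin 3) : (L.toK33Data.path i j).Nodup := by
  rw [path_toK33Data]
  exact (L.link_isPath _).support_nodup

theorem bv_notMem_inner_toK33Data (i j : Fin 3) (z : Fin 3 ⊕ Fin 3) :
    L.bv z ∉ L.toK33Data.inner i j := by
  intro hz
  have hnd := L.nodup_path_toK33Data i j
  have hmem := (L.toK33Data.inner_infix_path i j).subset hz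
  rw [path_toK33Data] at hmem
  rw [K33Data.path, List.nodup_cons, List.nodup_append] at hnd
  rcases L.link_branch _ _ hmem with rfl | rfl
  · exact hnd.1 (List.mem_append_left _ hz)
  · exact hnd.2.2.2 _ hz _ (List.mem_singleton_self _) rfl

theorem disjoint_inner_toK33Data {i j i' j' : Fin 3} (h : (i, j) ≠ (i', j')) :
    (L.toK33Data.inner i j).Disjoint (L.toK33Data.inner i' j') := by
  intro x hx hx'
  have hmem := (L.toK33Data.inner_infix_path i j).subset hx
  have hmem' := (L.toK33Data.inner_infix_path i' j').subset hx'
  rw [path_toK33Data] at hmem hmem'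
  have hne : s(Sum.inl i, Sum.inr j) ≠ (s(Sum.inl i', Sum.inr j') : Sym2 (Fin 3 ⊕ Fin 3)) := by
    simpa using h
  rcases (L.link_meet _ _ hne x hmem hmem').1 with rfl | rfl <;>
    exact L.bv_notMem_inner_toK33Data _ _ _ hx

variable [DecidableEq V]

theorem isModel_toK33Data : IsModel G L.toK33Data where
  isChain i j := by
    rw [path_toK33Data]
    exact Walk.isChain_adj_support _
  even_inner i j := by
    have h := congrArg List.length (L.path_toK33Data i j)
    rw [Walk.length_support] at h
    have := L.link_odd (K33_adj_inl_inr i j)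
    simp only [K33Data.path, List.length_cons, List.length_append, List.length_nil] at h
    grind
  mult_le_one := K33Data.mult_le_one (L.branch_toK33Data ▸ L.bv_inj)
    (L.branch_toK33Data ▸ L.bv_notMem_inner_toK33Data)
    (fun i j => (L.toK33Data.inner_infix_path i j).sublist.nodup (L.nodup_path_toK33Data i j))
    (fun _ _ _ _ => L.disjoint_inner_toK33Data)

theorem mem_verts_iff {v : V} : v ∈ L.verts ↔ L.toK33Data.mult v ≠ 0 := by
  refine ⟨fun ⟨x, y, h, hv⟩ => ?_, fun h => ?_⟩
  · revert hv
    refine K33_adj_cases (motive := fun x y h => v ∈ (L.link h).support → _)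
      (fun i j h hv => ?_) (fun i j h hv => ?_) x y h
    · exact K33Data.mult_ne_zero_of_mem_path (L.path_toK33Data i j ▸ hv)
    · rw [L.link_symm h.symm, Walk.support_reverse, List.mem_reverse] at hv
      exact K33Data.mult_ne_zero_of_mem_path (L.path_toK33Data i j ▸ hv)
  · obtain ⟨i, j, h⟩ := K33Data.exists_mem_path_of_mult_ne_zero h
    exact ⟨.inl i, .inr j, K33_adj_inl_inr i j, L.path_toK33Data i j ▸ h⟩

variable {L}

theorem MConformal.exists_isOuterMatching {M : Set (Sym2 V)} (hL : L.MConformal M)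
    (hM : IsPM G M) : ∃ n, IsOuterMatching G L.toK33Data n := by
  obtain ⟨f, hf, hadj, hfM⟩ := hM.exists_involution
  refine ⟨f, fun v hv => ⟨?_, hf v, hadj v⟩⟩
  by_contra hfv
  obtain ⟨e, ⟨he, ⟨x, y, h, hes⟩, hve⟩, -⟩ := hL (f v) (L.mem_verts_iff.2 hfv)
  obtain ⟨w, rfl⟩ := Sym2.mem_iff_exists.1 hve
  obtain rfl : v = w := by rw [← hf v, (hfM _ _).1 he]
  exact L.mem_verts_iff.1 ⟨x, y, h, Walk.snd_mem_support_of_mem_edges _ hes⟩ hv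

end Bisubdivision

end OfBisubdivision

section FourCycle

variable {G : SimpleGraph V} {c b a' b' : V}

theorem exists_isC4In_of_isCycle {C : G.Walk c c} (hC : C.IsCycle) (hlen : C.length = 4) :
    ∃ b a' b', C.support = [c, b, a', b', c] ∧
      C.edges = [s(c, b), s(b, a'), s(a', b'), s(b', c)] ∧ IsC4In G c b a' b' := by
  match C, hlen with
  | .cons h₁ (.cons h₂ (.cons h₃ (.cons h₄ .nil))), _ =>
    refine ⟨_, _, _, rfl, rfl, ?_, h₁, h₂, h₃, h₄⟩
    rw [← List.nodup_rotate (n := 1)]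
    exact hC.support_nodup

theorem mConformalCycle_matchingOf {f : V → V} (hf : f.Involutive) {C : G.Walk c c}
    (hsupp : C.support = [c, b, a', b', c])
    (hedges : C.edges = [s(c, b), s(b, a'), s(a', b'), s(b', c)])
    (h : (f c = b ∧ f a' = b') ∨ (f c = b' ∧ f a' = b)) :
    MConformalCycle G (matchingOf f) C := by
  refine matchesExactly_matchingOf (A := {x | x ∈ C.support}) hf fun x hx => ?_
  rw [Set.mem_ofPred_eq, hsupp] at hx
  change s(x, f x) ∈ C.edges
  rw [hedges]
  simp only [List.mem_cons, List.not_mem_nil, or_false] at hx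
  rcases h with ⟨rfl, rfl⟩ | ⟨rfl, rfl⟩ <;> rcases hx with rfl | rfl | rfl | rfl | rfl <;>
    simp [hf _, Sym2.eq_swap]

end FourCycle

/-- in a brace containing `K₃,₃`, for every 4-cycle `C` there is a perfect
matching `M` for which `C` is `M`-conformal and an `M`-conformal bisubdivision `L` of
`K₃,₃` with `V(C) ⊆ V(L)`. -/
theorem statement_4 {V : Type*} [Fintype V] [DecidableEq V] (B : SimpleGraph V)
    (hbip : IsBipartite B) (hbrace : IsBrace B) (hK : ContainsK33 B)
    {c : V} (C : B.Walk c c) (hC : C.IsCycle) (hlen : C.length = 4) :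
    ∃ M : Set (Sym2 V), IsPM B M ∧ MConformalCycle B M C ∧
      ∃ L : Bisubdivision K33 B, L.MConformal M ∧ {x | x ∈ C.support} ⊆ L.verts := by
  obtain ⟨col⟩ := hbip.nonempty_coloring
  obtain ⟨L₀, M₀, hM₀, hL₀⟩ := hK
  obtain ⟨n₀, hn₀⟩ := hL₀.exists_isOuterMatching hM₀
  obtain ⟨b, a', b', hsupp, hedges, hC4⟩ := exists_isC4In_of_isCycle hC hlen
  obtain ⟨D, n, π, hD, hn, hmult, hmatched⟩ := L₀.isModel_toK33Data.coversFourCycle col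
    hbrace.isTwoExtendable hbrace.preconnected hC4 hn₀
  obtain ⟨f, hf, hadj, hfM⟩ := hD.exists_involution_matched hn π
  simp only [hfM] at hmatched
  refine ⟨matchingOf f, isPM_matchingOf hf hadj,
    mConformalCycle_matchingOf hf hsupp hedges hmatched, hD.toBisubdivision,
    hD.mConformal_toBisubdivision hf fun v => (hfM v _).2 rfl, fun x hx => ?_⟩
  refine hD.mem_verts_toBisubdivision.2 (hmult x ?_)
  simp only [Set.mem_ofPred_eq, hsupp, List.mem_cons, List.not_mem_nil] at hx
  simp only [C4verts, Set.mem_insert_iff, Set.mem_singleton_iff]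
  tauto

end Paper
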